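/- arXiv:1904.07565 — 4 statements merged into one kernel-verified Lean document; each statement's English description precedes it below -/
import Mathlib

section
/- Let a,b,c,x,y be distinct, let f be a polymatroid on {a,b,c}, and let f_x, f_y be polymatroids on {a,b,c,x} and {a,b,c,y} extending f. Then f_x and f_y have an amalgam if and only if the following inequality holds for every permutation of the roles of a,b,c, for the exchange of (x, f_x) with (y, f_y), and for each of the eight choices in the three braced alternatives: f_x(a,x|c) + f_x(a,b|x) + f_y(a,b|y) + f_y(c,y) + {f_x(b,x|ac) or f_y(b,y|ac)} + {f_x(c,x|ab) or f_y(c,y|ab)} + 2·{f_x(x|abc) or f_y(y|abc)} ≥ f(a,b). -/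
open Finset

set_option linter.all false
set_option linter.unusedSimpArgs false
set_option linter.unusedVariables false

noncomputable section

variable {α : Type*} [DecidableEq α]

/-- `f` is a polymatroid with ground set `M`: it vanishes on `∅` and is
non-negative, monotone and submodular on subsets of `M`. -/
def IsPolymatroid (M : Finset α) (f : Finset α → ℝ) : Prop :=
  f ∅ = 0 ∧
  (∀ A, A ⊆ M → 0 ≤ f A) ∧
  (∀ A B, A ⊆ B → B ⊆ M → f A ≤ f B) ∧
  (∀ A B, A ⊆ M → B ⊆ M → f (A ∪ B) + f (A ∩ B) ≤ f A + f B)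

/-- `pmi f I J K` is the expression `f(I,J|K) = f(I∪K)+f(J∪K)−f(I∪J∪K)−f(K)`. -/
def pmi (f : Finset α → ℝ) (I J K : Finset α) : ℝ :=
  f (I ∪ K) + f (J ∪ K) - f (I ∪ J ∪ K) - f K

/-- `pcd f I K` is the expression `f(I|K) = f(I∪K) − f(K)`. -/
def pcd (f : Finset α → ℝ) (I K : Finset α) : ℝ := f (I ∪ K) - f K

/-- Polymatroids `fX` on `M ∪ X` and `fY` on `M ∪ Y` have an amalgam: a common
polymatroid extension on `M ∪ X ∪ Y`. -/
def HaveAmalgam (M X Y : Finset α) (fX fY : Finset α → ℝ) : Prop :=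
  ∃ g : Finset α → ℝ, IsPolymatroid (M ∪ X ∪ Y) g ∧
    (∀ A, A ⊆ M ∪ X → g A = fX A) ∧ (∀ A, A ⊆ M ∪ Y → g A = fY A)

/-- Polymatroids `fX` on `M ∪ X` and `fY` on `M ∪ Y` are adhesive: they have a
modular common extension, i.e. one with `g(X,Y|M) = 0`. -/
def Adhesive (M X Y : Finset α) (fX fY : Finset α → ℝ) : Prop :=
  ∃ g : Finset α → ℝ, IsPolymatroid (M ∪ X ∪ Y) g ∧
    (∀ A, A ⊆ M ∪ X → g A = fX A) ∧ (∀ A, A ⊆ M ∪ Y → g A = fY A) ∧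
    pmi g X Y M = 0

/-- The left-hand side of inequality (1) of Theorem 3, with the three braced
alternatives selected by booleans `s1, s2, s3`. -/
def amLHS (fx fy : Finset α → ℝ) (x y a b c : α) (s1 s2 s3 : Bool) : ℝ :=
  pmi fx {a} {x} {c} + pmi fx {a} {b} {x} + pmi fy {a} {b} {y} + pmi fy {c} {y} ∅ +
  (if s1 then pmi fx {b} {x} {a, c} else pmi fy {b} {y} {a, c}) +
  (if s2 then pmi fx {c} {x} {a, b} else pmi fy {c} {y} {a, b}) +
  2 * (if s3 then pcd fx {x} {a, b, c} else pcd fy {y} {a, b, c})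

/-! ### From local to global submodularity -/

theorem gain_anti (N : Finset α) (g : Finset α → ℝ)
    (loc : ∀ A ⊆ N, ∀ i ∈ N, ∀ j ∈ N, i ∉ A → j ∉ A → i ≠ j →
      g (insert i (insert j A)) + g A ≤ g (insert i A) + g (insert j A))
    (A D : Finset α) (i : α) (hi : i ∈ N) (hA : A ⊆ N) (hD : D ⊆ N) (hiA : i ∉ A) (hiD : i ∉ D) :
    g (insert i (A ∪ D)) - g (A ∪ D) ≤ g (insert i A) - g A := by
  induction D using Finset.induction_on with
  | empty => simp
  | insert d D hd ih =>
    have hdN : d ∈ N := hD (mem_insert_self _ _)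
    have hDN : D ⊆ N := fun z hz => hD (mem_insert_of_mem hz)
    have hid : i ≠ d := fun h => hiD (h ▸ mem_insert_self _ _)
    have hiD' : i ∉ D := fun h => hiD (mem_insert_of_mem h)
    have ih' := ih hDN hiD'
    by_cases hdA : d ∈ A
    · have : A ∪ insert d D = A ∪ D := by
        ext z; simp only [mem_union, mem_insert]
        constructor
        · rintro (h | rfl | h) <;> simp_all
        · rintro (h | h) <;> simp_all
      rw [this]; exact ih'
    · have h1 := loc (A ∪ D) (union_subset hA hDN) i hi d hdN (by simp [hiA, hiD'])
        (by simp [hdA, hd]) hid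
      have : A ∪ insert d D = insert d (A ∪ D) := by
        ext z; simp only [mem_union, mem_insert]; tauto
      rw [this]; linarith

theorem isPolymatroid_of_local (N : Finset α) (g : Finset α → ℝ) (h0 : g ∅ = 0)
    (top : ∀ i ∈ N, g (N.erase i) ≤ g N)
    (loc : ∀ A ⊆ N, ∀ i ∈ N, ∀ j ∈ N, i ∉ A → j ∉ A → i ≠ j →
      g (insert i (insert j A)) + g A ≤ g (insert i A) + g (insert j A)) :
    IsPolymatroid N g := by
  have step : ∀ A ⊆ N, ∀ i ∈ N, i ∉ A → g A ≤ g (insert i A) := by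
    intro A hA i hi hiA
    have h1 := gain_anti N g loc A (N.erase i) i hi hA (erase_subset _ _) hiA (notMem_erase _ _)
    have h2 : A ∪ N.erase i = N.erase i := by
      apply union_eq_right.2
      intro z hz
      exact mem_erase.2 ⟨fun h => hiA (h ▸ hz), hA hz⟩
    rw [h2, insert_erase hi] at h1
    linarith [top i hi]
  have mono' : ∀ A ⊆ N, ∀ D ⊆ N, g A ≤ g (A ∪ D) := by
    intro A hA D hD
    induction D using Finset.induction_on with
    | empty => simp
    | insert d D hd ih =>
      have hDN : D ⊆ N := fun z hz => hD (mem_insert_of_mem hz)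
      have ih' := ih hDN
      have e : A ∪ insert d D = insert d (A ∪ D) := by
        ext z; simp only [mem_union, mem_insert]; tauto
      rw [e]
      by_cases hdA : d ∈ A ∪ D
      · rw [insert_eq_of_mem hdA]; exact ih'
      · exact ih'.trans (step _ (union_subset hA hDN) d (hD (mem_insert_self _ _)) hdA)
  have mono : ∀ A B, A ⊆ B → B ⊆ N → g A ≤ g B := by
    intro A B hAB hB
    have := mono' A (hAB.trans hB) B hB
    rwa [union_eq_right.2 hAB] at this
  refine ⟨h0, fun A hA => h0 ▸ mono ∅ A (empty_subset _) hA, mono, ?_⟩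
  have key : ∀ A ⊆ N, ∀ C ⊆ A, ∀ D ⊆ N, Disjoint D A →
      g (A ∪ D) - g A ≤ g (C ∪ D) - g C := by
    intro A hA C hC D hD hdis
    induction D using Finset.induction_on with
    | empty => simp
    | insert d D hd ih =>
      have hDN : D ⊆ N := fun z hz => hD (mem_insert_of_mem hz)
      have hdA : d ∉ A := (disjoint_insert_left.1 hdis).1
      have ih' := ih hDN (disjoint_insert_left.1 hdis).2
      have e : ∀ X : Finset α, X ∪ insert d D = insert d (X ∪ D) := by
        intro X; ext z; simp only [mem_union, mem_insert]; tauto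
      have h1 := gain_anti N g loc (C ∪ D) A d (hD (mem_insert_self _ _))
        (union_subset (hC.trans hA) hDN) hA
        (by simp only [mem_union, not_or]; exact ⟨fun h => hdA (hC h), hd⟩) hdA
      have e2 : C ∪ D ∪ A = A ∪ D := by
        ext z; simp only [mem_union]
        constructor
        · rintro ((h | h) | h)
          · exact Or.inl (hC h)
          · exact Or.inr h
          · exact Or.inl h
        · tauto
      rw [e2] at h1
      rw [e, e]; linarith
  intro A B hA hB
  have h1 := key A hA (A ∩ B) inter_subset_left (B \ A) (sdiff_subset.trans hB) sdiff_disjoint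
  have e1 : A ∪ B \ A = A ∪ B := union_sdiff_self_eq_union
  have e2 : A ∩ B ∪ B \ A = B := by
    ext z; simp only [mem_union, mem_inter, mem_sdiff]; tauto
  rw [e1, e2] at h1
  linarith

/-! ### The abstract linear core -/

theorem exists_triple (Aa Ab Ac La Lb Lc Va Vb Vc : ℝ)
    (h1 : La ≤ Va) (h2 : Lb ≤ Vb) (h3 : Lc ≤ Vc)
    (h4 : Aa + La ≤ Vb + Vc) (h5 : Ab + Lb ≤ Va + Vc) (h6 : Ac + Lc ≤ Va + Vb)
    (h7 : Aa + Ab ≤ 2 * Vc) (h8 : Aa + Ac ≤ 2 * Vb) (h9 : Ab + Ac ≤ 2 * Va) :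
    ∃ pa pb pc : ℝ, La ≤ pa ∧ pa ≤ Va ∧ Lb ≤ pb ∧ pb ≤ Vb ∧ Lc ≤ pc ∧ pc ≤ Vc ∧
      pa + Aa ≤ pb + pc ∧ pb + Ab ≤ pa + pc ∧ pc + Ac ≤ pa + pb := by
  obtain ⟨pa, ha1, ha2, ha3⟩ : ∃ pa, pa ≤ Va ∧ pa ≤ Vb + Vc - Aa ∧
      (pa = Va ∨ pa = Vb + Vc - Aa) :=
    ⟨min Va (Vb + Vc - Aa), min_le_left _ _, min_le_right _ _, min_choice _ _⟩
  obtain ⟨pb, hb1, hb2, hb3⟩ : ∃ pb, pb ≤ Vb ∧ pb ≤ pa + Vc - Ab ∧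
      (pb = Vb ∨ pb = pa + Vc - Ab) :=
    ⟨min Vb (pa + Vc - Ab), min_le_left _ _, min_le_right _ _, min_choice _ _⟩
  obtain ⟨pc, hc1, hc2, hc3⟩ : ∃ pc, pc ≤ Vc ∧ pc ≤ pa + pb - Ac ∧
      (pc = Vc ∨ pc = pa + pb - Ac) :=
    ⟨min Vc (pa + pb - Ac), min_le_left _ _, min_le_right _ _, min_choice _ _⟩
  refine ⟨pa, pb, pc, ?_⟩
  rcases ha3 with ha3 | ha3 <;> rcases hb3 with hb3 | hb3 <;> rcases hc3 with hc3 | hc3 <;>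
    refine ⟨?_, ?_, ?_, ?_, ?_, ?_, ?_, ?_, ?_⟩ <;> linarith

/-- The abstract core: `Dij` bounds the increment of `j` over `{i}`. -/
theorem abstract_core (T Ea Eb Ec Dab Dac Dba Dbc Dca Dcb Da Db Dc : ℝ)
    (U0 Ua Ub Uc Uab Uac Ubc UM : ℝ)
    (hEa : 0 ≤ Ea) (hEb : 0 ≤ Eb) (hEc : 0 ≤ Ec)
    (r1 : Eb ≤ Dab) (r2 : Ec ≤ Dac) (r3 : Ea ≤ Dba) (r4 : Ec ≤ Dbc) (r5 : Ea ≤ Dca)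
    (r6 : Eb ≤ Dcb)
    (r1' : Dab ≤ Db) (r2' : Dac ≤ Dc) (r3' : Dba ≤ Da) (r4' : Dbc ≤ Dc) (r5' : Dca ≤ Da)
    (r6' : Dcb ≤ Db)
    (hT : T ≤ UM)
    (u1 : UM ≤ Uab + Ec) (u2 : UM ≤ Uac + Eb) (u3 : UM ≤ Ubc + Ea)
    (w1 : Uab ≤ Ua + Dab) (w2 : Uac ≤ Ua + Dac) (w3 : Uab ≤ Ub + Dba) (w4 : Ubc ≤ Ub + Dbc)
    (w5 : Uac ≤ Uc + Dca) (w6 : Ubc ≤ Uc + Dcb)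
    (z1 : Ua ≤ U0 + Da) (z2 : Ub ≤ U0 + Db) (z3 : Uc ≤ U0 + Dc)
    (b1 : T ≤ Da + Dab + Uc) (b2 : T ≤ Da + Dac + Ub) (b3 : T ≤ Db + Dba + Uc)
    (b4 : T ≤ Db + Dbc + Ua) (b5 : T ≤ Dc + Dca + Ub) (b6 : T ≤ Dc + Dcb + Ua)
    (a1 : 2 * T ≤ Ea + Ec + Da + Dab + Ub + Uc) (a2 : 2 * T ≤ Ea + Eb + Da + Dac + Uc + Ub)
    (a3 : 2 * T ≤ Eb + Ec + Db + Dba + Ua + Uc) (a4 : 2 * T ≤ Eb + Ea + Db + Dbc + Uc + Ua)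
    (a5 : 2 * T ≤ Ec + Eb + Dc + Dca + Ua + Ub) (a6 : 2 * T ≤ Ec + Ea + Dc + Dcb + Ub + Ua) :
    ∃ h0 pa pb pc qa qb qc : ℝ,
      (qa ≤ T ∧ qb ≤ T ∧ qc ≤ T) ∧
      (h0 ≤ U0 ∧ pa ≤ Ua ∧ pb ≤ Ub ∧ pc ≤ Uc ∧ qa ≤ Ubc ∧ qb ≤ Uac ∧ qc ≤ Uab) ∧
      (pa - h0 ≤ Da ∧ pb - h0 ≤ Db ∧ pc - h0 ≤ Dc) ∧
      (qc - pa ≤ Dab ∧ qb - pa ≤ Dac ∧ qc - pb ≤ Dba ∧ qa - pb ≤ Dbc ∧ qb - pc ≤ Dca ∧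
        qa - pc ≤ Dcb) ∧
      (T - qa ≤ Ea ∧ T - qb ≤ Eb ∧ T - qc ≤ Ec) ∧
      (h0 + qc ≤ pa + pb ∧ h0 + qb ≤ pa + pc ∧ h0 + qa ≤ pb + pc) ∧
      (T + pa ≤ qb + qc ∧ T + pb ≤ qa + qc ∧ T + pc ≤ qa + qb) := by
  obtain ⟨qa, hqa⟩ : ∃ q, q = T - Ea := ⟨_, rfl⟩
  obtain ⟨qb, hqb⟩ : ∃ q, q = T - Eb := ⟨_, rfl⟩
  obtain ⟨qc, hqc⟩ : ∃ q, q = T - Ec := ⟨_, rfl⟩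
  obtain ⟨Va, va1, va2, va3⟩ : ∃ V, V ≤ Ua ∧ V ≤ qb + qc - T ∧ (V = Ua ∨ V = qb + qc - T) :=
    ⟨min _ _, min_le_left _ _, min_le_right _ _, min_choice _ _⟩
  obtain ⟨Vb, vb1, vb2, vb3⟩ : ∃ V, V ≤ Ub ∧ V ≤ qa + qc - T ∧ (V = Ub ∨ V = qa + qc - T) :=
    ⟨min _ _, min_le_left _ _, min_le_right _ _, min_choice _ _⟩
  obtain ⟨Vc, vc1, vc2, vc3⟩ : ∃ V, V ≤ Uc ∧ V ≤ qa + qb - T ∧ (V = Uc ∨ V = qa + qb - T) :=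
    ⟨min _ _, min_le_left _ _, min_le_right _ _, min_choice _ _⟩
  obtain ⟨La, la1, la2, la3⟩ : ∃ L, qc - Dab ≤ L ∧ qb - Dac ≤ L ∧ (L = qc - Dab ∨ L = qb - Dac) :=
    ⟨max _ _, le_max_left _ _, le_max_right _ _, max_choice _ _⟩
  obtain ⟨Lb, lb1, lb2, lb3⟩ : ∃ L, qc - Dba ≤ L ∧ qa - Dbc ≤ L ∧ (L = qc - Dba ∨ L = qa - Dbc) :=
    ⟨max _ _, le_max_left _ _, le_max_right _ _, max_choice _ _⟩
  obtain ⟨Lc, lc1, lc2, lc3⟩ : ∃ L, qb - Dca ≤ L ∧ qa - Dcb ≤ L ∧ (L = qb - Dca ∨ L = qa - Dcb) :=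
    ⟨max _ _, le_max_left _ _, le_max_right _ _, max_choice _ _⟩
  have k1 : La ≤ Va := by
    rcases la3 with e | e <;> rcases va3 with e' | e' <;> rw [e, e'] <;> linarith
  have k2 : Lb ≤ Vb := by
    rcases lb3 with e | e <;> rcases vb3 with e' | e' <;> rw [e, e'] <;> linarith
  have k3 : Lc ≤ Vc := by
    rcases lc3 with e | e <;> rcases vc3 with e' | e' <;> rw [e, e'] <;> linarith
  have k4 : (qa - Da) + La ≤ Vb + Vc := by
    rcases la3 with e | e <;> rcases vb3 with e' | e' <;> rcases vc3 with e'' | e'' <;>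
      rw [e, e', e''] <;> linarith
  have k5 : (qb - Db) + Lb ≤ Va + Vc := by
    rcases lb3 with e | e <;> rcases va3 with e' | e' <;> rcases vc3 with e'' | e'' <;>
      rw [e, e', e''] <;> linarith
  have k6 : (qc - Dc) + Lc ≤ Va + Vb := by
    rcases lc3 with e | e <;> rcases va3 with e' | e' <;> rcases vb3 with e'' | e'' <;>
      rw [e, e', e''] <;> linarith
  have k7 : (qa - Da) + (qb - Db) ≤ 2 * Vc := by
    rcases vc3 with e | e <;> rw [e] <;> linarith
  have k8 : (qa - Da) + (qc - Dc) ≤ 2 * Vb := by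
    rcases vb3 with e | e <;> rw [e] <;> linarith
  have k9 : (qb - Db) + (qc - Dc) ≤ 2 * Va := by
    rcases va3 with e | e <;> rw [e] <;> linarith
  obtain ⟨pa, pb, pc, m1, m2, m3, m4, m5, m6, m7, m8, m9⟩ :=
    exists_triple _ _ _ _ _ _ _ _ _ k1 k2 k3 k4 k5 k6 k7 k8 k9
  obtain ⟨h0, n1, n2, n3, n4⟩ : ∃ h, pa - Da ≤ h ∧ pb - Db ≤ h ∧ pc - Dc ≤ h ∧
      (h = pa - Da ∨ h = pb - Db ∨ h = pc - Dc) := by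
    refine ⟨max (pa - Da) (max (pb - Db) (pc - Dc)), le_max_left _ _,
      (le_max_left _ _).trans (le_max_right _ _), (le_max_right _ _).trans (le_max_right _ _), ?_⟩
    rcases max_choice (pa - Da) (max (pb - Db) (pc - Dc)) with e | e
    · exact Or.inl e
    · rw [e]; exact Or.inr (max_choice _ _)
  clear k1 k2 k3 k4 k5 k6 k7 k8 k9 la3 lb3 lc3 va3 vb3 vc3 a1 a2 a3 a4 a5 a6 b1 b2 b3 b4 b5 b6
  refine ⟨h0, pa, pb, pc, qa, qb, qc, ⟨?_, ?_, ?_⟩, ⟨?_, ?_, ?_, ?_, ?_, ?_, ?_⟩, ⟨?_, ?_, ?_⟩,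
    ⟨?_, ?_, ?_, ?_, ?_, ?_⟩, ⟨?_, ?_, ?_⟩, ⟨?_, ?_, ?_⟩, ⟨?_, ?_, ?_⟩⟩
  all_goals first
    | linarith
    | (rcases n4 with e | e | e <;> rw [e] <;> linarith)

/-! ### Bit-indexed polymatroids -/

/-- Bit-indexed polymatroid on four elements. -/
def PB (v : Bool → Bool → Bool → Bool → ℝ) : Prop :=
  (v false false false false) = 0 ∧
  (∀ p q r s p' q' r' s', v p q r s ≤ v (p || p') (q || q') (r || r') (s || s')) ∧
  (∀ p q r s p' q' r' s', v (p || p') (q || q') (r || r') (s || s') +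
    v (p && p') (q && q') (r && r') (s && s') ≤ v p q r s + v p' q' r' s')

/-- The upper bound coming from `g(x,y|K) ≥ 0`. -/
def Ub (v w : Bool → Bool → Bool → Bool → ℝ) (p q r : Bool) : ℝ :=
  v p q r true + w p q r true - v p q r false

/-- The upper bound on an increment. -/
def Dm (v w : Bool → Bool → Bool → Bool → ℝ) (p q r p' q' r' : Bool) : ℝ :=
  min (v p' q' r' true - v p q r true) (w p' q' r' true - w p q r true)

/-- The least possible top value. -/
def Tp (v w : Bool → Bool → Bool → Bool → ℝ) : ℝ := max (v true true true true) (w true true true true)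

/-- The inequality in bit-indexed form. -/
def IneqV (v w : Bool → Bool → Bool → Bool → ℝ) : Prop :=
  ∀ s1 s2 s3 : Bool, (v true false false false) + (v false true false false) - (v true true false false) - (v false false false false) ≤
    ((v true false true false) + (v false false true true) - (v true false true true) - (v false false true false)) + ((v true false false true) + (v false true false true) - (v true true false true) - (v false false false true)) +
    ((w true false false true) + (w false true false true) - (w true true false true) - (w false false false true)) + ((w false false true false) + (w false false false true) - (w false false true true) - (w false false false false)) +
    (if s1 then (v true true true false) + (v true false true true) - (v true true true true) - (v true false true false) else
      (w true true true false) + (w true false true true) - (w true true true true) - (w true false true false)) +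
    (if s2 then (v true true true false) + (v true true false true) - (v true true true true) - (v true true false false) else
      (w true true true false) + (w true true false true) - (w true true true true) - (w true true false false)) +
    2 * (if s3 then (v true true true true) - (v true true true false) else (w true true true true) - (w true true true false))

/-- The elemental inequalities of a four-element polymatroid. -/
theorem PB.el {v : Bool → Bool → Bool → Bool → ℝ} (hv : PB v) :
    (v false true true true) ≤ (v true true true true) ∧
    (v true false true true) ≤ (v true true true true) ∧
    (v true true false true) ≤ (v true true true true) ∧
    (v true true true false) ≤ (v true true true true) ∧
    (v true true false false) + (v false false false false) ≤ (v true false false false) + (v false true false false) ∧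
    (v true true false true) + (v false false false true) ≤ (v true false false true) + (v false true false true) ∧
    (v true true true false) + (v false false true false) ≤ (v true false true false) + (v false true true false) ∧
    (v true true true true) + (v false false true true) ≤ (v true false true true) + (v false true true true) ∧
    (v true false true false) + (v false false false false) ≤ (v true false false false) + (v false false true false) ∧
    (v true false true true) + (v false false false true) ≤ (v true false false true) + (v false false true true) ∧
    (v true true true false) + (v false true false false) ≤ (v true true false false) + (v false true true false) ∧
    (v true true true true) + (v false true false true) ≤ (v true true false true) + (v false true true true) ∧
    (v true false false true) + (v false false false false) ≤ (v true false false false) + (v false false false true) ∧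
    (v true false true true) + (v false false true false) ≤ (v true false true false) + (v false false true true) ∧
    (v true true false true) + (v false true false false) ≤ (v true true false false) + (v false true false true) ∧
    (v true true true true) + (v false true true false) ≤ (v true true true false) + (v false true true true) ∧
    (v false true true false) + (v false false false false) ≤ (v false true false false) + (v false false true false) ∧
    (v false true true true) + (v false false false true) ≤ (v false true false true) + (v false false true true) ∧
    (v true true true false) + (v true false false false) ≤ (v true true false false) + (v true false true false) ∧
    (v true true true true) + (v true false false true) ≤ (v true true false true) + (v true false true true) ∧
    (v false true false true) + (v false false false false) ≤ (v false true false false) + (v false false false true) ∧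
    (v false true true true) + (v false false true false) ≤ (v false true true false) + (v false false true true) ∧
    (v true true false true) + (v true false false false) ≤ (v true true false false) + (v true false false true) ∧
    (v true true true true) + (v true false true false) ≤ (v true true true false) + (v true false true true) ∧
    (v false false true true) + (v false false false false) ≤ (v false false true false) + (v false false false true) ∧
    (v false true true true) + (v false true false false) ≤ (v false true true false) + (v false true false true) ∧
    (v true false true true) + (v true false false false) ≤ (v true false true false) + (v true false false true) ∧
    (v true true true true) + (v true true false false) ≤ (v true true true false) + (v true true false true) :=
  ⟨by simpa using hv.2.1 false true true true true true true true,
   by simpa using hv.2.1 true false true true true true true true,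
   by simpa using hv.2.1 true true false true true true true true,
   by simpa using hv.2.1 true true true false true true true true,
   by simpa using hv.2.2 true false false false false true false false,
   by simpa using hv.2.2 true false false true false true false true,
   by simpa using hv.2.2 true false true false false true true false,
   by simpa using hv.2.2 true false true true false true true true,
   by simpa using hv.2.2 true false false false false false true false,
   by simpa using hv.2.2 true false false true false false true true,
   by simpa using hv.2.2 true true false false false true true false,
   by simpa using hv.2.2 true true false true false true true true,
   by simpa using hv.2.2 true false false false false false false true,
   by simpa using hv.2.2 true false true false false false true true,
   by simpa using hv.2.2 true true false false false true false true,
   by simpa using hv.2.2 true true true false false true true true,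
   by simpa using hv.2.2 false true false false false false true false,
   by simpa using hv.2.2 false true false true false false true true,
   by simpa using hv.2.2 true true false false true false true false,
   by simpa using hv.2.2 true true false true true false true true,
   by simpa using hv.2.2 false true false false false false false true,
   by simpa using hv.2.2 false true true false false false true true,
   by simpa using hv.2.2 true true false false true false false true,
   by simpa using hv.2.2 true true true false true false true true,
   by simpa using hv.2.2 false false true false false false false true,
   by simpa using hv.2.2 false true true false false true false true,
   by simpa using hv.2.2 true false true false true false false true,
   by simpa using hv.2.2 true true true false true true false true⟩

theorem easy (v w : Bool → Bool → Bool → Bool → ℝ) (hv : PB v) (hw : PB w)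
    (hag : ∀ p q r, v p q r false = w p q r false) :
    0 ≤ Dm v w true true false true true true ∧
    Dm v w false true true true true true ≤ Dm v w false false true true false true ∧
    Dm v w false false true true false true ≤ Dm v w false false false true false false ∧
    Tp v w ≤ Ub v w true true true ∧
    Ub v w true true true ≤ Ub v w true true false + Dm v w true true false true true true ∧
    Ub v w true true true ≤ Ub v w true false true + Dm v w true false true true true true ∧
    Ub v w true false true ≤ Ub v w false false true + Dm v w false false true true false true ∧
    Ub v w false false true ≤ Ub v w false false false + Dm v w false false false false false true ∧
    Tp v w ≤ Dm v w false false false false false true + Dm v w false false true true false true +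
      Ub v w false true false := by
  obtain ⟨a0, a1, a2, a3, a4, a5, a6, a7, a8, a9, a10, a11, a12, a13, a14, a15, a16, a17, a18, a19, a20, a21, a22, a23, a24, a25, a26, a27⟩ := hv.el
  obtain ⟨b0, b1, b2, b3, b4, b5, b6, b7, b8, b9, b10, b11, b12, b13, b14, b15, b16, b17, b18, b19, b20, b21, b22, b23, b24, b25, b26, b27⟩ := hw.el
  have g1 := hag true false false
  have g2 := hag false true false
  have g3 := hag false false true
  have g4 := hag true true false
  have g5 := hag true false true
  have g6 := hag false true true
  have g7 := hag true true true
  have g0 := hag false false false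
  refine ⟨?_, ?_, ?_, ?_, ?_, ?_, ?_, ?_, ?_⟩
  · unfold Dm; apply le_min <;> linarith
  · unfold Dm; apply min_le_min <;> linarith
  · unfold Dm; apply min_le_min <;> linarith
  · unfold Tp Ub; apply max_le <;> linarith
  · unfold Ub Dm; rw [← sub_le_iff_le_add']; apply le_min <;> linarith
  · unfold Ub Dm; rw [← sub_le_iff_le_add']; apply le_min <;> linarith
  · unfold Ub Dm; rw [← sub_le_iff_le_add']; apply le_min <;> linarith
  · unfold Ub Dm; rw [← sub_le_iff_le_add']; apply le_min <;> linarith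
  · unfold Tp Ub Dm
    rcases min_choice ((v false false true true) - (v false false false true)) ((w false false true true) - (w false false false true)) with e | e <;>
    rcases min_choice ((v true false true true) - (v false false true true)) ((w true false true true) - (w false false true true)) with e' | e' <;>
    rw [e, e'] <;> clear e e' <;> apply max_le <;> linarith

/-- The facts for one assignment of roles: `j = a`, `k = b`, `i = c`. -/
theorem role (v w : Bool → Bool → Bool → Bool → ℝ) (hv : PB v) (hw : PB w)
    (hag : ∀ p q r, v p q r false = w p q r false) (h1 : IneqV v w) (h2 : IneqV w v) :
    2 * Tp v w ≤ Dm v w true true false true true true + Dm v w true false true true true true +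
      Dm v w false false false false false true + Dm v w false false true true false true +
      Ub v w true false false + Ub v w false true false := by
  obtain ⟨-, -, -, ez1, ez2, ez3, -, -, -⟩ := easy v w hv hw hag
  have v1 : (v true true false true) + (v false false false true) ≤ (v true false false true) + (v false true false true) := by
    simpa using hv.2.2 true false false true false true false true
  have v2 : (v true true false true) + (v false true false false) ≤ (v true true false false) + (v false true false true) := by
    simpa using hv.2.2 true true false false false true false true
  have v3 : (v true false true true) + (v true false false false) ≤ (v true false true false) + (v true false false true) := by
    simpa using hv.2.2 true false true false true false false true
  have w1 : (w true true false true) + (w false false false true) ≤ (w true false false true) + (w false true false true) := by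
    simpa using hw.2.2 true false false true false true false true
  have w2 : (w true true false true) + (w false true false false) ≤ (w true true false false) + (w false true false true) := by
    simpa using hw.2.2 true true false false false true false true
  have w3 : (w true false true true) + (w true false false false) ≤ (w true false true false) + (w true false false true) := by
    simpa using hw.2.2 true false true false true false false true
  have g1 := hag true false false
  have g2 := hag false true false
  have g3 := hag false false true
  have g4 := hag true true false
  have g5 := hag true false true
  have g6 := hag false true true
  have g7 := hag true true true
  have g0 := hag false false false
  obtain ⟨T, hT, T'⟩ : ∃ t, t = Tp v w ∧ (t = (v true true true true) ∨ t = (w true true true true)) :=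
    ⟨_, rfl, max_choice _ _⟩
  obtain ⟨E1, hE1, E1'⟩ : ∃ t, t = Dm v w true true false true true true ∧
    (t = (v true true true true) - (v true true false true) ∨ t = (w true true true true) - (w true true false true)) := ⟨_, rfl, min_choice _ _⟩
  obtain ⟨E2, hE2, E2'⟩ : ∃ t, t = Dm v w true false true true true true ∧
    (t = (v true true true true) - (v true false true true) ∨ t = (w true true true true) - (w true false true true)) := ⟨_, rfl, min_choice _ _⟩
  obtain ⟨D1, hD1, D1'⟩ : ∃ t, t = Dm v w false false false false false true ∧
    (t = (v false false true true) - (v false false false true) ∨ t = (w false false true true) - (w false false false true)) := ⟨_, rfl, min_choice _ _⟩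
  obtain ⟨D2, hD2, D2'⟩ : ∃ t, t = Dm v w false false true true false true ∧
    (t = (v true false true true) - (v false false true true) ∨ t = (w true false true true) - (w false false true true)) := ⟨_, rfl, min_choice _ _⟩
  rw [← hT, ← hE1, ← hE2, ← hD1, ← hD2]
  rw [← hT] at ez1
  rw [← hE1] at ez2
  rw [← hE2] at ez3
  clear hT hE1 hE2 hD1 hD2
  unfold Ub at *
  rcases D1' with rfl | rfl <;> rcases D2' with rfl | rfl
  · linarith
  · rcases T' with rfl | rfl <;> rcases E1' with rfl | rfl <;> rcases E2' with rfl | rfl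
    · have := h1 false false false; simp only [if_true, if_false, Bool.false_eq_true] at this; linarith
    · have := h1 true false false; simp only [if_true, if_false, Bool.false_eq_true] at this; linarith
    · have := h1 false true false; simp only [if_true, if_false, Bool.false_eq_true] at this; linarith
    · have := h1 true true false; simp only [if_true, if_false, Bool.false_eq_true] at this; linarith
    · have := h1 false false true; simp only [if_true, if_false, Bool.false_eq_true] at this; linarith
    · have := h1 true false true; simp only [if_true, if_false, Bool.false_eq_true] at this; linarith
    · have := h1 false true true; simp only [if_true, if_false, Bool.false_eq_true] at this; linarith
    · have := h1 true true true; simp only [if_true, if_false, Bool.false_eq_true] at this; linarith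
  · rcases T' with rfl | rfl <;> rcases E1' with rfl | rfl <;> rcases E2' with rfl | rfl
    · have := h2 true true true; simp only [if_true, if_false, Bool.false_eq_true] at this; linarith
    · have := h2 false true true; simp only [if_true, if_false, Bool.false_eq_true] at this; linarith
    · have := h2 true false true; simp only [if_true, if_false, Bool.false_eq_true] at this; linarith
    · have := h2 false false true; simp only [if_true, if_false, Bool.false_eq_true] at this; linarith
    · have := h2 true true false; simp only [if_true, if_false, Bool.false_eq_true] at this; linarith
    · have := h2 false true false; simp only [if_true, if_false, Bool.false_eq_true] at this; linarith
    · have := h2 true false false; simp only [if_true, if_false, Bool.false_eq_true] at this; linarith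
    · have := h2 false false false; simp only [if_true, if_false, Bool.false_eq_true] at this; linarith
  · linarith

theorem PB.perm1 {v : Bool → Bool → Bool → Bool → ℝ} (h : PB v) : PB (fun p q r s => v q p r s) :=
  ⟨h.1, fun p q r s p' q' r' s' => h.2.1 q p r s q' p' r' s',
    fun p q r s p' q' r' s' => h.2.2 q p r s q' p' r' s'⟩

theorem PB.perm2 {v : Bool → Bool → Bool → Bool → ℝ} (h : PB v) : PB (fun p q r s => v p r q s) :=
  ⟨h.1, fun p q r s p' q' r' s' => h.2.1 p r q s p' r' q' s',
    fun p q r s p' q' r' s' => h.2.2 p r q s p' r' q' s'⟩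

/-- The bit-indexed values of the common extension on sets containing both `x` and `y`. -/
structure HProps (v w : Bool → Bool → Bool → Bool → ℝ) (h : Bool → Bool → Bool → ℝ) : Prop where
  up : ∀ p q r, h p q r + v p q r false ≤ v p q r true + w p q r true
  av : ∀ q r, h true q r + v false q r true ≤ v true q r true + h false q r
  bv : ∀ p r, h p true r + v p false r true ≤ v p true r true + h p false r
  cv : ∀ p q, h p q true + v p q false true ≤ v p q true true + h p q false
  aw : ∀ q r, h true q r + w false q r true ≤ w true q r true + h false q r
  bw : ∀ p r, h p true r + w p false r true ≤ w p true r true + h p false r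
  cw : ∀ p q, h p q true + w p q false true ≤ w p q true true + h p q false
  ab : ∀ r, h true true r + h false false r ≤ h true false r + h false true r
  ac : ∀ q, h true q true + h false q false ≤ h true q false + h false q true
  bc : ∀ p, h p true true + h p false false ≤ h p true false + h p false true
  tv : (v true true true true) ≤ (h true true true)
  tw : (w true true true true) ≤ (h true true true)
  ta : (h false true true) ≤ (h true true true)
  tb : (h true false true) ≤ (h true true true)
  tc : (h true true false) ≤ (h true true true)

theorem le_of_sub_le_Dm {v w : Bool → Bool → Bool → Bool → ℝ} {p q r p' q' r' : Bool} {m n : ℝ}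
    (h : m - n ≤ Dm v w p q r p' q' r') :
    m + v p q r true ≤ v p' q' r' true + n ∧ m + w p q r true ≤ w p' q' r' true + n := by
  have h1 := h.trans (min_le_left _ _)
  have h2 := h.trans (min_le_right _ _)
  constructor <;> linarith

theorem bool_core (v w : Bool → Bool → Bool → Bool → ℝ) (hv : PB v) (hw : PB w)
    (hag : ∀ p q r, v p q r false = w p q r false)
    (iab : IneqV (fun p q r s => v r p q s) (fun p q r s => w r p q s))
    (kab : IneqV (fun p q r s => w r p q s) (fun p q r s => v r p q s))
    (iac : IneqV (fun p q r s => v r q p s) (fun p q r s => w r q p s))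
    (kac : IneqV (fun p q r s => w r q p s) (fun p q r s => v r q p s))
    (iba : IneqV (fun p q r s => v p r q s) (fun p q r s => w p r q s))
    (kba : IneqV (fun p q r s => w p r q s) (fun p q r s => v p r q s))
    (ibc : IneqV (fun p q r s => v q r p s) (fun p q r s => w q r p s))
    (kbc : IneqV (fun p q r s => w q r p s) (fun p q r s => v q r p s))
    (ica : IneqV (fun p q r s => v p q r s) (fun p q r s => w p q r s))
    (kca : IneqV (fun p q r s => w p q r s) (fun p q r s => v p q r s))
    (icb : IneqV (fun p q r s => v q p r s) (fun p q r s => w q p r s))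
    (kcb : IneqV (fun p q r s => w q p r s) (fun p q r s => v q p r s)) :
    ∃ h : Bool → Bool → Bool → ℝ, HProps v w h := by
  have eab := easy (fun p q r s => v r p q s) (fun p q r s => w r p q s) hv.perm1.perm2 hw.perm1.perm2
    (fun p q r => hag r p q)
  have oab := role (fun p q r s => v r p q s) (fun p q r s => w r p q s) hv.perm1.perm2 hw.perm1.perm2
    (fun p q r => hag r p q) iab kab
  have eac := easy (fun p q r s => v r q p s) (fun p q r s => w r q p s) hv.perm1.perm2.perm1 hw.perm1.perm2.perm1
    (fun p q r => hag r q p)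
  have oac := role (fun p q r s => v r q p s) (fun p q r s => w r q p s) hv.perm1.perm2.perm1 hw.perm1.perm2.perm1
    (fun p q r => hag r q p) iac kac
  have eba := easy (fun p q r s => v p r q s) (fun p q r s => w p r q s) hv.perm2 hw.perm2
    (fun p q r => hag p r q)
  have oba := role (fun p q r s => v p r q s) (fun p q r s => w p r q s) hv.perm2 hw.perm2
    (fun p q r => hag p r q) iba kba
  have ebc := easy (fun p q r s => v q r p s) (fun p q r s => w q r p s) hv.perm2.perm1 hw.perm2.perm1
    (fun p q r => hag q r p)
  have obc := role (fun p q r s => v q r p s) (fun p q r s => w q r p s) hv.perm2.perm1 hw.perm2.perm1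
    (fun p q r => hag q r p) ibc kbc
  have eca := easy (fun p q r s => v p q r s) (fun p q r s => w p q r s) hv hw
    (fun p q r => hag p q r)
  have oca := role (fun p q r s => v p q r s) (fun p q r s => w p q r s) hv hw
    (fun p q r => hag p q r) ica kca
  have ecb := easy (fun p q r s => v q p r s) (fun p q r s => w q p r s) hv.perm1 hw.perm1
    (fun p q r => hag q p r)
  have ocb := role (fun p q r s => v q p r s) (fun p q r s => w q p r s) hv.perm1 hw.perm1
    (fun p q r => hag q p r) icb kcb
  obtain ⟨h0, pa, pb, pc, qa, qb, qc, ⟨t1, t2, t3⟩, ⟨u1, u2, u3, u4, u5, u6, u7⟩, ⟨d1, d2, d3⟩,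
      ⟨d4, d5, d6, d7, d8, d9⟩, ⟨d10, d11, d12⟩, ⟨s1, s2, s3⟩, ⟨s4, s5, s6⟩⟩ := abstract_core
      (Tp v w) (Dm v w false true true true true true) (Dm v w true false true true true true)
      (Dm v w true true false true true true) (Dm v w true false false true true false)
      (Dm v w true false false true false true) (Dm v w false true false true true false)
      (Dm v w false true false false true true) (Dm v w false false true true false true)
      (Dm v w false false true false true true) (Dm v w false false false true false false)
      (Dm v w false false false false true false) (Dm v w false false false false false true)
      (Ub v w false false false) (Ub v w true false false) (Ub v w false true false)
      (Ub v w false false true) (Ub v w true true false) (Ub v w true false true)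
      (Ub v w false true true) (Ub v w true true true)
      eab.1 eba.1 eca.1 eab.2.1 eac.2.1 eba.2.1 ebc.2.1 eca.2.1 ecb.2.1 eab.2.2.1 eac.2.2.1
      eba.2.2.1 ebc.2.2.1 eca.2.2.1 ecb.2.2.1 eab.2.2.2.1 eca.2.2.2.2.1 eba.2.2.2.2.1
      eab.2.2.2.2.1 eab.2.2.2.2.2.2.1 eac.2.2.2.2.2.2.1 eba.2.2.2.2.2.2.1 ebc.2.2.2.2.2.2.1
      eca.2.2.2.2.2.2.1 ecb.2.2.2.2.2.2.1 eab.2.2.2.2.2.2.2.1 eba.2.2.2.2.2.2.2.1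
      eca.2.2.2.2.2.2.2.1 eab.2.2.2.2.2.2.2.2 eac.2.2.2.2.2.2.2.2 eba.2.2.2.2.2.2.2.2
      ebc.2.2.2.2.2.2.2.2 eca.2.2.2.2.2.2.2.2 ecb.2.2.2.2.2.2.2.2 oab oac oba obc oca ocb
  replace d1 := le_of_sub_le_Dm d1
  replace d2 := le_of_sub_le_Dm d2
  replace d3 := le_of_sub_le_Dm d3
  replace d4 := le_of_sub_le_Dm d4
  replace d5 := le_of_sub_le_Dm d5
  replace d6 := le_of_sub_le_Dm d6
  replace d7 := le_of_sub_le_Dm d7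
  replace d8 := le_of_sub_le_Dm d8
  replace d9 := le_of_sub_le_Dm d9
  replace d10 := le_of_sub_le_Dm d10
  replace d11 := le_of_sub_le_Dm d11
  replace d12 := le_of_sub_le_Dm d12
  have u0 := eab.2.2.2.1
  have tv : (v true true true true) ≤ Tp v w := le_max_left _ _
  have tw : (w true true true true) ≤ Tp v w := le_max_right _ _
  have u8 : Tp v w ≤ Ub v w true true true := u0
  unfold Ub at u1 u2 u3 u4 u5 u6 u7 u8
  generalize Tp v w = T at *
  refine ⟨fun p q r => bif p then (bif q then (bif r then T else qc) else (bif r then qb else pa))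
    else (bif q then (bif r then qa else pb) else (bif r then pc else h0)), ?_⟩
  constructor
  · rintro (_ | _) (_ | _) (_ | _) <;> simp only [cond_true, cond_false] <;> linarith
  · rintro (_ | _) (_ | _)
    exacts [d1.1, d8.1, d6.1, d10.1]
  · rintro (_ | _) (_ | _)
    exacts [d2.1, d9.1, d4.1, d11.1]
  · rintro (_ | _) (_ | _)
    exacts [d3.1, d7.1, d5.1, d12.1]
  · rintro (_ | _) (_ | _)
    exacts [d1.2, d8.2, d6.2, d10.2]
  · rintro (_ | _) (_ | _)
    exacts [d2.2, d9.2, d4.2, d11.2]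
  · rintro (_ | _) (_ | _)
    exacts [d3.2, d7.2, d5.2, d12.2]
  · rintro (_ | _) <;> simp only [cond_true, cond_false] <;> linarith
  · rintro (_ | _) <;> simp only [cond_true, cond_false] <;> linarith
  · rintro (_ | _) <;> simp only [cond_true, cond_false] <;> linarith
  · exact tv
  · exact tw
  · exact t1
  · exact t2
  · exact t3

/-! ### Sets from bits -/

/-- The subset of `{a,b,c,z}` with given membership bits. -/
def S4 (a b c z : α) (p q r s : Bool) : Finset α :=
  (bif p then {a} else ∅) ∪ (bif q then {b} else ∅) ∪ (bif r then {c} else ∅) ∪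
    (bif s then {z} else ∅)

/-- The subset of `{a,b,c,x,y}` with given membership bits. -/
def S5 (a b c x y : α) (p q r s t : Bool) : Finset α :=
  S4 a b c x p q r s ∪ (bif t then {y} else ∅)

theorem mem_bif (z u : α) (p : Bool) : u ∈ (bif p then ({z} : Finset α) else ∅) ↔
    (p = true ∧ u = z) := by
  cases p <;> simp

theorem mem_S5 (a b c x y : α) (p q r s t : Bool) (u : α) : u ∈ S5 a b c x y p q r s t ↔
    (p = true ∧ u = a) ∨ (q = true ∧ u = b) ∨ (r = true ∧ u = c) ∨ (s = true ∧ u = x) ∨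
      (t = true ∧ u = y) := by
  simp only [S5, S4, mem_union, mem_bif, or_assoc]

theorem mem_S4 (a b c x : α) (p q r s : Bool) (u : α) : u ∈ S4 a b c x p q r s ↔
    (p = true ∧ u = a) ∨ (q = true ∧ u = b) ∨ (r = true ∧ u = c) ∨ (s = true ∧ u = x) := by
  simp only [S4, mem_union, mem_bif, or_assoc]

theorem S5_union (a b c x y : α) (p q r s t p' q' r' s' t' : Bool) :
    S5 a b c x y p q r s t ∪ S5 a b c x y p' q' r' s' t' =
      S5 a b c x y (p || p') (q || q') (r || r') (s || s') (t || t') := by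
  ext u
  simp only [mem_union, mem_S5, Bool.or_eq_true, or_and_right]
  grind

theorem S5_inter (a b c x y : α) (hnd : ([a, b, c, x, y] : List α).Nodup)
    (p q r s t p' q' r' s' t' : Bool) :
    S5 a b c x y p q r s t ∩ S5 a b c x y p' q' r' s' t' =
      S5 a b c x y (p && p') (q && q') (r && r') (s && s') (t && t') := by
  simp only [List.nodup_cons, List.mem_cons, List.not_mem_nil, or_false, not_or] at hnd
  ext u
  simp only [mem_inter, mem_S5, Bool.and_eq_true]
  by_cases ha : u = a
  · subst ha; simp [hnd]
  by_cases hb : u = b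
  · subst hb; simp [hnd, ha]
  by_cases hc : u = c
  · subst hc; simp [hnd, ha, hb]
  by_cases hx : u = x
  · subst hx; simp [hnd, ha, hb, hc]
  simp [ha, hb, hc, hx]
  tauto

theorem S4_union (a b c x : α) (p q r s p' q' r' s' : Bool) :
    S4 a b c x p q r s ∪ S4 a b c x p' q' r' s' =
      S4 a b c x (p || p') (q || q') (r || r') (s || s') := by
  ext u
  simp only [mem_union, mem_S4, Bool.or_eq_true, or_and_right]
  grind

theorem S4_inter (a b c x : α) (hnd : ([a, b, c, x] : List α).Nodup)
    (p q r s p' q' r' s' : Bool) :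
    S4 a b c x p q r s ∩ S4 a b c x p' q' r' s' =
      S4 a b c x (p && p') (q && q') (r && r') (s && s') := by
  simp only [List.nodup_cons, List.mem_cons, List.not_mem_nil, or_false, not_or] at hnd
  ext u
  simp only [mem_inter, mem_S4, Bool.and_eq_true]
  by_cases ha : u = a
  · subst ha; simp [hnd]
  by_cases hb : u = b
  · subst hb; simp [hnd, ha]
  by_cases hc : u = c
  · subst hc; simp [hnd, ha, hb]
  simp [ha, hb, hc]
  tauto

/-- Bit-indexed version of a set function. -/
def Vv (f : Finset α → ℝ) (a b c z : α) (p q r s : Bool) : ℝ := f (S4 a b c z p q r s)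

theorem S4_subset (a b c z : α) (p q r s : Bool) : S4 a b c z p q r s ⊆ {a, b, c, z} := by
  intro u hu
  rw [mem_S4] at hu
  simp only [mem_insert, mem_singleton]
  tauto

theorem PB_Vv (f : Finset α → ℝ) (a b c z : α) (hnd : ([a, b, c, z] : List α).Nodup)
    (hf : IsPolymatroid {a, b, c, z} f) : PB (Vv f a b c z) := by
  obtain ⟨h0, -, hm, hs⟩ := hf
  refine ⟨by simpa [Vv, S4] using h0, ?_, ?_⟩
  · intro p q r s p' q' r' s'
    unfold Vv
    rw [← S4_union]
    exact hm _ _ subset_union_left (union_subset (S4_subset _ _ _ _ _ _ _ _)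
      (S4_subset _ _ _ _ _ _ _ _))
  · intro p q r s p' q' r' s'
    unfold Vv
    rw [← S4_union, ← S4_inter _ _ _ _ hnd]
    exact hs _ _ (S4_subset _ _ _ _ _ _ _ _) (S4_subset _ _ _ _ _ _ _ _)

theorem ineq_iff (fx fy : Finset α → ℝ) (a b c x y : α) :
    (∀ s1 s2 s3 : Bool, pmi fx {a} {b} ∅ ≤ amLHS fx fy x y a b c s1 s2 s3) ↔
      IneqV (Vv fx a b c x) (Vv fy a b c y) := by
  have k1 : ∀ u z : α, ({z, u} : Finset α) = {u, z} := fun u z => by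
    ext; simp only [mem_insert, mem_singleton]; tauto
  have k2 : ∀ z : α, ({a, z, c} : Finset α) = {a, c, z} := fun z => by
    ext; simp only [mem_insert, mem_singleton]; tauto
  have k3 : ∀ z : α, ({z, a, c} : Finset α) = {a, c, z} := fun z => by
    ext; simp only [mem_insert, mem_singleton]; tauto
  have k4 : ∀ z : α, ({z, a, b} : Finset α) = {a, b, z} := fun z => by
    ext; simp only [mem_insert, mem_singleton]; tauto
  have k5 : ∀ z : α, ({b, a, c, z} : Finset α) = {a, b, c, z} := fun z => by
    ext; simp only [mem_insert, mem_singleton]; tauto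
  have k6 : ∀ z : α, ({c, a, b, z} : Finset α) = {a, b, c, z} := fun z => by
    ext; simp only [mem_insert, mem_singleton]; tauto
  have k7 : ∀ z : α, ({z, a, b, c} : Finset α) = {a, b, c, z} := fun z => by
    ext; simp only [mem_insert, mem_singleton]; tauto
  have k8 : ({b, a, c} : Finset α) = {a, b, c} := by
    ext; simp only [mem_insert, mem_singleton]; tauto
  unfold IneqV amLHS pmi pcd Vv S4
  simp only [cond_true, cond_false, singleton_union, union_empty, empty_union, insert_union]
  simp only [k1 c x, k1 c y, k2 x, k2 y, k5, k6, k7, k8, k4 c, k3 x, k3 y, k4 x, k4 y]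

/-! ### Necessity -/

theorem necessity (a b c x y : α) (hnd : ([a, b, c, x, y] : List α).Nodup)
    (fx fy : Finset α → ℝ) (h : HaveAmalgam {a, b, c} {x} {y} fx fy) :
    IneqV (Vv fx a b c x) (Vv fy a b c y) := by
  obtain ⟨g, ⟨-, -, hm, hs⟩, hx, hy⟩ := h
  have sub : ∀ p q r s t, S5 a b c x y p q r s t ⊆ {a, b, c} ∪ {x} ∪ {y} := by
    intro p q r s t u hu
    rw [mem_S5] at hu
    simp only [mem_union, mem_insert, mem_singleton]
    tauto
  obtain ⟨G, hG⟩ : ∃ G : Bool → Bool → Bool → Bool → Bool → ℝ,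
      ∀ p q r s t, g (S5 a b c x y p q r s t) = G p q r s t := ⟨_, fun _ _ _ _ _ => rfl⟩
  have GS : ∀ p q r s t p' q' r' s' t',
      G (p || p') (q || q') (r || r') (s || s') (t || t') +
      G (p && p') (q && q') (r && r') (s && s') (t && t') ≤ G p q r s t + G p' q' r' s' t' := by
    intro p q r s t p' q' r' s' t'
    simp only [← hG]
    rw [← S5_union, ← S5_inter _ _ _ _ _ hnd]
    exact hs _ _ (sub _ _ _ _ _) (sub _ _ _ _ _)
  have GM : ∀ p q r s t p' q' r' s' t',
      G p q r s t ≤ G (p || p') (q || q') (r || r') (s || s') (t || t') := by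
    intro p q r s t p' q' r' s' t'
    simp only [← hG]
    rw [← S5_union]
    exact hm _ _ subset_union_left (union_subset (sub _ _ _ _ _) (sub _ _ _ _ _))
  have ev : ∀ p q r s, Vv fx a b c x p q r s = G p q r s false := by
    intro p q r s
    rw [← hG]
    have e : S5 a b c x y p q r s false = S4 a b c x p q r s := by simp [S5]
    rw [e]
    refine (hx _ ((S4_subset _ _ _ _ _ _ _ _).trans ?_)).symm
    intro u hu
    simp only [mem_union, mem_insert, mem_singleton] at hu ⊢
    tauto
  have ew : ∀ p q r s, Vv fy a b c y p q r s = G p q r false s := by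
    intro p q r s
    rw [← hG]
    have e : S5 a b c x y p q r false s = S4 a b c y p q r s := by simp [S5, S4]
    rw [e]
    refine (hy _ ((S4_subset _ _ _ _ _ _ _ _).trans ?_)).symm
    intro u hu
    simp only [mem_union, mem_insert, mem_singleton] at hu ⊢
    tauto
  clear hG sub hs hm hx hy
  unfold IneqV
  simp only [ev, ew]
  have f1 : (G true false true true true) + (G false false true false true) ≤ (G true false true false true) + (G false false true true true) := by
    simpa using GS true false true false true false false true true true
  have f2 : (G false false true true true) + (G false false false true false) ≤ (G false false true true false) + (G false false false true true) := by
    simpa using GS false false true true false false false false true true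
  have f3 : (G true true false true true) + (G false false false true true) ≤ (G true false false true true) + (G false true false true true) := by
    simpa using GS true false false true true false true false true true
  have f4 : (G true false false true true) + (G true false false false false) ≤ (G true false false true false) + (G true false false false true) := by
    simpa using GS true false false true false true false false false true
  have f5 : (G false true false true true) + (G false true false false false) ≤ (G false true false true false) + (G false true false false true) := by
    simpa using GS false true false true false false true false false true
  have f6 : (G true true true true true) + (G true false true true false) ≤ (G true true true true false) + (G true false true true true) := by
    simpa using GS true true true true false true false true true true
  have f7 : (G true true true true true) + (G true false true false true) ≤ (G true true true false true) + (G true false true true true) := by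
    simpa using GS true true true false true true false true true true
  have f8 : (G true true true true true) + (G true true false true false) ≤ (G true true true true false) + (G true true false true true) := by
    simpa using GS true true true true false true true false true true
  have f9 : (G true true true true true) + (G true true false false true) ≤ (G true true true false true) + (G true true false true true) := by
    simpa using GS true true true false true true true false true true
  have f10 : (G true true true true false) ≤ (G true true true true true) := by
    simpa using GM true true true true false true true true true true
  have f11 : (G true true true false true) ≤ (G true true true true true) := by
    simpa using GM true true true false true true true true true true
  intro s1 s2 s3
  cases s1 <;> cases s2 <;> cases s3 <;>
    simp only [if_true, if_false, Bool.false_eq_true] <;> linarith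

theorem HaveAmalgam.swap {M X Y : Finset α} {fx fy : Finset α → ℝ} (h : HaveAmalgam M X Y fx fy) :
    HaveAmalgam M Y X fy fx := by
  obtain ⟨g, h1, h2, h3⟩ := h
  refine ⟨g, ?_, h3, h2⟩
  rwa [union_right_comm]

/-! ### Sufficiency -/

/-- The bit-indexed amalgam. -/
def GG (v w : Bool → Bool → Bool → Bool → ℝ) (h : Bool → Bool → Bool → ℝ) (p q r s t : Bool) : ℝ :=
  bif s then (bif t then h p q r else v p q r true) else w p q r t

theorem GG_local (v w : Bool → Bool → Bool → Bool → ℝ) (hv : PB v) (hw : PB w)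
    (hag : ∀ p q r, v p q r false = w p q r false) (h : Bool → Bool → Bool → ℝ)
    (H : HProps v w h) (G : Bool → Bool → Bool → Bool → Bool → ℝ) (hG : G = GG v w h) :
    (∀ r s t, G true true r s t + G false false r s t ≤ G true false r s t + G false true r s t) ∧
    (∀ q s t, G true q true s t + G false q false s t ≤ G true q false s t + G false q true s t) ∧
    (∀ q r t, G true q r true t + G false q r false t ≤ G true q r false t + G false q r true t) ∧
    (∀ q r s, G true q r s true + G false q r s false ≤ G true q r s false + G false q r s true) ∧
    (∀ p s t, G p true true s t + G p false false s t ≤ G p true false s t + G p false true s t) ∧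
    (∀ p r t, G p true r true t + G p false r false t ≤ G p true r false t + G p false r true t) ∧
    (∀ p r s, G p true r s true + G p false r s false ≤ G p true r s false + G p false r s true) ∧
    (∀ p q t, G p q true true t + G p q false false t ≤ G p q true false t + G p q false true t) ∧
    (∀ p q s, G p q true s true + G p q false s false ≤ G p q true s false + G p q false s true) ∧
    (∀ p q r, G p q r true true + G p q r false false ≤ G p q r true false + G p q r false true) := by
  subst hG
  refine ⟨?_, ?_, ?_, ?_, ?_, ?_, ?_, ?_, ?_, ?_⟩
  · rintro r (_ | _) (_ | _) <;> simp only [GG, cond_true, cond_false]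
    · simpa using hw.2.2 true false r false false true r false
    · simpa using hw.2.2 true false r true false true r true
    · simpa using hv.2.2 true false r true false true r true
    · exact H.ab r
  · rintro q (_ | _) (_ | _) <;> simp only [GG, cond_true, cond_false]
    · simpa using hw.2.2 true q false false false q true false
    · simpa using hw.2.2 true q false true false q true true
    · simpa using hv.2.2 true q false true false q true true
    · exact H.ac q
  · rintro q r (_ | _) <;> simp only [GG, cond_true, cond_false]
    · simp only [← hag]; simpa using hv.2.2 true q r false false q r true
    · exact H.aw q r
  · rintro q r (_ | _) <;> simp only [GG, cond_true, cond_false]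
    · simpa using hw.2.2 true q r false false q r true
    · exact H.av q r
  · rintro p (_ | _) (_ | _) <;> simp only [GG, cond_true, cond_false]
    · simpa using hw.2.2 p true false false p false true false
    · simpa using hw.2.2 p true false true p false true true
    · simpa using hv.2.2 p true false true p false true true
    · exact H.bc p
  · rintro p r (_ | _) <;> simp only [GG, cond_true, cond_false]
    · simp only [← hag]; simpa using hv.2.2 p true r false p false r true
    · exact H.bw p r
  · rintro p r (_ | _) <;> simp only [GG, cond_true, cond_false]
    · simpa using hw.2.2 p true r false p false r true
    · exact H.bv p r
  · rintro p q (_ | _) <;> simp only [GG, cond_true, cond_false]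
    · simp only [← hag]; simpa using hv.2.2 p q true false p q false true
    · exact H.cw p q
  · rintro p q (_ | _) <;> simp only [GG, cond_true, cond_false]
    · simpa using hw.2.2 p q true false p q false true
    · exact H.cv p q
  · rintro p q r
    simp only [GG, cond_true, cond_false, ← hag]
    exact H.up p q r

theorem sufficiency (a b c x y : α) (hnd : ([a, b, c, x, y] : List α).Nodup)
    (fx fy : Finset α → ℝ) (hv : PB (Vv fx a b c x)) (hw : PB (Vv fy a b c y))
    (hag : ∀ p q r, Vv fx a b c x p q r false = Vv fy a b c y p q r false)
    (h : Bool → Bool → Bool → ℝ) (H : HProps (Vv fx a b c x) (Vv fy a b c y) h) :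
    HaveAmalgam {a, b, c} {x} {y} fx fy := by
  simp only [List.nodup_cons, List.mem_cons, List.not_mem_nil, or_false, not_or] at hnd
  obtain ⟨⟨hab, hac, hax, hay⟩, ⟨hbc, hbx, hby⟩, ⟨hcx, hcy⟩, hxy, -⟩ := hnd
  have hba := Ne.symm hab
  have hca := Ne.symm hac
  have hxa := Ne.symm hax
  have hya := Ne.symm hay
  have hcb := Ne.symm hbc
  have hxb := Ne.symm hbx
  have hyb := Ne.symm hby
  have hxc := Ne.symm hcx
  have hyc := Ne.symm hcy
  have hyx := Ne.symm hxy
  have loc0 := GG_local _ _ hv hw hag h H _ rfl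
  obtain ⟨G, hG⟩ : ∃ G, G = GG (Vv fx a b c x) (Vv fy a b c y) h := ⟨_, rfl⟩
  rw [← hG] at loc0
  obtain ⟨l1, l2, l3, l4, l5, l6, l7, l8, l9, l10⟩ := loc0
  have s4x : ∀ A ⊆ ({a, b, c} : Finset α) ∪ {x},
      S4 a b c x (decide (a ∈ A)) (decide (b ∈ A)) (decide (c ∈ A)) (decide (x ∈ A)) = A := by
    intro A hA
    ext u
    rw [mem_S4]
    simp only [decide_eq_true_eq]
    constructor
    · rintro (⟨h, rfl⟩ | ⟨h, rfl⟩ | ⟨h, rfl⟩ | ⟨h, rfl⟩) <;> exact h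
    · intro hu
      have := hA hu
      simp only [mem_union, mem_insert, mem_singleton, or_assoc] at this
      rcases this with rfl | rfl | rfl | rfl <;> simp [hu]
  have s4y : ∀ A ⊆ ({a, b, c} : Finset α) ∪ {y},
      S4 a b c y (decide (a ∈ A)) (decide (b ∈ A)) (decide (c ∈ A)) (decide (y ∈ A)) = A := by
    intro A hA
    ext u
    rw [mem_S4]
    simp only [decide_eq_true_eq]
    constructor
    · rintro (⟨h, rfl⟩ | ⟨h, rfl⟩ | ⟨h, rfl⟩ | ⟨h, rfl⟩) <;> exact h
    · intro hu
      have := hA hu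
      simp only [mem_union, mem_insert, mem_singleton, or_assoc] at this
      rcases this with rfl | rfl | rfl | rfl <;> simp [hu]
  refine ⟨fun A => G (decide (a ∈ A)) (decide (b ∈ A)) (decide (c ∈ A)) (decide (x ∈ A))
    (decide (y ∈ A)), ?_, ?_, ?_⟩
  · apply isPolymatroid_of_local
    · simp only [notMem_empty, decide_false, hG, GG, cond_false]
      exact hw.1
    · intro i hi
      simp only [mem_union, mem_insert, mem_singleton, or_assoc] at hi
      rcases hi with rfl | rfl | rfl | rfl | rfl <;>
        simp only [mem_union, mem_insert, mem_singleton, mem_erase, ne_eq, true_or, or_true, not_true,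
          false_and, decide_true, decide_false, not_false_eq_true, true_and, *, GG, cond_true,
          cond_false]
      · exact H.ta
      · exact H.tb
      · exact H.tc
      · exact H.tw
      · exact H.tv
    · intro A hA i hi j hj hiA hjA hij
      simp only [mem_union, mem_insert, mem_singleton, or_assoc] at hi hj
      clear hG hv hw hag H s4x s4y hA
      rcases hi with rfl | rfl | rfl | rfl | rfl <;> rcases hj with rfl | rfl | rfl | rfl | rfl <;>
        first
        | exact absurd rfl hij
        | (simp only [mem_insert, true_or, or_true, false_or, decide_true, decide_false, hiA, hjA,
             hab, hac, hax, hay, hbc, hbx, hby, hcx, hcy, hxy, hba, hca, hxa, hya, hcb, hxb, hyb,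
             hxc, hyc, hyx]
           first
           | exact l1 _ _ _ | exact l2 _ _ _ | exact l3 _ _ _ | exact l4 _ _ _ | exact l5 _ _ _
           | exact l6 _ _ _ | exact l7 _ _ _ | exact l8 _ _ _ | exact l9 _ _ _ | exact l10 _ _ _
           | (rw [add_comm (G _ _ _ _ _) (G _ _ _ _ _)]
              first
              | linarith [l1 (decide (c ∈ A)) (decide (x ∈ A)) (decide (y ∈ A))]
              | linarith [l2 (decide (b ∈ A)) (decide (x ∈ A)) (decide (y ∈ A))]
              | linarith [l3 (decide (b ∈ A)) (decide (c ∈ A)) (decide (y ∈ A))]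
              | linarith [l4 (decide (b ∈ A)) (decide (c ∈ A)) (decide (x ∈ A))]
              | linarith [l5 (decide (a ∈ A)) (decide (x ∈ A)) (decide (y ∈ A))]
              | linarith [l6 (decide (a ∈ A)) (decide (c ∈ A)) (decide (y ∈ A))]
              | linarith [l7 (decide (a ∈ A)) (decide (c ∈ A)) (decide (x ∈ A))]
              | linarith [l8 (decide (a ∈ A)) (decide (b ∈ A)) (decide (y ∈ A))]
              | linarith [l9 (decide (a ∈ A)) (decide (b ∈ A)) (decide (x ∈ A))]
              | linarith [l10 (decide (a ∈ A)) (decide (b ∈ A)) (decide (c ∈ A))]))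
  · intro A hA
    have hy : y ∉ A := fun h => by
      have := hA h
      simp [hya, hyb, hyc, hyx] at this
    have e := s4x A hA
    by_cases hx : x ∈ A
    · simp only [hx, hy, decide_true, decide_false, hG, GG, cond_true, cond_false] at e ⊢
      unfold Vv; rw [e]
    · simp only [hx, hy, decide_false, hG, GG, cond_false] at e ⊢
      rw [← hag]; unfold Vv; rw [e]
  · intro A hA
    have hx : x ∉ A := fun h => by
      have := hA h
      simp [hxa, hxb, hxc, hxy] at this
    have e := s4y A hA
    simp only [hx, decide_false, hG, GG, cond_false]
    unfold Vv; rw [e]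

/-- `f_x` and `f_y` have an amalgam iff inequality (1) holds for
all permutations of `a,b,c`, both orders of `(x,f_x)` and `(y,f_y)`, and all
eight choices of the braced alternatives. -/
theorem statement_10 (a b c x y : α) (hnd : ([a, b, c, x, y] : List α).Nodup)
    (f fx fy : Finset α → ℝ)
    (hf : IsPolymatroid {a, b, c} f)
    (hfx : IsPolymatroid {a, b, c, x} fx) (hfy : IsPolymatroid {a, b, c, y} fy)
    (hresx : ∀ A ⊆ ({a, b, c} : Finset α), fx A = f A)
    (hresy : ∀ A ⊆ ({a, b, c} : Finset α), fy A = f A) :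
    HaveAmalgam {a, b, c} {x} {y} fx fy ↔
      ∀ a' b' c' : α, ({a', b', c'} : Finset α) = {a, b, c} →
        ∀ s1 s2 s3 : Bool,
          pmi f {a'} {b'} ∅ ≤ amLHS fx fy x y a' b' c' s1 s2 s3 ∧
          pmi f {a'} {b'} ∅ ≤ amLHS fy fx y x a' b' c' s1 s2 s3 := by
  have hnd' := hnd
  simp only [List.nodup_cons, List.mem_cons, List.not_mem_nil, or_false, not_or] at hnd'
  obtain ⟨⟨hab, hac, hax, hay⟩, ⟨hbc, hbx, hby⟩, ⟨hcx, hcy⟩, hxy, -⟩ := hnd'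
  have ndx : ([a, b, c, x] : List α).Nodup := by simp; tauto
  have ndy : ([a, b, c, y] : List α).Nodup := by simp; tauto
  have pf : ∀ a' b' c' : α, ({a', b', c'} : Finset α) = {a, b, c} →
      pmi f {a'} {b'} ∅ = pmi fx {a'} {b'} ∅ ∧ pmi f {a'} {b'} ∅ = pmi fy {a'} {b'} ∅ := by
    intro a' b' c' he
    have s1 : {a'} ∪ ∅ ⊆ ({a, b, c} : Finset α) := by rw [← he]; simp
    have s2 : {b'} ∪ ∅ ⊆ ({a, b, c} : Finset α) := by rw [← he]; simp
    have s3 : {a'} ∪ {b'} ∪ ∅ ⊆ ({a, b, c} : Finset α) := by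
      rw [← he]; intro u; simp only [mem_union, mem_insert, mem_singleton, notMem_empty]; tauto
    have s4 : ∅ ⊆ ({a, b, c} : Finset α) := empty_subset _
    unfold pmi
    constructor
    · rw [hresx _ s1, hresx _ s2, hresx _ s3, hresx _ s4]
    · rw [hresy _ s1, hresy _ s2, hresy _ s3, hresy _ s4]
  constructor
  · intro h a' b' c' he s1 s2 s3
    have card3 : ({a, b, c} : Finset α).card = 3 := by
      rw [Finset.card_eq_three]; exact ⟨a, b, c, hab, hac, hbc, rfl⟩
    have mem' : ∀ u, u ∈ ({a', b', c'} : Finset α) → u ≠ x ∧ u ≠ y := by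
      intro u hu
      rw [he] at hu
      simp only [mem_insert, mem_singleton] at hu
      rcases hu with rfl | rfl | rfl <;> constructor <;> assumption
    have ma := mem' a' (by simp)
    have mb := mem' b' (by simp)
    have mc := mem' c' (by simp)
    have hd : a' ≠ b' ∧ a' ≠ c' ∧ b' ≠ c' := by
      rw [← he] at card3
      refine ⟨?_, ?_, ?_⟩ <;> rintro rfl
      · have : ({a', a', c'} : Finset α).card ≤ 2 := by
          rw [insert_eq_of_mem (by simp)]; exact card_le_two
        omega
      · have : ({a', b', a'} : Finset α).card ≤ 2 := by
          rw [insert_eq_of_mem (by simp)]; exact card_le_two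
        omega
      · have : ({a', b', b'} : Finset α).card ≤ 2 := by
          rw [show ({a', b', b'} : Finset α) = {a', b'} by simp]; exact card_le_two
        omega
    have nd1 : ([a', b', c', x, y] : List α).Nodup := by simp; tauto
    have nd2 : ([a', b', c', y, x] : List α).Nodup := by
      simp; have := Ne.symm hxy; tauto
    rw [← he] at h
    refine ⟨?_, ?_⟩
    · rw [(pf a' b' c' he).1]
      exact (ineq_iff fx fy a' b' c' x y).2 (necessity a' b' c' x y nd1 fx fy h) s1 s2 s3
    · rw [(pf a' b' c' he).2]
      exact (ineq_iff fy fx a' b' c' y x).2 (necessity a' b' c' y x nd2 fy fx h.swap) s1 s2 s3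
  · intro h
    have hv := PB_Vv fx a b c x ndx hfx
    have hw := PB_Vv fy a b c y ndy hfy
    have hag : ∀ p q r, Vv fx a b c x p q r false = Vv fy a b c y p q r false := by
      intro p q r
      have e1 : S4 a b c x p q r false = S4 a b c y p q r false := by simp [S4]
      have e2 : S4 a b c y p q r false ⊆ {a, b, c} := by
        intro u hu
        rw [mem_S4] at hu
        simp only [mem_insert, mem_singleton]
        simp only [Bool.false_eq_true, false_and, or_false] at hu
        tauto
      unfold Vv
      rw [e1, hresx _ e2, hresy _ e2]
    have I1 : ∀ a' b' c' : α, ({a', b', c'} : Finset α) = {a, b, c} →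
        IneqV (Vv fx a' b' c' x) (Vv fy a' b' c' y) := by
      intro a' b' c' he
      rw [← ineq_iff, ← (pf a' b' c' he).1]
      exact fun s1 s2 s3 => (h a' b' c' he s1 s2 s3).1
    have I2 : ∀ a' b' c' : α, ({a', b', c'} : Finset α) = {a, b, c} →
        IneqV (Vv fy a' b' c' y) (Vv fx a' b' c' x) := by
      intro a' b' c' he
      rw [← ineq_iff, ← (pf a' b' c' he).2]
      exact fun s1 s2 s3 => (h a' b' c' he s1 s2 s3).2
    have eab : ({b, c, a} : Finset α) = {a, b, c} := by
      ext u; simp only [mem_insert, mem_singleton]; try tauto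
    have Vab : ∀ (g : Finset α → ℝ) (z : α),
        Vv g b c a z = fun p q r s => Vv g a b c z r p q s := by
      intro g z; funext p q r s; unfold Vv; congr 1
      try (simp only [S4]; ac_rfl)
    have iab := I1 b c a eab
    have kab := I2 b c a eab
    rw [Vab, Vab] at iab kab
    have eac : ({c, b, a} : Finset α) = {a, b, c} := by
      ext u; simp only [mem_insert, mem_singleton]; try tauto
    have Vac : ∀ (g : Finset α → ℝ) (z : α),
        Vv g c b a z = fun p q r s => Vv g a b c z r q p s := by
      intro g z; funext p q r s; unfold Vv; congr 1
      try (simp only [S4]; ac_rfl)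
    have iac := I1 c b a eac
    have kac := I2 c b a eac
    rw [Vac, Vac] at iac kac
    have eba : ({a, c, b} : Finset α) = {a, b, c} := by
      ext u; simp only [mem_insert, mem_singleton]; try tauto
    have Vba : ∀ (g : Finset α → ℝ) (z : α),
        Vv g a c b z = fun p q r s => Vv g a b c z p r q s := by
      intro g z; funext p q r s; unfold Vv; congr 1
      try (simp only [S4]; ac_rfl)
    have iba := I1 a c b eba
    have kba := I2 a c b eba
    rw [Vba, Vba] at iba kba
    have ebc : ({c, a, b} : Finset α) = {a, b, c} := by
      ext u; simp only [mem_insert, mem_singleton]; try tauto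
    have Vbc : ∀ (g : Finset α → ℝ) (z : α),
        Vv g c a b z = fun p q r s => Vv g a b c z q r p s := by
      intro g z; funext p q r s; unfold Vv; congr 1
      try (simp only [S4]; ac_rfl)
    have ibc := I1 c a b ebc
    have kbc := I2 c a b ebc
    rw [Vbc, Vbc] at ibc kbc
    have eca : ({a, b, c} : Finset α) = {a, b, c} := by
      ext u; simp only [mem_insert, mem_singleton]; try tauto
    have Vca : ∀ (g : Finset α → ℝ) (z : α),
        Vv g a b c z = fun p q r s => Vv g a b c z p q r s := by
      intro g z; funext p q r s; unfold Vv; congr 1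
      try (simp only [S4]; ac_rfl)
    have ica := I1 a b c eca
    have kca := I2 a b c eca
    rw [Vca, Vca] at ica kca
    have ecb : ({b, a, c} : Finset α) = {a, b, c} := by
      ext u; simp only [mem_insert, mem_singleton]; try tauto
    have Vcb : ∀ (g : Finset α → ℝ) (z : α),
        Vv g b a c z = fun p q r s => Vv g a b c z q p r s := by
      intro g z; funext p q r s; unfold Vv; congr 1
      try (simp only [S4]; ac_rfl)
    have icb := I1 b a c ecb
    have kcb := I2 b a c ecb
    rw [Vcb, Vcb] at icb kcb
    obtain ⟨hh, H⟩ := bool_core _ _ hv hw hag 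
      iab kab iac kac iba kba ibc kbc ica kca icb kcb
    exact sufficiency a b c x y hnd fx fy hv hw hag hh H
end
end

section
/- Let a,b,c,x,y be distinct, let f be a polymatroid on {a,b,c}, and let f_x, f_y be polymatroids on {a,b,c,x} and {a,b,c,y} extending f. Then f_x and f_y are adhesive if and only if the following inequality holds for every permutation of the roles of a,b,c, for the exchange of (x, f_x) with (y, f_y), and for each of the four choices in the two braced alternatives: f_x(a,x|c) + f_x(a,b|x) + f_y(a,b|y) + f_y(c,y) + {f_x(b,x|ac) or f_y(b,y|ac)} + {f_x(c,x|ab) or f_y(c,y|ab)} ≥ f(a,b). -/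
open Finset

noncomputable section

variable {α : Type*} [DecidableEq α]

/-- The left-hand side of inequality (3) of Corollary 1, with the two braced
alternatives selected by booleans `s1, s2`. -/
def adLHS (fx fy : Finset α → ℝ) (x y a b c : α) (s1 s2 : Bool) : ℝ :=
  pmi fx {a} {x} {c} + pmi fx {a} {b} {x} + pmi fy {a} {b} {y} + pmi fy {c} {y} ∅ +
  (if s1 then pmi fx {b} {x} {a, c} else pmi fy {b} {y} {a, c}) +
  (if s2 then pmi fx {c} {x} {a, b} else pmi fy {c} {y} {a, b})

/-- Elemental polymatroid inequalities on four elements, in bit notation. -/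
structure S4_s11 (X : Bool → Bool → Bool → Bool → ℝ) : Prop where
  zero : X false false false false = 0
  ma : X false true true true ≤ X true true true true
  mb : X true false true true ≤ X true true true true
  mc : X true true false true ≤ X true true true true
  mx : X true true true false ≤ X true true true true
  ab : ∀ r s, X true true r s + X false false r s ≤ X true false r s + X false true r s
  ac : ∀ q s, X true q true s + X false q false s ≤ X true q false s + X false q true s
  bc : ∀ p s, X p true true s + X p false false s ≤ X p true false s + X p false true s
  ax : ∀ q r, X true q r true + X false q r false ≤ X true q r false + X false q r true
  bx : ∀ p r, X p true r true + X p false r false ≤ X p true r false + X p false r true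
  cx : ∀ p q, X p q true true + X p q false false ≤ X p q true false + X p q false true

theorem S4_s11.swapab {X : Bool → Bool → Bool → Bool → ℝ} (h : S4_s11 X) : S4_s11 (fun p q r s => X q p r s) where
  zero := h.zero
  ma := h.mb
  mb := h.ma
  mc := h.mc
  mx := h.mx
  ab r s := by linarith [h.ab r s]
  ac := h.bc
  bc := h.ac
  ax := h.bx
  bx := h.ax
  cx p q := h.cx q p

theorem S4_s11.swapbc {X : Bool → Bool → Bool → Bool → ℝ} (h : S4_s11 X) : S4_s11 (fun p q r s => X p r q s) where
  zero := h.zero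
  ma := h.ma
  mb := h.mc
  mc := h.mb
  mx := h.mx
  ab := h.ac
  ac := h.ab
  bc r s := by linarith [h.bc r s]
  ax q r := h.ax r q
  bx := h.cx
  cx := h.bx

/-- The bit form of the inequality, in the roles `(b, c, a)`. -/
def Qk (X Y : Bool → Bool → Bool → Bool → ℝ) : Prop := ∀ s1 s2 : Bool,
  X false true false false + X false false true false - X false true true false ≤
    (X true true false false + X true false false true - X true true false true
      - X true false false false) +
    (X false true false true + X false false true true - X false true true true
      - X false false false true) +
    (Y false true false true + Y false false true true - Y false true true true
      - Y false false false true) +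
    (X true false false false + Y false false false true - Y true false false true) +
    (if s1 then X true true true false + X true true false true - X true true true true
        - X true true false false
      else X true true true false + Y true true false true - Y true true true true
        - X true true false false) +
    (if s2 then X true true true false + X false true true true - X true true true true
        - X false true true false
      else X true true true false + Y false true true true - Y true true true true
        - X false true true false)

theorem K1 {X Y : Bool → Bool → Bool → Bool → ℝ} (hX : S4_s11 X) (hY : S4_s11 Y)
    (e : ∀ p q r, X p q r false = Y p q r false) (hM hab : ℝ)
    (eM : hM = X true true true true + Y true true true true - X true true true false)
    (eab : hab = hM - min (X true true true true - X true true false true)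
      (Y true true true true - Y true true false true)) :
    hab - min (X true true false true - X true false false true)
        (Y true true false true - Y true false false true)
      ≤ X true false false true + Y true false false true - X true false false false := by
  have e1 := e true false false
  have e2 := e true true false
  have e3 := e true true true
  have e1 := hX.cx true true
  have e2 := hY.cx true true
  have e1 := hX.bx true false
  have e2 := hY.bx true false
  rcases min_choice (X true true true true - X true true false true)
      (Y true true true true - Y true true false true) with h1 | h1 <;>
  rcases min_choice (X true true false true - X true false false true)
        (Y true true false true - Y true false false true) with h2 | h2 <;>
  rw [h2] <;> rw [h1] at eab <;> linarith

theorem K2 {X Y : Bool → Bool → Bool → Bool → ℝ} (hX : S4_s11 X) (hY : S4_s11 Y)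
    (e : ∀ p q r, X p q r false = Y p q r false) (Q1 : Qk X Y) (Q2 : Qk Y X)
    (hM hab hac hbc Ub Uc : ℝ)
    (eM : hM = X true true true true + Y true true true true - X true true true false)
    (eab : hab = hM - min (X true true true true - X true true false true)
      (Y true true true true - Y true true false true))
    (eac : hac = hM - min (X true true true true - X true false true true)
      (Y true true true true - Y true false true true))
    (ebc : hbc = hM - min (X true true true true - X false true true true)
      (Y true true true true - Y false true true true))
    (eUb : Ub = min (X false true false true + Y false true false true - X false true false false)
      (hab + hbc - hM))
    (eUc : Uc = min (X false false true true + Y false false true true - X false false true false)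
      (hac + hbc - hM)) :
    hab - min (X true true false true - X true false false true)
        (Y true true false true - Y true false false true)
      ≤ Ub + Uc + min (X true false false true - X false false false true)
        (Y true false false true - Y false false false true) - hbc := by
  have e1 := e true true true
  have e2 := e true true false
  have e3 := e true false true
  have e4 := e false true true
  have e5 := e true false false
  have e6 := e false true false
  have e7 := e false false true
  -- decreasing increments
  have u1 : min (X true true true true - X true true false true)
      (Y true true true true - Y true true false true) ≤ X true true true true - X true true false true :=
    min_le_left _ _
  have u2 : min (X true true true true - X true true false true)
      (Y true true true true - Y true true false true) ≤ Y true true true true - Y true true false true :=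
    min_le_right _ _
  have v1 : hM - hac ≤ min (X true true false true - X true false false true)
        (Y true true false true - Y true false false true) := by
    rw [eac, sub_sub_cancel]
    exact min_le_min (by linarith [hX.bc true true]) (by linarith [hY.bc true true])
  have v2 : hM - hbc ≤ min (X true false false true - X false false false true)
        (Y true false false true - Y false false false true) := by
    rw [ebc, sub_sub_cancel]
    exact min_le_min (by linarith [hX.ac true true, hX.ab false true])
      (by linarith [hY.ac true true, hY.ab false true])
  have x1 := hX.ax true false
  have x2 := hX.ax true true
  have x3 := hX.ax false true
  have x4 := hX.bx false true
  have x5 := hX.bx true true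
  have x6 := hX.cx true true
  have x7 := hX.cx true false
  have x8 := hX.cx false true
  have y1 := hY.ax true false
  have y2 := hY.ax true true
  have y3 := hY.ax false true
  have y4 := hY.bx false true
  have y5 := hY.bx true true
  have y6 := hY.cx true true
  have y7 := hY.cx true false
  have y8 := hY.cx false true
  have x9 := hX.bc false true
  have y9 := hY.bc false true
  rcases min_choice (X false true false true + Y false true false true - X false true false false)
      (hab + hbc - hM) with h1 | h1 <;>
  rcases min_choice (X false false true true + Y false false true true - X false false true false)
      (hac + hbc - hM) with h2 | h2 <;> rw [h1] at eUb <;> rw [h2] at eUc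
  · have q1 := Q1 true true
    have q2 := Q1 true false
    have q3 := Q1 false true
    have q4 := Q1 false false
    have q5 := Q2 true true
    have q6 := Q2 true false
    have q7 := Q2 false true
    have q8 := Q2 false false
    simp only [if_true, if_false, Bool.false_eq_true] at q1 q2 q3 q4 q5 q6 q7 q8
    clear h1 h2 u1 u2 v1 v2 eac
    rcases min_choice (X true true true true - X true true false true)
      (Y true true true true - Y true true false true) with h3 | h3 <;> rw [h3] at eab <;>
    rcases min_choice (X true true true true - X false true true true)
      (Y true true true true - Y false true true true) with h4 | h4 <;> rw [h4] at ebc <;>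
    rcases min_choice (X true true false true - X true false false true)
        (Y true true false true - Y true false false true) with h5 | h5 <;> rw [h5] <;>
    rcases min_choice (X true false false true - X false false false true)
        (Y true false false true - Y false false false true) with h6 | h6 <;> rw [h6] <;>
    clear h3 h4 h5 h6 <;> linarith
  · -- `Uc = hac + hbc - hM`
    have w : hab ≤ X false true false true + Y false true false true - X false true false false
        + min (X true false false true - X false false false true)
          (Y true false false true - Y false false false true) := by
      have z1 := hX.ab false true
      have z2 := hY.ab false true
      rcases min_choice (X true false false true - X false false false true)
        (Y true false false true - Y false false false true) with h6 | h6 <;> rw [h6] <;>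
      rcases min_choice (X true true true true - X true true false true)
        (Y true true true true - Y true true false true) with h3 | h3 <;> rw [h3] at eab <;>
      linarith
    linarith
  · -- `Ub = hab + hbc - hM`
    have w : hM ≤ X false false true true + Y false false true true - X false false true false
        + min (X true false false true - X false false false true)
          (Y true false false true - Y false false false true)
        + min (X true true false true - X true false false true)
          (Y true true false true - Y true false false true) := by
      have z1 := hX.ac false true
      have z2 := hY.ac false true
      have z3 := hX.bc true true
      have z4 := hY.bc true true
      rcases min_choice (X true false false true - X false false false true)
        (Y true false false true - Y false false false true) with h6 | h6 <;> rw [h6] <;>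
      rcases min_choice (X true true false true - X true false false true)
        (Y true true false true - Y true false false true) with h5 | h5 <;> rw [h5] <;>
      linarith
    linarith
  · linarith

theorem core2 (hab hac hbc Ua Ub Uc da db dc dab dac dba dbc dca dcb I0 : ℝ)
    (l1 : hab - dab ≤ Ua) (l2 : hac - dac ≤ Ua) (l3 : hab - dba ≤ Ub) (l4 : hbc - dbc ≤ Ub)
    (l5 : hac - dca ≤ Uc) (l6 : hbc - dcb ≤ Uc)
    (m1 : dab ≤ db) (m2 : dac ≤ dc) (m3 : dba ≤ da) (m4 : dbc ≤ dc) (m5 : dca ≤ da) (m6 : dcb ≤ db)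
    (k1 : hab - dab ≤ Ub + Uc + da - hbc) (k2 : hac - dac ≤ Ub + Uc + da - hbc)
    (k3 : hab - dba ≤ Ua + Uc + db - hac) (k4 : hbc - dbc ≤ Ua + Uc + db - hac)
    (k5 : hac - dca ≤ Ua + Ub + dc - hab) (k6 : hbc - dcb ≤ Ua + Ub + dc - hab)
    (i1 : Ua ≤ I0 + da) (i2 : Ub ≤ I0 + db) (i3 : Uc ≤ I0 + dc) :
    ∃ ha hb hc h0, (ha ≤ Ua ∧ hb ≤ Ub ∧ hc ≤ Uc) ∧
      (hab - dab ≤ ha ∧ hac - dac ≤ ha) ∧ (hab - dba ≤ hb ∧ hbc - dbc ≤ hb) ∧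
      (hac - dca ≤ hc ∧ hbc - dcb ≤ hc) ∧ h0 ≤ I0 ∧
      (ha ≤ h0 + da ∧ hb ≤ h0 + db ∧ hc ≤ h0 + dc) ∧
      (h0 + hab ≤ ha + hb ∧ h0 + hac ≤ ha + hc ∧ h0 + hbc ≤ hb + hc) := by
  obtain ⟨ha, ea⟩ : ∃ t, t = min Ua (Ub + Uc + da - hbc) := ⟨_, rfl⟩
  obtain ⟨hb, eb⟩ : ∃ t, t = min Ub (Ua + Uc + db - hac) := ⟨_, rfl⟩
  obtain ⟨hc, ec⟩ : ∃ t, t = min Uc (Ua + Ub + dc - hab) := ⟨_, rfl⟩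
  have a1 : ha ≤ Ua := ea ▸ min_le_left _ _
  have a2 : ha ≤ Ub + Uc + da - hbc := ea ▸ min_le_right _ _
  have b1 : hb ≤ Ub := eb ▸ min_le_left _ _
  have b2 : hb ≤ Ua + Uc + db - hac := eb ▸ min_le_right _ _
  have c1 : hc ≤ Uc := ec ▸ min_le_left _ _
  have c2 : hc ≤ Ua + Ub + dc - hab := ec ▸ min_le_right _ _
  have n1 : ha + hbc ≤ hb + hc + da := by
    rcases min_choice Ub (Ua + Uc + db - hac) with h | h <;>
    rcases min_choice Uc (Ua + Ub + dc - hab) with h' | h' <;> rw [h] at eb <;> rw [h'] at ec <;>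
    linarith
  have n2 : hb + hac ≤ ha + hc + db := by
    rcases min_choice Ua (Ub + Uc + da - hbc) with h | h <;>
    rcases min_choice Uc (Ua + Ub + dc - hab) with h' | h' <;> rw [h] at ea <;> rw [h'] at ec <;>
    linarith
  have n3 : hc + hab ≤ ha + hb + dc := by
    rcases min_choice Ua (Ub + Uc + da - hbc) with h | h <;>
    rcases min_choice Ub (Ua + Uc + db - hac) with h' | h' <;> rw [h] at ea <;> rw [h'] at eb <;>
    linarith
  have A1 : hab - dab ≤ ha := ea ▸ le_min l1 k1
  have A2 : hac - dac ≤ ha := ea ▸ le_min l2 k2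
  have B1 : hab - dba ≤ hb := eb ▸ le_min l3 k3
  have B2 : hbc - dbc ≤ hb := eb ▸ le_min l4 k4
  have C1 : hac - dca ≤ hc := ec ▸ le_min l5 k5
  have C2 : hbc - dcb ≤ hc := ec ▸ le_min l6 k6
  refine ⟨ha, hb, hc, min I0 (min (ha + hb - hab) (min (ha + hc - hac) (hb + hc - hbc))),
    ⟨a1, b1, c1⟩, ⟨A1, A2⟩, ⟨B1, B2⟩, ⟨C1, C2⟩, min_le_left _ _, ?_, ?_⟩
  · refine ⟨?_, ?_, ?_⟩ <;> rw [← sub_le_iff_le_add] <;>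
    refine le_min ?_ (le_min ?_ (le_min ?_ ?_)) <;> linarith
  · have z1 := min_le_right I0 (min (ha + hb - hab) (min (ha + hc - hac) (hb + hc - hbc)))
    have z2 := min_le_left (ha + hb - hab) (min (ha + hc - hac) (hb + hc - hbc))
    have z3 := min_le_right (ha + hb - hab) (min (ha + hc - hac) (hb + hc - hbc))
    have z4 := min_le_left (ha + hc - hac) (hb + hc - hbc)
    have z5 := min_le_right (ha + hc - hac) (hb + hc - hbc)
    refine ⟨?_, ?_, ?_⟩ <;> linarith

/-- The twelve families of inequalities in bit form. -/
def QAll (X Y : Bool → Bool → Bool → Bool → ℝ) : Prop :=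
  Qk (fun p q r s => X p q r s) (fun p q r s => Y p q r s) ∧
  Qk (fun p q r s => X p r q s) (fun p q r s => Y p r q s) ∧
  Qk (fun p q r s => X q p r s) (fun p q r s => Y q p r s) ∧
  Qk (fun p q r s => X r p q s) (fun p q r s => Y r p q s) ∧
  Qk (fun p q r s => X q r p s) (fun p q r s => Y q r p s) ∧
  Qk (fun p q r s => X r q p s) (fun p q r s => Y r q p s)

set_option maxHeartbeats 2000000 in
theorem core {X Y : Bool → Bool → Bool → Bool → ℝ} (hX : S4_s11 X) (hY : S4_s11 Y)
    (e : ∀ p q r, X p q r false = Y p q r false) (Q1 : QAll X Y) (Q2 : QAll Y X) :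
    ∃ H : Bool → Bool → Bool → ℝ,
      H true true true = X true true true true + Y true true true true - X true true true false ∧
      (H false true true ≤ H true true true ∧ H true false true ≤ H true true true ∧
        H true true false ≤ H true true true) ∧
      (∀ r, H true true r + H false false r ≤ H true false r + H false true r) ∧
      (∀ q, H true q true + H false q false ≤ H true q false + H false q true) ∧
      (∀ p, H p true true + H p false false ≤ H p true false + H p false true) ∧
      (∀ p q r, H p q r ≤ X p q r true + Y p q r true - X p q r false) ∧
      (∀ q r, H true q r - H false q r ≤ X true q r true - X false q r true) ∧
      (∀ q r, H true q r - H false q r ≤ Y true q r true - Y false q r true) ∧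
      (∀ p r, H p true r - H p false r ≤ X p true r true - X p false r true) ∧
      (∀ p r, H p true r - H p false r ≤ Y p true r true - Y p false r true) ∧
      (∀ p q, H p q true - H p q false ≤ X p q true true - X p q false true) ∧
      (∀ p q, H p q true - H p q false ≤ Y p q true true - Y p q false true) := by
  obtain ⟨hM, eM⟩ : ∃ t, t = X true true true true + Y true true true true - X true true true false :=
    ⟨_, rfl⟩
  obtain ⟨hab, eab⟩ : ∃ t, t = hM - min (X true true true true - X true true false true)
      (Y true true true true - Y true true false true) := ⟨_, rfl⟩
  obtain ⟨hac, eac⟩ : ∃ t, t = hM - min (X true true true true - X true false true true)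
      (Y true true true true - Y true false true true) := ⟨_, rfl⟩
  obtain ⟨hbc, ebc⟩ : ∃ t, t = hM - min (X true true true true - X false true true true)
      (Y true true true true - Y false true true true) := ⟨_, rfl⟩
  obtain ⟨Ua, eUa⟩ : ∃ t, t = min (X true false false true + Y true false false true
      - X true false false false) (hab + hac - hM) := ⟨_, rfl⟩
  obtain ⟨Ub, eUb⟩ : ∃ t, t = min (X false true false true + Y false true false true
      - X false true false false) (hab + hbc - hM) := ⟨_, rfl⟩
  obtain ⟨Uc, eUc⟩ : ∃ t, t = min (X false false true true + Y false false true true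
      - X false false true false) (hac + hbc - hM) := ⟨_, rfl⟩
  have eUa' := eUa
  rw [add_comm hab hac] at eUa'
  have eUb' := eUb
  rw [add_comm hab hbc] at eUb'
  have eUc' := eUc
  rw [add_comm hac hbc] at eUc'
  obtain ⟨q1, q2, q3, q4, q5, q6⟩ := Q1
  obtain ⟨q1', q2', q3', q4', q5', q6'⟩ := Q2
  have X2 := hX.swapbc
  have Y2 := hY.swapbc
  have X3 := hX.swapab
  have Y3 := hY.swapab
  have X4 := hX.swapab.swapbc
  have Y4 := hY.swapab.swapbc
  have X5 := hX.swapbc.swapab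
  have Y5 := hY.swapbc.swapab
  have X6 := hX.swapab.swapbc.swapab
  have Y6 := hY.swapab.swapbc.swapab
  have k1 := K2 hX hY e q1 q1' hM hab hac hbc Ub Uc eM eab eac ebc eUb eUc
  have k2 := K2 X2 Y2 (fun p q r => e p r q) q2 q2' hM hac hab hbc Uc Ub eM eac eab ebc eUc eUb
  have k3 := K2 X3 Y3 (fun p q r => e q p r) q3 q3' hM hab hbc hac Ua Uc eM eab ebc eac eUa eUc'
  have k4 := K2 X4 Y4 (fun p q r => e r p q) q4 q4' hM hbc hab hac Uc Ua eM ebc eab eac eUc' eUa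
  have k5 := K2 X5 Y5 (fun p q r => e q r p) q5 q5' hM hac hbc hab Ua Ub eM eac ebc eab eUa' eUb'
  have k6 := K2 X6 Y6 (fun p q r => e r q p) q6 q6' hM hbc hac hab Ub Ua eM ebc eac eab eUb' eUa'
  have l1 := K1 hX hY e hM hab eM eab
  have l2 := K1 X2 Y2 (fun p q r => e p r q) hM hac eM eac
  have l3 := K1 X3 Y3 (fun p q r => e q p r) hM hab eM eab
  have l4 := K1 X4 Y4 (fun p q r => e r p q) hM hbc eM ebc
  have l5 := K1 X5 Y5 (fun p q r => e q r p) hM hac eM eac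
  have l6 := K1 X6 Y6 (fun p q r => e r q p) hM hbc eM ebc
  beta_reduce at k1 k2 k3 k4 k5 k6 l1 l2 l3 l4 l5 l6
  obtain ⟨da, eda⟩ : ∃ t, t = min (X true false false true - X false false false true)
    (Y true false false true - Y false false false true) := ⟨_, rfl⟩
  obtain ⟨db, edb⟩ : ∃ t, t = min (X false true false true - X false false false true)
    (Y false true false true - Y false false false true) := ⟨_, rfl⟩
  obtain ⟨dc, edc⟩ : ∃ t, t = min (X false false true true - X false false false true)
    (Y false false true true - Y false false false true) := ⟨_, rfl⟩
  obtain ⟨dab, edab⟩ : ∃ t, t = min (X true true false true - X true false false true)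
    (Y true true false true - Y true false false true) := ⟨_, rfl⟩
  obtain ⟨dac, edac⟩ : ∃ t, t = min (X true false true true - X true false false true)
    (Y true false true true - Y true false false true) := ⟨_, rfl⟩
  obtain ⟨dba, edba⟩ : ∃ t, t = min (X true true false true - X false true false true)
    (Y true true false true - Y false true false true) := ⟨_, rfl⟩
  obtain ⟨dbc, edbc⟩ : ∃ t, t = min (X false true true true - X false true false true)
    (Y false true true true - Y false true false true) := ⟨_, rfl⟩
  obtain ⟨dca, edca⟩ : ∃ t, t = min (X true false true true - X false false true true)
    (Y true false true true - Y false false true true) := ⟨_, rfl⟩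
  obtain ⟨dcb, edcb⟩ : ∃ t, t = min (X false true true true - X false false true true)
    (Y false true true true - Y false false true true) := ⟨_, rfl⟩
  rw [← edab] at k1 l1
  rw [← edac] at k2 l2
  rw [← edba] at k3 l3
  rw [← edbc] at k4 l4
  rw [← edca] at k5 l5
  rw [← edcb] at k6 l6
  rw [← eda] at k1 k2
  rw [← edb] at k3 k4
  rw [← edc] at k5 k6
  -- the top increments
  have ec3 : hM - hab = min (X true true true true - X true true false true)
      (Y true true true true - Y true true false true) := by rw [eab]; ring
  have eb3 : hM - hac = min (X true true true true - X true false true true)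
      (Y true true true true - Y true false true true) := by rw [eac]; ring
  have ea3 : hM - hbc = min (X true true true true - X false true true true)
      (Y true true true true - Y false true true true) := by rw [ebc]; ring
  have m3 : ∀ {u v w z : ℝ}, u ≤ w → v ≤ z → min u v ≤ min w z := fun h h' => min_le_min h h'
  have t1 : hM - hac ≤ dab := by
    rw [eb3, edab]; exact m3 (by linarith [hX.bc true true]) (by linarith [hY.bc true true])
  have t2 : hM - hab ≤ dac := by
    rw [ec3, edac]; exact m3 (by linarith [hX.bc true true]) (by linarith [hY.bc true true])
  have t3 : hM - hbc ≤ dba := by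
    rw [ea3, edba]; exact m3 (by linarith [hX.ac true true]) (by linarith [hY.ac true true])
  have t4 : hM - hab ≤ dbc := by
    rw [ec3, edbc]; exact m3 (by linarith [hX.ac true true]) (by linarith [hY.ac true true])
  have t5 : hM - hbc ≤ dca := by
    rw [ea3, edca]; exact m3 (by linarith [hX.ab true true]) (by linarith [hY.ab true true])
  have t6 : hM - hac ≤ dcb := by
    rw [eb3, edcb]; exact m3 (by linarith [hX.ab true true]) (by linarith [hY.ab true true])
  have s1 : dab ≤ db := by
    rw [edab, edb]; exact m3 (by linarith [hX.ab false true]) (by linarith [hY.ab false true])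
  have s2 : dac ≤ dc := by
    rw [edac, edc]; exact m3 (by linarith [hX.ac false true]) (by linarith [hY.ac false true])
  have s3 : dba ≤ da := by
    rw [edba, eda]; exact m3 (by linarith [hX.ab false true]) (by linarith [hY.ab false true])
  have s4 : dbc ≤ dc := by
    rw [edbc, edc]; exact m3 (by linarith [hX.bc false true]) (by linarith [hY.bc false true])
  have s5 : dca ≤ da := by
    rw [edca, eda]; exact m3 (by linarith [hX.ac false true]) (by linarith [hY.ac false true])
  have s6 : dcb ≤ db := by
    rw [edcb, edb]; exact m3 (by linarith [hX.bc false true]) (by linarith [hY.bc false true])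
  have ua1 : Ua ≤ _ := eUa ▸ min_le_left _ _
  have ua2 : Ua ≤ _ := eUa ▸ min_le_right _ _
  have ub1 : Ub ≤ _ := eUb ▸ min_le_left _ _
  have ub2 : Ub ≤ _ := eUb ▸ min_le_right _ _
  have uc1 : Uc ≤ _ := eUc ▸ min_le_left _ _
  have uc2 : Uc ≤ _ := eUc ▸ min_le_right _ _
  have x0 := hX.zero
  have y0 := hY.zero
  have i1 : Ua ≤ X false false false true + Y false false false true + da := by
    have := e true false false
    rcases min_choice (X true false false true - X false false false true)
      (Y true false false true - Y false false false true) with h | h <;> rw [eda, h] <;>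
    linarith [hX.ax false false, hY.ax false false]
  have i2 : Ub ≤ X false false false true + Y false false false true + db := by
    have := e false true false
    rcases min_choice (X false true false true - X false false false true)
      (Y false true false true - Y false false false true) with h | h <;> rw [edb, h] <;>
    linarith [hX.bx false false, hY.bx false false]
  have i3 : Uc ≤ X false false false true + Y false false false true + dc := by
    have := e false false true
    rcases min_choice (X false false true true - X false false false true)
      (Y false false true true - Y false false false true) with h | h <;> rw [edc, h] <;>
    linarith [hX.cx false false, hY.cx false false]
  obtain ⟨ha, hb, hc, h0, ⟨a1, a2, a3⟩, ⟨b1, b2⟩, ⟨b3, b4⟩, ⟨b5, b6⟩, c0, ⟨c1, c2, c3⟩, d1, d2, d3⟩ :=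
    core2 hab hac hbc Ua Ub Uc da db dc dab dac dba dbc dca dcb
    (X false false false true + Y false false false true)
    (eUa ▸ le_min l1 (by linarith)) (eUa ▸ le_min l2 (by linarith))
    (eUb ▸ le_min l3 (by linarith)) (eUb ▸ le_min l4 (by linarith))
    (eUc ▸ le_min l5 (by linarith)) (eUc ▸ le_min l6 (by linarith))
    s1 s2 s3 s4 s5 s6 k1 (by linarith) k3 (by linarith) (by linarith) (by linarith) i1 i2 i3
  have mle : ∀ {t u v : ℝ}, t = min u v → t ≤ u ∧ t ≤ v := fun h =>
    ⟨h ▸ min_le_left _ _, h ▸ min_le_right _ _⟩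
  obtain ⟨f1, f2⟩ := mle eda
  obtain ⟨f3, f4⟩ := mle edb
  obtain ⟨f5, f6⟩ := mle edc
  obtain ⟨g1, g2⟩ := mle edab
  obtain ⟨g3, g4⟩ := mle edac
  obtain ⟨g5, g6⟩ := mle edba
  obtain ⟨g7, g8⟩ := mle edbc
  obtain ⟨g9, g10⟩ := mle edca
  obtain ⟨g11, g12⟩ := mle edcb
  obtain ⟨j1, j2⟩ := mle ec3
  obtain ⟨j3, j4⟩ := mle eb3
  obtain ⟨j5, j6⟩ := mle ea3
  have p1 : hab ≤ hM := by
    have : 0 ≤ hM - hab := ec3 ▸ le_min (by linarith [hX.mc]) (by linarith [hY.mc])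
    linarith
  have p2 : hac ≤ hM := by
    have : 0 ≤ hM - hac := eb3 ▸ le_min (by linarith [hX.mb]) (by linarith [hY.mb])
    linarith
  have p3 : hbc ≤ hM := by
    have : 0 ≤ hM - hbc := ea3 ▸ le_min (by linarith [hX.ma]) (by linarith [hY.ma])
    linarith
  have e111 := e true true true
  have o1 : hab ≤ X true true false true + Y true true false true - X true true false false := by
    have := e true true false
    have := hX.cx true true
    have := hY.cx true true
    rcases min_choice (X true true true true - X true true false true)
      (Y true true true true - Y true true false true) with h | h <;> rw [h] at ec3 <;> linarith
  have o2 : hac ≤ X true false true true + Y true false true true - X true false true false := by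
    have := e true false true
    have := hX.bx true true
    have := hY.bx true true
    rcases min_choice (X true true true true - X true false true true)
      (Y true true true true - Y true false true true) with h | h <;> rw [h] at eb3 <;> linarith
  have o3 : hbc ≤ X false true true true + Y false true true true - X false true true false := by
    have := e false true true
    have := hX.ax true true
    have := hY.ax true true
    rcases min_choice (X true true true true - X false true true true)
      (Y true true true true - Y false true true true) with h | h <;> rw [h] at ea3 <;> linarith
  refine ⟨fun p q r => match p, q, r with
    | true, true, true => hM
    | true, true, false => hab
    | true, false, true => hac
    | false, true, true => hbc
    | true, false, false => ha
    | false, true, false => hb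
    | false, false, true => hc
    | false, false, false => h0, eM, ⟨p3, p2, p1⟩, ?_, ?_, ?_, ?_, ?_, ?_, ?_, ?_, ?_, ?_⟩
  · rintro (_ | _) <;> dsimp only <;> linarith
  · rintro (_ | _) <;> dsimp only <;> linarith
  · rintro (_ | _) <;> dsimp only <;> linarith
  · rintro (_ | _) (_ | _) (_ | _) <;> dsimp only <;> linarith
  all_goals rintro (_ | _) (_ | _) <;> dsimp only <;> linarith

/-- Elemental polymatroid inequalities on five elements, in bit notation. -/
structure S5_s11 (G : Bool → Bool → Bool → Bool → Bool → ℝ) : Prop where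
  zero : G false false false false false = 0
  ma : G false true true true true ≤ G true true true true true
  mb : G true false true true true ≤ G true true true true true
  mc : G true true false true true ≤ G true true true true true
  mx : G true true true false true ≤ G true true true true true
  my : G true true true true false ≤ G true true true true true
  ab : ∀ r s t, G true true r s t + G false false r s t ≤ G true false r s t + G false true r s t
  ac : ∀ q s t, G true q true s t + G false q false s t ≤ G true q false s t + G false q true s t
  bc : ∀ p s t, G p true true s t + G p false false s t ≤ G p true false s t + G p false true s t
  ax : ∀ q r t, G true q r true t + G false q r false t ≤ G true q r false t + G false q r true t
  bx : ∀ p r t, G p true r true t + G p false r false t ≤ G p true r false t + G p false r true t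
  cx : ∀ p q t, G p q true true t + G p q false false t ≤ G p q true false t + G p q false true t
  ay : ∀ q r s, G true q r s true + G false q r s false ≤ G true q r s false + G false q r s true
  bY : ∀ p r s, G p true r s true + G p false r s false ≤ G p true r s false + G p false r s true
  cy : ∀ p q s, G p q true s true + G p q false s false ≤ G p q true s false + G p q false s true
  xy : ∀ p q r, G p q r true true + G p q r false false ≤ G p q r true false + G p q r false true

theorem S5_s11.swapxy {G : Bool → Bool → Bool → Bool → Bool → ℝ} (h : S5_s11 G) :
    S5_s11 (fun p q r s t => G p q r t s) where
  zero := h.zero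
  ma := h.ma
  mb := h.mb
  mc := h.mc
  mx := h.my
  my := h.mx
  ab r s t := h.ab r t s
  ac r s t := h.ac r t s
  bc r s t := h.bc r t s
  ax := h.ay
  bx := h.bY
  cx := h.cy
  ay := h.ax
  bY := h.bx
  cy := h.cx
  xy p q r := by linarith [h.xy p q r]

/-- The common extension in bit form. -/
def glue (X Y : Bool → Bool → Bool → Bool → ℝ) (H : Bool → Bool → Bool → ℝ)
    (p q r s t : Bool) : ℝ :=
  if t then (if s then H p q r else Y p q r true) else X p q r s

theorem core5 {X Y : Bool → Bool → Bool → Bool → ℝ} (hX : S4_s11 X) (hY : S4_s11 Y)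
    (e : ∀ p q r, X p q r false = Y p q r false) (Q1 : QAll X Y) (Q2 : QAll Y X) :
    ∃ H : Bool → Bool → Bool → ℝ, S5_s11 (glue X Y H) ∧
      H true true true = X true true true true + Y true true true true - X true true true false := by
  obtain ⟨H, h1, ⟨h2, h3, h4⟩, h5, h6, h7, h8, h9, h10, h11, h12, h13, h14⟩ := core hX hY e Q1 Q2
  refine ⟨H, ?_, h1⟩
  constructor
  · simpa [glue] using hX.zero
  · simpa [glue] using h2
  · simpa [glue] using h3
  · simpa [glue] using h4
  · simp only [glue, if_true, if_false, Bool.false_eq_true]; linarith [hX.mx]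
  · simp only [glue, if_true, if_false, Bool.false_eq_true]; linarith [hY.mx, e true true true]
  · rintro r (_ | _) (_ | _) <;> simp only [glue, if_true, if_false, Bool.false_eq_true] <;>
      linarith [hX.ab r true, hX.ab r false, hY.ab r true, h5 r]
  · rintro r (_ | _) (_ | _) <;> simp only [glue, if_true, if_false, Bool.false_eq_true] <;>
      linarith [hX.ac r true, hX.ac r false, hY.ac r true, h6 r]
  · rintro r (_ | _) (_ | _) <;> simp only [glue, if_true, if_false, Bool.false_eq_true] <;>
      linarith [hX.bc r true, hX.bc r false, hY.bc r true, h7 r]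
  · rintro q r (_ | _) <;> simp only [glue, if_true, if_false, Bool.false_eq_true] <;>
      linarith [hX.ax q r, h9 q r, h10 q r]
  · rintro q r (_ | _) <;> simp only [glue, if_true, if_false, Bool.false_eq_true] <;>
      linarith [hX.bx q r, h11 q r, h12 q r]
  · rintro q r (_ | _) <;> simp only [glue, if_true, if_false, Bool.false_eq_true] <;>
      linarith [hX.cx q r, h13 q r, h14 q r]
  · rintro q r (_ | _) <;> simp only [glue, if_true, if_false, Bool.false_eq_true] <;>
      linarith [hY.ax q r, h9 q r, h10 q r, e true q r, e false q r]
  · rintro q r (_ | _) <;> simp only [glue, if_true, if_false, Bool.false_eq_true] <;>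
      linarith [hY.bx q r, h11 q r, h12 q r, e q true r, e q false r]
  · rintro q r (_ | _) <;> simp only [glue, if_true, if_false, Bool.false_eq_true] <;>
      linarith [hY.cx q r, h13 q r, h14 q r, e q r true, e q r false]
  · intro p q r
    simp only [glue, if_true, if_false, Bool.false_eq_true]
    linarith [h8 p q r]

section sets

/-- The subset of `{a,b,c,x,y}` with given indicator bits. -/
def bs (a b c x y : α) (p q r s t : Bool) : Finset α :=
  (if p then {a} else ∅) ∪ (if q then {b} else ∅) ∪ (if r then {c} else ∅) ∪
    (if s then {x} else ∅) ∪ (if t then {y} else ∅)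

theorem mem_bs (a b c x y z : α) (p q r s t : Bool) : z ∈ bs a b c x y p q r s t ↔
    (p = true ∧ z = a) ∨ (q = true ∧ z = b) ∨ (r = true ∧ z = c) ∨ (s = true ∧ z = x) ∨
      (t = true ∧ z = y) := by
  cases p <;> cases q <;> cases r <;> cases s <;> cases t <;> simp [bs]

theorem bs_sub (a b c x y : α) (p q r s t : Bool) : bs a b c x y p q r s t ⊆ {a, b, c, x, y} := by
  intro z hz
  rw [mem_bs] at hz
  simp only [mem_insert, mem_singleton]
  tauto

theorem bs_sub4 (a b c x y : α) (p q r s : Bool) : bs a b c x y p q r s false ⊆ {a, b, c, x} := by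
  intro z hz
  rw [mem_bs] at hz
  simp only [mem_insert, mem_singleton]
  simp at hz
  tauto

theorem bs_sub4' (a b c x y : α) (p q r s : Bool) : bs a b c x y p q r false s ⊆ {a, b, c, y} := by
  intro z hz
  rw [mem_bs] at hz
  simp only [mem_insert, mem_singleton]
  simp at hz
  tauto

theorem bs_sub3 (a b c x y : α) (p q r : Bool) : bs a b c x y p q r false false ⊆ {a, b, c} := by
  intro z hz
  rw [mem_bs] at hz
  simp only [mem_insert, mem_singleton]
  simp at hz
  tauto

theorem bs_or (a b c x y : α) (p q r s t p' q' r' s' t' : Bool) :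
    bs a b c x y p q r s t ∪ bs a b c x y p' q' r' s' t' =
      bs a b c x y (p || p') (q || q') (r || r') (s || s') (t || t') := by
  ext z
  simp only [mem_union, mem_bs, Bool.or_eq_true, or_and_right]
  exact iff_of_eq (by ac_rfl)

theorem bs_and {a b c x y : α} (hnd : ([a, b, c, x, y] : List α).Nodup)
    (p q r s t p' q' r' s' t' : Bool) :
    bs a b c x y p q r s t ∩ bs a b c x y p' q' r' s' t' =
      bs a b c x y (p && p') (q && q') (r && r') (s && s') (t && t') := by
  ext z
  simp only [mem_inter, mem_bs, Bool.and_eq_true]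
  simp at hnd
  obtain ⟨⟨h1, h2, h3, h4⟩, ⟨h5, h6, h7⟩, ⟨h8, h9⟩, h10⟩ := hnd
  constructor
  · rintro ⟨h | h | h | h | h, h' | h' | h' | h' | h'⟩ <;> obtain ⟨u, rfl⟩ := h <;>
      obtain ⟨u', v'⟩ := h' <;> first | exact absurd v' (by assumption) |
        exact absurd v'.symm (by assumption) | simp [u, u']
  · tauto

theorem bs_self {a b c x y : α} {A : Finset α} (hA : A ⊆ {a, b, c, x, y}) :
    bs a b c x y (decide (a ∈ A)) (decide (b ∈ A)) (decide (c ∈ A)) (decide (x ∈ A))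
      (decide (y ∈ A)) = A := by
  ext z
  simp only [mem_bs, decide_eq_true_eq]
  constructor
  · rintro (h | h | h | h | h) <;> obtain ⟨u, rfl⟩ := h <;> exact u
  · intro hz
    have := hA hz
    simp only [mem_insert, mem_singleton] at this
    rcases this with rfl | rfl | rfl | rfl | rfl <;> simp [hz]

theorem bsub {a b c x y : α} (hnd : ([a, b, c, x, y] : List α).Nodup) {M : Finset α}
    {g : Finset α → ℝ} (hg : IsPolymatroid M g) {p q r s t p' q' r' s' t' : Bool}
    (h1 : bs a b c x y p q r s t ⊆ M) (h2 : bs a b c x y p' q' r' s' t' ⊆ M) :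
    g (bs a b c x y (p || p') (q || q') (r || r') (s || s') (t || t')) +
      g (bs a b c x y (p && p') (q && q') (r && r') (s && s') (t && t')) ≤
    g (bs a b c x y p q r s t) + g (bs a b c x y p' q' r' s' t') := by
  rw [← bs_or, ← bs_and hnd]
  exact hg.2.2.2 _ _ h1 h2

theorem bmono {a b c x y : α} {M : Finset α}
    {g : Finset α → ℝ} (hg : IsPolymatroid M g) {p q r s t : Bool} (p' q' r' s' t' : Bool)
    (h1 : bs a b c x y (p || p') (q || q') (r || r') (s || s') (t || t') ⊆ M) :
    g (bs a b c x y p q r s t) ≤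
    g (bs a b c x y (p || p') (q || q') (r || r') (s || s') (t || t')) := by
  refine hg.2.2.1 _ _ ?_ h1
  rw [← bs_or]
  exact subset_union_left

theorem bs_zero (a b c x y : α) : bs a b c x y false false false false false = ∅ := by simp [bs]

theorem toS5 {a b c x y : α} (hnd : ([a, b, c, x, y] : List α).Nodup) {M : Finset α}
    (hM : M = {a, b, c, x, y}) {g : Finset α → ℝ} (hg : IsPolymatroid M g) :
    S5_s11 (fun p q r s t => g (bs a b c x y p q r s t)) := by
  subst hM
  have S := fun p q r s t p' q' r' s' t' => bsub hnd hg (bs_sub a b c x y p q r s t)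
    (bs_sub a b c x y p' q' r' s' t')
  constructor
  · rw [bs_zero]; exact hg.1
  · exact bmono hg true true true true true (bs_sub ..)
  · exact bmono hg true true true true true (bs_sub ..)
  · exact bmono hg true true true true true (bs_sub ..)
  · exact bmono hg true true true true true (bs_sub ..)
  · exact bmono hg true true true true true (bs_sub ..)
  · intro r s t; simpa using S true false r s t false true r s t
  · intro r s t; simpa using S true r false s t false r true s t
  · intro r s t; simpa using S r true false s t r false true s t
  · intro q r t; simpa using S true q r false t false q r true t
  · intro q r t; simpa using S q true r false t q false r true t
  · intro q r t; simpa using S q r true false t q r false true t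
  · intro q r t; simpa using S true q r t false false q r t true
  · intro q r t; simpa using S q true r t false q false r t true
  · intro q r t; simpa using S q r true t false q r false t true
  · intro q r t; simpa using S q r t true false q r t false true

theorem toS4 {a b c x y : α} (hnd : ([a, b, c, x, y] : List α).Nodup)
    {g : Finset α → ℝ} (hg : IsPolymatroid {a, b, c, x} g) :
    S4_s11 (fun p q r s => g (bs a b c x y p q r s false)) := by
  have S := fun p q r s p' q' r' s' => bsub hnd hg (bs_sub4 a b c x y p q r s)
    (bs_sub4 a b c x y p' q' r' s')
  constructor
  · rw [bs_zero]; exact hg.1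
  · exact bmono hg true true true true false (bs_sub4 ..)
  · exact bmono hg true true true true false (bs_sub4 ..)
  · exact bmono hg true true true true false (bs_sub4 ..)
  · exact bmono hg true true true true false (bs_sub4 ..)
  · intro r s; simpa using S true false r s false true r s
  · intro r s; simpa using S true r false s false r true s
  · intro r s; simpa using S r true false s r false true s
  · intro q r; simpa using S true q r false false q r true
  · intro q r; simpa using S q true r false q false r true
  · intro q r; simpa using S q r true false q r false true

theorem bs_swap (a b c x y : α) (p q r s t : Bool) :
    bs a b c y x p q r t s = bs a b c x y p q r s t := by
  ext z; simp only [mem_bs]; tauto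

theorem poly_of_local {M : Finset α} {f : Finset α → ℝ} (h0 : f ∅ = 0)
    (hm : ∀ i ∈ M, f (M.erase i) ≤ f M)
    (hl : ∀ A ⊆ M, ∀ i ∈ M, ∀ j ∈ M, i ∉ A → j ∉ A → i ≠ j →
      f (insert i (insert j A)) + f A ≤ f (insert i A) + f (insert j A)) :
    IsPolymatroid M f := by
  -- one element against a set
  have s1 : ∀ D A : Finset α, A ⊆ M → D ⊆ M → Disjoint D A → ∀ i ∈ M, i ∉ A → i ∉ D →
      f (insert i (D ∪ A)) + f A ≤ f (insert i A) + f (D ∪ A) := by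
    intro D
    induction D using Finset.induction_on with
    | empty => intro A _ _ _ i _ _ _; simp
    | insert d D hd ih =>
      intro A hA hD hdis i hi hiA hiD
      rw [insert_subset_iff] at hD
      rw [disjoint_insert_left] at hdis
      rw [mem_insert, not_or] at hiD
      have h1 := ih A hA hD.2 hdis.2 i hi hiA hiD.2
      have h2 := hl (D ∪ A) (union_subset hD.2 hA) i hi d hD.1
        (by simp [hiA, hiD.2]) (by simp [hd, hdis.1]) hiD.1
      rw [insert_union]
      linarith
  have s2 : ∀ C B A : Finset α, A ⊆ B → B ⊆ M → C ⊆ M → Disjoint C B →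
      f (C ∪ B) + f A ≤ f (C ∪ A) + f B := by
    intro C
    induction C using Finset.induction_on with
    | empty => intro B A _ _ _ _; simp [add_comm]
    | insert d C hd ih =>
      intro B A hAB hB hC hdis
      rw [insert_subset_iff] at hC
      rw [disjoint_insert_left] at hdis
      have h1 := ih B A hAB hB hC.2 hdis.2
      have h2 := s1 (B \ A) (C ∪ A) (union_subset hC.2 (hAB.trans hB)) (sdiff_subset.trans hB)
        (by
          rw [disjoint_union_right]
          exact ⟨(hdis.2.mono_right sdiff_subset).symm, sdiff_disjoint⟩) d hC.1
        (by simp only [mem_union, not_or]; exact ⟨hd, fun h => hdis.1 (hAB h)⟩)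
        (fun h => hdis.1 (sdiff_subset h))
      have h3 : B \ A ∪ (C ∪ A) = C ∪ B := by
        ext z
        have := @hAB z
        simp only [mem_union, mem_sdiff]
        tauto
      rw [h3] at h2
      rw [insert_union, insert_union]
      linarith
  have sub : ∀ A B, A ⊆ M → B ⊆ M → f (A ∪ B) + f (A ∩ B) ≤ f A + f B := by
    intro A B hA hB
    have h := s2 (A \ B) B (A ∩ B) inter_subset_right hB (sdiff_subset.trans hA) sdiff_disjoint
    rwa [sdiff_union_self_eq_union, sdiff_union_inter] at h
  have step : ∀ A, ∀ i ∈ M, A ⊆ M → i ∉ A → f A ≤ f (insert i A) := by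
    intro A i hi hA hiA
    have h := sub (insert i A) (M.erase i) (insert_subset hi hA) (erase_subset _ _)
    have h1 : insert i A ∪ M.erase i = M := by
      ext z
      have := @hA z
      simp only [mem_union, mem_insert, mem_erase]
      by_cases hz : z = i
      · simp [hz, hi]
      · simp only [hz]; tauto
    have h2 : insert i A ∩ M.erase i = A := by
      ext z
      have := @hA z
      simp only [mem_inter, mem_insert, mem_erase]
      by_cases hz : z = i
      · simp [hz, hiA]
      · simp only [hz]; tauto
    rw [h1, h2] at h
    linarith [hm i hi]
  have mono' : ∀ D A : Finset α, A ⊆ M → D ⊆ M → f A ≤ f (D ∪ A) := by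
    intro D
    induction D using Finset.induction_on with
    | empty => intro A _ _; simp
    | insert d D hd ih =>
      intro A hA hD
      rw [insert_subset_iff] at hD
      have h1 := ih A hA hD.2
      rw [insert_union]
      by_cases h : d ∈ D ∪ A
      · rwa [insert_eq_of_mem h]
      · exact h1.trans (step _ d hD.1 (union_subset hD.2 hA) h)
  have mono : ∀ A B, A ⊆ B → B ⊆ M → f A ≤ f B := by
    intro A B hAB hB
    have := mono' B A (hAB.trans hB) hB
    rwa [union_eq_left.2 hAB] at this
  exact ⟨h0, fun A hA => h0 ▸ mono ∅ A (empty_subset _) hA, mono, sub⟩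

theorem ofS5 {a b c x y : α} (hnd : ([a, b, c, x, y] : List α).Nodup)
    {G : Bool → Bool → Bool → Bool → Bool → ℝ} (h : S5_s11 G) :
    IsPolymatroid {a, b, c, x, y} (fun A : Finset α => G (decide (a ∈ A)) (decide (b ∈ A))
      (decide (c ∈ A)) (decide (x ∈ A)) (decide (y ∈ A))) := by
  simp at hnd
  obtain ⟨⟨h1, h2, h3, h4⟩, ⟨h5, h6, h7⟩, ⟨h8, h9⟩, h10⟩ := hnd
  have k1 := Ne.symm h1
  have k2 := Ne.symm h2
  have k3 := Ne.symm h3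
  have k4 := Ne.symm h4
  have k5 := Ne.symm h5
  have k6 := Ne.symm h6
  have k7 := Ne.symm h7
  have k8 := Ne.symm h8
  have k9 := Ne.symm h9
  have k10 := Ne.symm h10
  apply poly_of_local
  · simpa using h.zero
  · intro i hi
    simp only [mem_insert, mem_singleton] at hi
    rcases hi with hi | hi | hi | hi | hi <;> rw [hi] <;> clear hi
    · simpa [*] using h.ma
    · simpa [*] using h.mb
    · simpa [*] using h.mc
    · simpa [*] using h.mx
    · simpa [*] using h.my
  · intro A _ i hi j hj hiA hjA hij
    simp only [mem_insert, mem_singleton] at hi hj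
    have f1 := h.ab (decide (c ∈ A)) (decide (x ∈ A)) (decide (y ∈ A))
    have f2 := h.ac (decide (b ∈ A)) (decide (x ∈ A)) (decide (y ∈ A))
    have f3 := h.bc (decide (a ∈ A)) (decide (x ∈ A)) (decide (y ∈ A))
    have f4 := h.ax (decide (b ∈ A)) (decide (c ∈ A)) (decide (y ∈ A))
    have f5 := h.bx (decide (a ∈ A)) (decide (c ∈ A)) (decide (y ∈ A))
    have f6 := h.cx (decide (a ∈ A)) (decide (b ∈ A)) (decide (y ∈ A))
    have f7 := h.ay (decide (b ∈ A)) (decide (c ∈ A)) (decide (x ∈ A))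
    have f8 := h.bY (decide (a ∈ A)) (decide (c ∈ A)) (decide (x ∈ A))
    have f9 := h.cy (decide (a ∈ A)) (decide (b ∈ A)) (decide (x ∈ A))
    have f10 := h.xy (decide (a ∈ A)) (decide (b ∈ A)) (decide (c ∈ A))
    rcases hi with hi | hi | hi | hi | hi <;> rcases hj with hj | hj | hj | hj | hj <;>
    first
    | exact absurd (hi.trans hj.symm) hij
    | (rw [hi] at hiA ⊢
       rw [hj] at hjA ⊢
       simp only [mem_insert, hiA, hjA, h1, h2, h3, h4, h5, h6, h7, h8, h9, h10, k1, k2, k3, k4, k5,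
         k6, k7, k8, k9, k10, or_true, false_or, or_false, decide_true, decide_false]
       linarith)

theorem NK {G : Bool → Bool → Bool → Bool → Bool → ℝ} (h : S5_s11 G)
    (hz : G true true true true true = G true true true true false + G true true true false true
      - G true true true false false) :
    Qk (fun p q r s => G p q r s false) (fun p q r s => G p q r false s) := by
  have hz0 := h.zero
  rintro (_ | _) (_ | _) <;> simp only [if_true, if_false, Bool.false_eq_true] <;>
  linarith [h.ab false true true, h.ac false true true, h.bc false true true,
    h.ax true false true, h.ay true false true, h.ax false true true, h.ay false true true,
    h.ax true true true, h.ay true true true, h.ax false false true, h.ay false false true,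
    h.bx true false true, h.bY true false true, h.bx true true true, h.bY true true true,
    h.bx false false true, h.bY false false true, h.bx false true true, h.bY false true true,
    h.cx true false true, h.cy true false true, h.cx true true true, h.cy true true true,
    h.cx false false true, h.cy false false true, h.cx false true true, h.cy false true true,
    h.ab true true true, h.ac true true true, h.bc true true true,
    h.xy true false false, h.xy false true false, h.xy false false true, h.xy false false false,
    h.xy true true false, h.xy true false true, h.xy false true true]

theorem bridge (a b c x y : α) (f fx fy : Finset α → ℝ) (h0 : f ∅ = 0)
    (hresx : ∀ A ⊆ ({a, b, c} : Finset α), fx A = f A)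
    (hresy : ∀ A ⊆ ({a, b, c} : Finset α), fy A = f A) :
    Qk (fun p q r s => fx (bs a b c x y p q r s false))
      (fun p q r s => fy (bs a b c x y p q r false s)) ↔
    ∀ s1 s2 : Bool, pmi f {b} {c} ∅ ≤ adLHS fx fy x y b c a s1 s2 := by
  have hx : ∀ p q r, fx (bs a b c x y p q r false false) = f (bs a b c x y p q r false false) :=
    fun p q r => hresx _ (bs_sub3 ..)
  have hy : ∀ p q r, fy (bs a b c x y p q r false false) = f (bs a b c x y p q r false false) :=
    fun p q r => hresy _ (bs_sub3 ..)
  have hz : f (bs a b c x y false false false false false) = 0 := by rw [bs_zero, h0]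
  have E0 : (∅ : Finset α) = bs a b c x y false false false false false := (bs_zero ..).symm
  have E1 : ({b} : Finset α) = bs a b c x y false true false false false := by simp [bs]
  have E2 : ({c} : Finset α) = bs a b c x y false false true false false := by simp [bs]
  have E3 : ({a} : Finset α) = bs a b c x y true false false false false := by simp [bs]
  have E4 : ({x} : Finset α) = bs a b c x y false false false true false := by simp [bs]
  have E5 : ({y} : Finset α) = bs a b c x y false false false false true := by simp [bs]
  have E6 : ({b, a} : Finset α) = bs a b c x y true true false false false := by
    ext z; simp [mem_bs]; tauto
  have E7 : ({b, c} : Finset α) = bs a b c x y false true true false false := by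
    ext z; simp [mem_bs]
  unfold Qk
  refine forall_congr' fun s1 => forall_congr' fun s2 => ?_
  simp only [adLHS, pmi, E6, E7]
  simp only [E0, E1, E2, E3, E4, E5]
  simp only [bs_or, Bool.or_false, Bool.or_true, hx, hy, hz]
  cases s1 <;> cases s2 <;> simp only [if_true, if_false, Bool.false_eq_true] <;>
    constructor <;> intro h <;> linarith

end sets


theorem nodup_of_card (l : List α) (h : l.toFinset.card = l.length) : l.Nodup :=
  Multiset.coe_nodup.1 (Multiset.toFinset_card_eq_card_iff_nodup.1 (by simpa using h))

theorem bs_acb (a b c x y : α) (p q r s t : Bool) :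
    bs a c b x y p q r s t = bs a b c x y p r q s t := by
  ext z; simp only [mem_bs]
  exact iff_of_eq (by ac_rfl)

theorem bs_bac (a b c x y : α) (p q r s t : Bool) :
    bs b a c x y p q r s t = bs a b c x y q p r s t := by
  ext z; simp only [mem_bs]
  exact iff_of_eq (by ac_rfl)

theorem bs_bca (a b c x y : α) (p q r s t : Bool) :
    bs b c a x y p q r s t = bs a b c x y r p q s t := by
  ext z; simp only [mem_bs]
  exact iff_of_eq (by ac_rfl)

theorem bs_cab (a b c x y : α) (p q r s t : Bool) :
    bs c a b x y p q r s t = bs a b c x y q r p s t := by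
  ext z; simp only [mem_bs]
  exact iff_of_eq (by ac_rfl)

theorem bs_cba (a b c x y : α) (p q r s t : Bool) :
    bs c b a x y p q r s t = bs a b c x y r q p s t := by
  ext z; simp only [mem_bs]
  exact iff_of_eq (by ac_rfl)

set_option maxHeartbeats 2000000 in
/-- `f_x` and `f_y` are adhesive iff inequality (3) holds for all
permutations of `a,b,c`, both orders of `(x,f_x)` and `(y,f_y)`, and all four
choices of the braced alternatives. -/
theorem statement_11 (a b c x y : α) (hnd : ([a, b, c, x, y] : List α).Nodup)
    (f fx fy : Finset α → ℝ)
    (hf : IsPolymatroid {a, b, c} f)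
    (hfx : IsPolymatroid {a, b, c, x} fx) (hfy : IsPolymatroid {a, b, c, y} fy)
    (hresx : ∀ A ⊆ ({a, b, c} : Finset α), fx A = f A)
    (hresy : ∀ A ⊆ ({a, b, c} : Finset α), fy A = f A) :
    Adhesive {a, b, c} {x} {y} fx fy ↔
      ∀ a' b' c' : α, ({a', b', c'} : Finset α) = {a, b, c} →
        ∀ s1 s2 : Bool,
          pmi f {a'} {b'} ∅ ≤ adLHS fx fy x y a' b' c' s1 s2 ∧
          pmi f {a'} {b'} ∅ ≤ adLHS fy fx y x a' b' c' s1 s2 := by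
  have hset : ∀ u v w : α, ({u, v, w} : Finset α) = {a, b, c} →
      ([u, v, w, x, y] : List α).Nodup ∧ ({u, v, w, x, y} : Finset α) = {a, b, c, x, y} := by
    intro u v w huvw
    have hs : ({u, v, w, x, y} : Finset α) = {a, b, c, x, y} := by
      have e1 : ∀ u v w : α, ({u, v, w, x, y} : Finset α) = {u, v, w} ∪ {x, y} := by
        intro u v w; ext z; simp; tauto
      rw [e1, e1, huvw]
    have c1 : ([u, v, w, x, y] : List α).toFinset = ([a, b, c, x, y] : List α).toFinset := by
      simpa using hs
    have c2 := congrArg Finset.card c1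
    rw [List.toFinset_card_of_nodup hnd] at c2
    refine ⟨?_, hs⟩
    exact nodup_of_card _ c2
  constructor
  · rintro ⟨g, hg, hgx, hgy, hmod⟩ a' b' c' habc
    have hbr : ({c', a', b'} : Finset α) = {a, b, c} := by
      rw [← habc]; ext z; simp; tauto
    obtain ⟨nd, hs⟩ := hset c' a' b' hbr
    have hM : ({a, b, c} ∪ {x} ∪ {y} : Finset α) = {c', a', b', x, y} := by
      rw [hs]; ext z; simp <;> tauto
    have h5 := toS5 nd hM hg
    have top : ∀ s t, bs c' a' b' x y true true true s t =
        {a, b, c} ∪ (if s then {x} else ∅) ∪ (if t then {y} else ∅) := by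
      intro s t
      rw [← hbr]
      ext z
      cases s <;> cases t <;> simp [bs, or_assoc]
    have hz : g (bs c' a' b' x y true true true true true) =
        g (bs c' a' b' x y true true true true false) + g (bs c' a' b' x y true true true false true)
          - g (bs c' a' b' x y true true true false false) := by
      have m : g ({x} ∪ {a, b, c}) + g ({y} ∪ {a, b, c}) - g ({x} ∪ {y} ∪ {a, b, c})
        - g {a, b, c} = 0 := hmod
      have m1 : ({x} ∪ {a, b, c} : Finset α) = bs c' a' b' x y true true true true false := by
        rw [top]; ext z; simp; tauto
      have m2 : ({y} ∪ {a, b, c} : Finset α) = bs c' a' b' x y true true true false true := by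
        rw [top]; ext z; simp; tauto
      have m3 : ({x} ∪ {y} ∪ {a, b, c} : Finset α) = bs c' a' b' x y true true true true true := by
        rw [top]; ext z; simp; tauto
      have m4 : ({a, b, c} : Finset α) = bs c' a' b' x y true true true false false := by
        rw [top]; ext z; simp
      rw [m1, m2, m3, m4] at m
      linarith
    have gx : ∀ p q r s, g (bs c' a' b' x y p q r s false) = fx (bs c' a' b' x y p q r s false) := by
      intro p q r s
      refine hgx _ ((bs_sub4 ..).trans ?_)
      rw [← hbr]; intro z; simp <;> tauto
    have gy : ∀ p q r s, g (bs c' a' b' x y p q r false s) = fy (bs c' a' b' x y p q r false s) := by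
      intro p q r s
      refine hgy _ ((bs_sub4' ..).trans ?_)
      rw [← hbr]; intro z; simp <;> tauto
    have n1 := NK h5 hz
    have n2 := NK h5.swapxy (by linarith)
    simp only [gx, gy] at n1 n2
    have r1 := (bridge c' a' b' x y f fx fy hf.1 (by rwa [hbr]) (by rwa [hbr])).1 n1
    have r2 := (bridge c' a' b' y x f fy fx hf.1 (by rwa [hbr]) (by rwa [hbr])).1
      (by simpa only [bs_swap] using n2)
    exact fun s1 s2 => ⟨r1 s1 s2, r2 s1 s2⟩
  · intro hQ
    have q1 : ∀ u v w : α, ({u, v, w} : Finset α) = {a, b, c} →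
        Qk (fun p q r s => fx (bs u v w x y p q r s false))
          (fun p q r s => fy (bs u v w x y p q r false s)) ∧
        Qk (fun p q r s => fy (bs u v w x y p q r false s))
          (fun p q r s => fx (bs u v w x y p q r s false)) := by
      intro u v w h
      have h' : ({v, w, u} : Finset α) = {a, b, c} := by
        rw [← h]; ext z; simp; tauto
      refine ⟨(bridge u v w x y f fx fy hf.1 (by rwa [h]) (by rwa [h])).2
        fun s1 s2 => (hQ v w u h' s1 s2).1, ?_⟩
      have := (bridge u v w y x f fy fx hf.1 (by rwa [h]) (by rwa [h])).2
        fun s1 s2 => (hQ v w u h' s1 s2).2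
      simpa only [bs_swap] using this
    have w1 := q1 a b c rfl
    have w2 := q1 a c b (by ext z; simp; tauto)
    have w3 := q1 b a c (by ext z; simp; tauto)
    have w4 := q1 b c a (by ext z; simp; tauto)
    have w5 := q1 c a b (by ext z; simp; tauto)
    have w6 := q1 c b a (by ext z; simp; tauto)
    simp only [bs_acb a b c] at w2
    simp only [bs_bac a b c] at w3
    simp only [bs_bca a b c] at w4
    simp only [bs_cab a b c] at w5
    simp only [bs_cba a b c] at w6
    have hX := toS4 hnd hfx
    have hY : S4_s11 (fun p q r s => fy (bs a b c x y p q r false s)) := by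
      have nd' : ([a, b, c, y, x] : List α).Nodup :=
        (List.Perm.nodup_iff (by
          exact ((List.Perm.swap y x []).cons c |>.cons b |>.cons a))).1 hnd
      simpa only [bs_swap] using toS4 nd' hfy
    have he : ∀ p q r, fx (bs a b c x y p q r false false) = fy (bs a b c x y p q r false false) :=
      fun p q r => by rw [hresx _ (bs_sub3 ..), hresy _ (bs_sub3 ..)]
    obtain ⟨H, h5, htop⟩ := core5 hX hY he ⟨w1.1, w2.1, w3.1, w4.1, w5.1, w6.1⟩
      ⟨w1.2, w2.2, w3.2, w4.2, w5.2, w6.2⟩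
    have hM : ({a, b, c} ∪ {x} ∪ {y} : Finset α) = {a, b, c, x, y} := by
      ext z; simp <;> tauto
    have hpoly := ofS5 hnd h5
    have hnd' := hnd
    simp at hnd'
    obtain ⟨⟨h1, h2, h3, h4⟩, ⟨h5', h6, h7⟩, ⟨h8, h9⟩, h10⟩ := hnd'
    have gx : ∀ A, A ⊆ ({a, b, c} ∪ {x} : Finset α) → glue (fun p q r s => fx (bs a b c x y p q r s false))
        (fun p q r s => fy (bs a b c x y p q r false s)) H (decide (a ∈ A)) (decide (b ∈ A))
        (decide (c ∈ A)) (decide (x ∈ A)) (decide (y ∈ A)) = fx A := by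
      intro A hA
      have hA' : A ⊆ {a, b, c, x, y} := by
        rw [← hM]; exact hA.trans subset_union_left
      have hy : y ∉ A := fun h => by
        have := hA h
        simp only [mem_union, mem_insert, mem_singleton] at this
        rcases this with (h | h | h) | h
        exacts [h4 h.symm, h7 h.symm, h9 h.symm, h10 h.symm]
      have := bs_self hA'
      simp only [hy, decide_false] at this ⊢
      simp only [glue, Bool.false_eq_true, if_false, this]
    have gy : ∀ A, A ⊆ ({a, b, c} ∪ {y} : Finset α) → glue (fun p q r s => fx (bs a b c x y p q r s false))
        (fun p q r s => fy (bs a b c x y p q r false s)) H (decide (a ∈ A)) (decide (b ∈ A))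
        (decide (c ∈ A)) (decide (x ∈ A)) (decide (y ∈ A)) = fy A := by
      intro A hA
      have hA' : A ⊆ {a, b, c, x, y} := by
        rw [← hM]; exact hA.trans (by intro z; simp; tauto)
      have hx : x ∉ A := fun h => by
        have := hA h
        simp only [mem_union, mem_insert, mem_singleton] at this
        rcases this with (h | h | h) | h
        exacts [h3 h.symm, h6 h.symm, h8 h.symm, h10 h]
      have := bs_self hA'
      by_cases hy : y ∈ A
      · simp only [hx, hy, decide_false, decide_true] at this ⊢
        simp only [glue, Bool.false_eq_true, if_false, if_true, this]
      · simp only [hx, hy, decide_false] at this ⊢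
        have e := he (decide (a ∈ A)) (decide (b ∈ A)) (decide (c ∈ A))
        rw [this] at e
        simp only [glue, Bool.false_eq_true, if_false, this, e]
    refine ⟨_, hM ▸ hpoly, gx, gy, ?_⟩
    unfold pmi
    have z1 := gx ({x} ∪ {a, b, c}) (by intro z; simp; tauto)
    have z2 := gy ({y} ∪ {a, b, c}) (by intro z; simp; tauto)
    have z3 := gx {a, b, c} (by intro z; simp; tauto)
    beta_reduce
    rw [z1, z2, z3]
    have b1 : ({x} ∪ {a, b, c} : Finset α) = bs a b c x y true true true true false := by
      ext z; simp [mem_bs]; tauto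
    have b2 : ({y} ∪ {a, b, c} : Finset α) = bs a b c x y true true true false true := by
      ext z; simp [mem_bs]; tauto
    have b3 : ({a, b, c} : Finset α) = bs a b c x y true true true false false := by
      ext z; simp [mem_bs]
    rw [b1, b2, b3]
    simp [mem_bs, glue]
    linarith
end
end

section
/- Let ξ_a, ξ_b, ξ_c, ξ_x, ξ_y be jointly distributed random variables each taking finitely many values. Then for each of the four choices in the two braced alternatives, the following Shannon entropy inequality holds: (a,x|c) + (a,b|x) + (a,b|y) + (c,y) + {(b,x|ac) or (b,y|ac)} + {(c,x|ab) or (c,y|ab)} ≥ (a,b). -/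
open Finset

noncomputable section

open scoped Classical

/-- Shannon entropy of the (finitely valued) random variable `g` on the finite
probability space `(Ω, p)`: `H(g) = −∑_v P[g = v]·log P[g = v]`, written as
`−∑_ω p(ω)·log P[g = g(ω)]`. -/
def entH {Ω β : Type*} [Fintype Ω] (p : Ω → ℝ) (g : Ω → β) : ℝ :=
  -∑ ω : Ω, p ω * Real.log (∑ ω' ∈ Finset.univ.filter (fun ω' => g ω' = g ω), p ω')

/-- Entropy of the joint marginal `ξ_A = (ξ_i : i ∈ A)`. -/
def margH {Ω S : Type*} [Fintype Ω] (p : Ω → ℝ) (ξ : Fin 5 → Ω → S)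
    (A : Finset (Fin 5)) : ℝ :=
  entH p (fun ω i => if i ∈ A then some (ξ i ω) else none)

/-- `(I,J|K) = H(ξ_{I∪K}) + H(ξ_{J∪K}) − H(ξ_{I∪J∪K}) − H(ξ_K)`. -/
def miH {Ω S : Type*} [Fintype Ω] (p : Ω → ℝ) (ξ : Fin 5 → Ω → S)
    (I J K : Finset (Fin 5)) : ℝ :=
  margH p ξ (I ∪ K) + margH p ξ (J ∪ K) - margH p ξ (I ∪ J ∪ K) - margH p ξ K

/-- Probability of the `g`-class of `ω`. -/
def clsP {Ω β : Type*} [Fintype Ω] (p : Ω → ℝ) (g : Ω → β) (ω : Ω) : ℝ :=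
  ∑ ω' : Ω, if g ω' = g ω then p ω' else 0

lemma entH_eq {Ω β : Type*} [Fintype Ω] (p : Ω → ℝ) (g : Ω → β) :
    entH p g = -∑ ω : Ω, p ω * Real.log (clsP p g ω) := by
  unfold entH clsP
  simp only [Finset.sum_filter]

lemma clsP_nonneg {Ω β : Type*} [Fintype Ω] {p : Ω → ℝ} (hp0 : ∀ ω, 0 ≤ p ω) (g : Ω → β)
    (ω : Ω) : 0 ≤ clsP p g ω :=
  Finset.sum_nonneg fun i _ => by split_ifs <;> simp [hp0]

lemma le_clsP {Ω β : Type*} [Fintype Ω] {p : Ω → ℝ} (hp0 : ∀ ω, 0 ≤ p ω) (g : Ω → β)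
    (ω : Ω) : p ω ≤ clsP p g ω := by
  have := Finset.single_le_sum (f := fun ω' => if g ω' = g ω then p ω' else 0)
    (fun i _ => by split_ifs <;> simp [hp0]) (Finset.mem_univ ω)
  simpa [clsP] using this

lemma clsP_congr {Ω β : Type*} [Fintype Ω] (p : Ω → ℝ) (g : Ω → β) {ω ω' : Ω}
    (h : g ω = g ω') : clsP p g ω = clsP p g ω' := by
  unfold clsP; rw [h]

lemma mul_inv_le_one_real (x : ℝ) : x * x⁻¹ ≤ 1 := by
  by_cases h : x = 0
  · simp [h]
  · simp [h]

/-- Submodularity. -/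
lemma entH_submod {Ω α β γ δ : Type*} [Fintype Ω] {p : Ω → ℝ}
    (hp0 : ∀ ω, 0 ≤ p ω) (hp1 : ∑ ω : Ω, p ω = 1)
    (u : Ω → α) (v : Ω → β) (w : Ω → γ) (z : Ω → δ)
    (hw : ∀ i j, w i = w j ↔ u i = u j ∧ v i = v j)
    (hzu : ∀ i j, u i = u j → z i = z j) (hzv : ∀ i j, v i = v j → z i = z j) :
    entH p w + entH p z ≤ entH p u + entH p v := by
  have key : ∑ ω, p ω * (clsP p u ω * clsP p v ω * ((clsP p w ω)⁻¹ * (clsP p z ω)⁻¹)) ≤ 1 := by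
    have e1 : ∀ ω, p ω * (clsP p u ω * clsP p v ω * ((clsP p w ω)⁻¹ * (clsP p z ω)⁻¹)) =
        ∑ i, ∑ j, (p i * p j * if z j = z i then (clsP p z i)⁻¹ else 0) *
          (if u ω = u i ∧ v ω = v j then p ω * (clsP p w ω)⁻¹ else 0) := by
      intro ω
      have : clsP p u ω * clsP p v ω = ∑ i, ∑ j,
          (if u i = u ω then p i else 0) * (if v j = v ω then p j else 0) := by
        rw [clsP, clsP, Finset.sum_mul_sum]
      rw [this, Finset.sum_mul, Finset.mul_sum]
      refine Finset.sum_congr rfl fun i _ => ?_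
      rw [Finset.sum_mul, Finset.mul_sum]
      refine Finset.sum_congr rfl fun j _ => ?_
      by_cases h1 : u ω = u i
      · by_cases h2 : v ω = v j
        · have h3 : z ω = z i := hzu _ _ h1
          have h4 : z j = z i := (hzv _ _ h2).symm.trans h3
          rw [if_pos h1.symm, if_pos h2.symm, if_pos h4, if_pos ⟨h1, h2⟩, clsP_congr p z h3]
          ring
        · rw [if_neg (fun h : v j = v ω => h2 h.symm),
            if_neg (fun h : u ω = u i ∧ v ω = v j => h2 h.2)]; ring
      · rw [if_neg (fun h : u i = u ω => h1 h.symm),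
          if_neg (fun h : u ω = u i ∧ v ω = v j => h1 h.1)]; ring
    have e2 : ∀ i j, ∑ ω, (if u ω = u i ∧ v ω = v j then p ω * (clsP p w ω)⁻¹ else 0) ≤ 1 := by
      intro i j
      by_cases h : ∃ k, u k = u i ∧ v k = v j
      · obtain ⟨k, hk1, hk2⟩ := h
        have : ∑ ω, (if u ω = u i ∧ v ω = v j then p ω * (clsP p w ω)⁻¹ else 0) =
            clsP p w k * (clsP p w k)⁻¹ := by
          conv_rhs => rw [clsP, Finset.sum_mul]
          refine Finset.sum_congr rfl fun ω _ => ?_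
          by_cases h : u ω = u i ∧ v ω = v j
          · have hh : w ω = w k := (hw _ _).2 ⟨h.1.trans hk1.symm, h.2.trans hk2.symm⟩
            rw [if_pos h, if_pos hh, clsP_congr p w hh]
            rfl
          · have hh : ¬ w ω = w k := fun hh => h
              ⟨((hw _ _).1 hh).1.trans hk1, ((hw _ _).1 hh).2.trans hk2⟩
            rw [if_neg h, if_neg hh, zero_mul]
        rw [this]; exact mul_inv_le_one_real _
      · push Not at h
        rw [Finset.sum_eq_zero]
        · exact zero_le_one
        · intro k _
          rw [if_neg (fun hh => h k hh.1 hh.2)]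
    calc _ = ∑ i, ∑ j, (p i * p j * if z j = z i then (clsP p z i)⁻¹ else 0) *
          ∑ ω, (if u ω = u i ∧ v ω = v j then p ω * (clsP p w ω)⁻¹ else 0) := by
            rw [Finset.sum_congr rfl fun ω _ => e1 ω, Finset.sum_comm]
            refine Finset.sum_congr rfl fun i _ => ?_
            rw [Finset.sum_comm]
            refine Finset.sum_congr rfl fun j _ => ?_
            rw [Finset.mul_sum]
      _ ≤ ∑ i, ∑ j, (p i * p j * if z j = z i then (clsP p z i)⁻¹ else 0) * 1 := by
            refine Finset.sum_le_sum fun i _ => Finset.sum_le_sum fun j _ => ?_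
            refine mul_le_mul_of_nonneg_left (e2 i j) ?_
            refine mul_nonneg (mul_nonneg (hp0 i) (hp0 j)) ?_
            split_ifs
            · exact inv_nonneg.2 (clsP_nonneg hp0 _ _)
            · exact le_rfl
      _ = ∑ i, p i * (clsP p z i * (clsP p z i)⁻¹) := by
            refine Finset.sum_congr rfl fun i _ => ?_
            conv_rhs => rw [clsP, Finset.sum_mul, Finset.mul_sum]
            refine Finset.sum_congr rfl fun j _ => ?_
            split_ifs
            · simp only [clsP]; ring
            · simp
      _ ≤ ∑ i, p i * 1 := Finset.sum_le_sum fun i _ =>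
            mul_le_mul_of_nonneg_left (mul_inv_le_one_real _) (hp0 i)
      _ = 1 := by simpa using hp1
  have key2 : ∑ ω, (p ω * Real.log (clsP p u ω) + p ω * Real.log (clsP p v ω)
      - p ω * Real.log (clsP p w ω) - p ω * Real.log (clsP p z ω)) ≤
      ∑ ω, (p ω * (clsP p u ω * clsP p v ω * ((clsP p w ω)⁻¹ * (clsP p z ω)⁻¹)) - p ω) := by
    refine Finset.sum_le_sum fun ω _ => ?_
    rcases (hp0 ω).eq_or_lt with h | h
    · simp [← h]
    · have hu := h.trans_le (le_clsP hp0 u ω)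
      have hv := h.trans_le (le_clsP hp0 v ω)
      have hw := h.trans_le (le_clsP hp0 w ω)
      have hz := h.trans_le (le_clsP hp0 z ω)
      have hl := Real.log_le_sub_one_of_pos
        (mul_pos (mul_pos hu hv) (mul_pos (inv_pos.2 hw) (inv_pos.2 hz)))
      rw [Real.log_mul (by positivity) (by positivity), Real.log_mul hu.ne' hv.ne',
        Real.log_mul (by positivity) (by positivity), Real.log_inv, Real.log_inv] at hl
      have := mul_le_mul_of_nonneg_left hl h.le
      linarith
  simp only [Finset.sum_sub_distrib, Finset.sum_add_distrib, hp1] at key2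
  simp only [entH_eq]
  linarith

/-- Entropy depends only on the kernel of the variable on the support. -/
lemma entH_congr {Ω α β : Type*} [Fintype Ω] (p : Ω → ℝ) (g : Ω → α) (g' : Ω → β)
    (h : ∀ i j, p i ≠ 0 → p j ≠ 0 → (g i = g j ↔ g' i = g' j)) :
    entH p g = entH p g' := by
  rw [entH_eq, entH_eq]
  congr 1
  refine Finset.sum_congr rfl fun i _ => ?_
  by_cases hi : p i = 0
  · simp [hi]
  · congr 2
    unfold clsP
    refine Finset.sum_congr rfl fun j _ => ?_
    by_cases hj : p j = 0
    · simp [hj]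
    · simp only [h j i hj hi]

/-- The conditionally independent coupling over `z`. -/
def cpl {Ω δ : Type*} [Fintype Ω] (p : Ω → ℝ) (z : Ω → δ) (q : Ω × Ω) : ℝ :=
  if z q.2 = z q.1 then p q.1 * p q.2 * (clsP p z q.1)⁻¹ else 0

lemma cpl_fst {Ω δ : Type*} [Fintype Ω] {p : Ω → ℝ} (hp0 : ∀ ω, 0 ≤ p ω) (z : Ω → δ)
    (F : Ω → ℝ) : ∑ q : Ω × Ω, cpl p z q * F q.1 = ∑ ω, p ω * F ω := by
  rw [Fintype.sum_prod_type]
  refine Finset.sum_congr rfl fun i _ => ?_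
  have : ∑ j, cpl p z (i, j) * F i = p i * (clsP p z i * (clsP p z i)⁻¹) * F i := by
    conv_rhs => rw [clsP, Finset.sum_mul, Finset.mul_sum, Finset.sum_mul]
    refine Finset.sum_congr rfl fun j _ => ?_
    simp only [cpl]
    split_ifs
    · simp only [clsP]; ring
    · simp
  rw [this]
  rcases (hp0 i).eq_or_lt with h | h
  · simp [← h]
  · rw [mul_inv_cancel₀ (h.trans_le (le_clsP hp0 z i)).ne', mul_one]

lemma cpl_swap {Ω δ : Type*} [Fintype Ω] (p : Ω → ℝ) (z : Ω → δ) (i j : Ω) :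
    cpl p z (i, j) = cpl p z (j, i) := by
  unfold cpl
  by_cases h : z j = z i
  · simp only [h, if_true, clsP_congr p z h]; ring
  · have h2 : ¬ z i = z j := fun h3 => h h3.symm
    simp only [h, h2, if_false]

lemma cpl_snd {Ω δ : Type*} [Fintype Ω] {p : Ω → ℝ} (hp0 : ∀ ω, 0 ≤ p ω) (z : Ω → δ)
    (F : Ω → ℝ) : ∑ q : Ω × Ω, cpl p z q * F q.2 = ∑ ω, p ω * F ω := by
  rw [← cpl_fst hp0 z F, Fintype.sum_prod_type, Finset.sum_comm, Fintype.sum_prod_type]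
  refine Finset.sum_congr rfl fun i _ => Finset.sum_congr rfl fun j _ => ?_
  rw [cpl_swap]

lemma cpl_nonneg {Ω δ : Type*} [Fintype Ω] {p : Ω → ℝ} (hp0 : ∀ ω, 0 ≤ p ω) (z : Ω → δ)
    (q : Ω × Ω) : 0 ≤ cpl p z q := by
  unfold cpl
  split_ifs
  · exact mul_nonneg (mul_nonneg (hp0 _) (hp0 _)) (inv_nonneg.2 (clsP_nonneg hp0 _ _))
  · exact le_rfl

lemma cpl_ne {Ω δ : Type*} [Fintype Ω] {p : Ω → ℝ} {z : Ω → δ} {q : Ω × Ω}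
    (h : cpl p z q ≠ 0) : z q.2 = z q.1 ∧ p q.1 ≠ 0 ∧ p q.2 ≠ 0 := by
  unfold cpl at h
  split_ifs at h with h1
  · refine ⟨h1, fun h2 => h ?_, fun h2 => h ?_⟩ <;> simp [h2]
  · exact absurd rfl h

lemma entH_cpl_fst {Ω δ α : Type*} [Fintype Ω] {p : Ω → ℝ} (hp0 : ∀ ω, 0 ≤ p ω) (z : Ω → δ)
    (g : Ω → α) : entH (cpl p z) (fun q : Ω × Ω => g q.1) = entH p g := by
  rw [entH_eq, entH_eq, ← cpl_fst hp0 z]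
  congr 1
  refine Finset.sum_congr rfl fun q _ => ?_
  congr 2
  have := cpl_fst hp0 z (fun i => if g i = g q.1 then 1 else 0)
  simpa [clsP] using this

lemma entH_cpl_snd {Ω δ α : Type*} [Fintype Ω] {p : Ω → ℝ} (hp0 : ∀ ω, 0 ≤ p ω) (z : Ω → δ)
    (g : Ω → α) : entH (cpl p z) (fun q : Ω × Ω => g q.2) = entH p g := by
  rw [entH_eq, entH_eq, ← cpl_snd hp0 z]
  congr 1
  refine Finset.sum_congr rfl fun q _ => ?_
  congr 2
  have := cpl_snd hp0 z (fun i => if g i = g q.2 then 1 else 0)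
  simpa [clsP] using this

lemma entH_cpl_pair {Ω δ α β : Type*} [Fintype Ω] {p : Ω → ℝ} (hp0 : ∀ ω, 0 ≤ p ω) (z : Ω → δ)
    (u : Ω → α) (v : Ω → β)
    (hzu : ∀ i j, u i = u j → z i = z j) (hzv : ∀ i j, v i = v j → z i = z j) :
    entH (cpl p z) (fun q : Ω × Ω => (u q.1, v q.2)) = entH p u + entH p v - entH p z := by
  simp only [entH_eq]
  rw [← cpl_fst hp0 z (fun i => Real.log (clsP p u i)),
    ← cpl_snd hp0 z (fun i => Real.log (clsP p v i)),
    ← cpl_fst hp0 z (fun i => Real.log (clsP p z i))]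
  have : ∀ q : Ω × Ω, cpl p z q *
      Real.log (clsP (cpl p z) (fun q : Ω × Ω => (u q.1, v q.2)) q) =
      cpl p z q * Real.log (clsP p u q.1) + cpl p z q * Real.log (clsP p v q.2)
        - cpl p z q * Real.log (clsP p z q.1) := by
    intro q
    by_cases hq : cpl p z q = 0
    · simp [hq]
    obtain ⟨hz, h1, h2⟩ := cpl_ne hq
    have g1 := lt_of_le_of_ne (hp0 _) h1.symm
    have g2 := lt_of_le_of_ne (hp0 _) h2.symm
    have e : clsP (cpl p z) (fun q : Ω × Ω => (u q.1, v q.2)) q =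
        clsP p u q.1 * clsP p v q.2 * (clsP p z q.1)⁻¹ := by
      conv_lhs => rw [clsP, Fintype.sum_prod_type]
      have : clsP p u q.1 * clsP p v q.2 = ∑ i, ∑ j,
          (if u i = u q.1 then p i else 0) * (if v j = v q.2 then p j else 0) := by
        rw [clsP, clsP, Finset.sum_mul_sum]
      rw [this, Finset.sum_mul]
      refine Finset.sum_congr rfl fun i _ => ?_
      rw [Finset.sum_mul]
      refine Finset.sum_congr rfl fun j _ => ?_
      by_cases k1 : u i = u q.1
      · by_cases k2 : v j = v q.2
        · have k3 := hzu _ _ k1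
          have k4 : z j = z i := (hzv _ _ k2).trans (hz.trans k3.symm)
          simp only [k1, k2, k4, cpl, if_true, clsP_congr p z k3]
        · simp [k2]
      · simp [k1]
    have a1 := g1.trans_le (le_clsP hp0 u q.1)
    have a2 := g2.trans_le (le_clsP hp0 v q.2)
    have a3 := g1.trans_le (le_clsP hp0 z q.1)
    rw [e, Real.log_mul (by positivity) (by positivity), Real.log_mul a1.ne' a2.ne',
      Real.log_inv]
    ring
  rw [Finset.sum_congr rfl fun q _ => this q, Finset.sum_sub_distrib, Finset.sum_add_distrib]
  ring

/-- The marginal map of `ξ` to `A`. -/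
def margF {Ω S : Type*} (ξ : Fin 5 → Ω → S) (A : Finset (Fin 5)) (ω : Ω) : Fin 5 → Option S :=
  fun i => if i ∈ A then some (ξ i ω) else none

lemma margF_eq {Ω Ω' S : Type*} (ξ : Fin 5 → Ω → S) (η : Fin 5 → Ω' → S) (A : Finset (Fin 5))
    (ω : Ω) (ω' : Ω') : margF ξ A ω = margF η A ω' ↔ ∀ i ∈ A, ξ i ω = η i ω' := by
  unfold margF
  rw [funext_iff]
  refine forall_congr' fun i => ?_
  by_cases h : i ∈ A <;> simp [h]

lemma miH_nonneg {Ω S : Type*} [Fintype Ω] {p : Ω → ℝ}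
    (hp0 : ∀ ω, 0 ≤ p ω) (hp1 : ∑ ω : Ω, p ω = 1) (ξ : Fin 5 → Ω → S)
    (I J K : Finset (Fin 5)) : 0 ≤ miH p ξ I J K := by
  have := entH_submod hp0 hp1 (margF ξ (I ∪ K)) (margF ξ (J ∪ K)) (margF ξ (I ∪ J ∪ K))
    (margF ξ K) (by
      intro i j
      simp only [margF_eq, Finset.mem_union]
      grind)
    (by intro i j; simp only [margF_eq, Finset.mem_union]; grind)
    (by intro i j; simp only [margF_eq, Finset.mem_union]; grind)
  unfold miH margH
  unfold margF at this
  linarith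

lemma miH_nonneg_sets {Ω S : Type*} [Fintype Ω] {p : Ω → ℝ}
    (hp0 : ∀ ω, 0 ≤ p ω) (hp1 : ∑ ω : Ω, p ω = 1) (ξ : Fin 5 → Ω → S)
    (I J K A B C : Finset (Fin 5)) (hA : I ∪ K = A) (hB : J ∪ K = B) (hC : I ∪ J ∪ K = C) :
    margH p ξ C + margH p ξ K ≤ margH p ξ A + margH p ξ B := by
  have := miH_nonneg hp0 hp1 ξ I J K
  subst hA hB hC
  unfold miH at this
  linarith

lemma miH_sets {Ω S : Type*} [Fintype Ω] (p : Ω → ℝ) (ξ : Fin 5 → Ω → S)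
    (I J K A B C : Finset (Fin 5)) (hA : I ∪ K = A) (hB : J ∪ K = B) (hC : I ∪ J ∪ K = C) :
    miH p ξ I J K = margH p ξ A + margH p ξ B - margH p ξ C - margH p ξ K := by
  subst hA hB hC
  rfl

/-- The variables on the coupled space: `y` from the second copy, the others from the first. -/
def cplV {Ω S : Type*} (ξ : Fin 5 → Ω → S) (i : Fin 5) (q : Ω × Ω) : S :=
  if i = 4 then ξ i q.2 else ξ i q.1

lemma margH_cpl_fst {Ω S : Type*} [Fintype Ω] {p : Ω → ℝ} (hp0 : ∀ ω, 0 ≤ p ω)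
    (ξ : Fin 5 → Ω → S) (A : Finset (Fin 5)) (hA : 4 ∉ A) :
    margH (cpl p (margF ξ {0, 1, 2})) (cplV ξ) A = margH p ξ A := by
  have := entH_cpl_fst hp0 (margF ξ {0, 1, 2}) (margF ξ A)
  unfold margH
  change _ = entH p (margF ξ A)
  rw [← this]
  apply entH_congr
  intro i j _ _
  change margF (cplV ξ) A i = margF (cplV ξ) A j ↔ _
  simp only [margF_eq, cplV]
  refine forall₂_congr fun k hk => ?_
  have : k ≠ 4 := fun h => hA (h ▸ hk)
  simp [this]

lemma margH_cpl_snd {Ω S : Type*} [Fintype Ω] {p : Ω → ℝ} (hp0 : ∀ ω, 0 ≤ p ω)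
    (ξ : Fin 5 → Ω → S) (A : Finset (Fin 5)) (hA : 3 ∉ A) :
    margH (cpl p (margF ξ {0, 1, 2})) (cplV ξ) A = margH p ξ A := by
  have := entH_cpl_snd hp0 (margF ξ {0, 1, 2}) (margF ξ A)
  unfold margH
  change _ = entH p (margF ξ A)
  rw [← this]
  apply entH_congr
  intro i j hi hj
  have h1 := (cpl_ne hi).1
  have h2 := (cpl_ne hj).1
  change margF (cplV ξ) A i = margF (cplV ξ) A j ↔ _
  simp only [margF_eq, cplV] at h1 h2 ⊢
  refine forall₂_congr fun k hk => ?_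
  by_cases h4 : k = 4
  · simp [h4]
  · have h3 : k ≠ 3 := fun h => hA (h ▸ hk)
    have hm : k ∈ ({0, 1, 2} : Finset (Fin 5)) := by
      clear hk; revert h3 h4; revert k; decide
    rw [if_neg h4, if_neg h4, h1 k hm, h2 k hm]

lemma margH_cpl_all {Ω S : Type*} [Fintype Ω] {p : Ω → ℝ} (hp0 : ∀ ω, 0 ≤ p ω)
    (ξ : Fin 5 → Ω → S) :
    margH (cpl p (margF ξ {0, 1, 2})) (cplV ξ) {0, 1, 2, 3, 4} =
      margH p ξ {0, 1, 2, 3} + margH p ξ {0, 1, 2, 4} - margH p ξ {0, 1, 2} := by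
  have := entH_cpl_pair hp0 (margF ξ {0, 1, 2}) (margF ξ {0, 1, 2, 3}) (margF ξ {0, 1, 2, 4})
    (by intro i j; simp only [margF_eq]; intro h k hk; exact h k (by revert hk; revert k; decide))
    (by intro i j; simp only [margF_eq]; intro h k hk; exact h k (by revert hk; revert k; decide))
  unfold margH
  change _ = entH p (margF ξ _) + entH p (margF ξ _) - entH p (margF ξ _)
  rw [← this]
  apply entH_congr
  intro i j hi hj
  have h1 := (cpl_ne hi).1
  have h2 := (cpl_ne hj).1
  change margF (cplV ξ) _ i = margF (cplV ξ) _ j ↔ _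
  rw [Prod.mk.injEq]
  simp only [margF_eq, cplV] at h1 h2 ⊢
  simp only [Finset.mem_insert, Finset.mem_singleton, forall_eq_or_imp, forall_eq] at h1 h2 ⊢
  simp only [h1, h2]
  simp
  tauto

/-- the five-variable non-Shannon entropy inequality
`(a,x|c)+(a,b|x)+(a,b|y)+(c,y)+{(b,x|ac) or (b,y|ac)}+{(c,x|ab) or (c,y|ab)} ≥ (a,b)`
for jointly distributed finitely-valued random variables `ξ_0 = ξ_a`,
`ξ_1 = ξ_b`, `ξ_2 = ξ_c`, `ξ_3 = ξ_x`, `ξ_4 = ξ_y`. -/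
theorem statement_12 {Ω S : Type*} [Fintype Ω] (p : Ω → ℝ)
    (hp0 : ∀ ω, 0 ≤ p ω) (hp1 : ∑ ω : Ω, p ω = 1)
    (ξ : Fin 5 → Ω → S) (s1 s2 : Bool) :
    miH p ξ {0} {1} ∅ ≤
      miH p ξ {0} {3} {2} + miH p ξ {0} {1} {3} + miH p ξ {0} {1} {4} +
      miH p ξ {2} {4} ∅ +
      (if s1 then miH p ξ {1} {3} {0, 2} else miH p ξ {1} {4} {0, 2}) +
      (if s2 then miH p ξ {2} {3} {0, 1} else miH p ξ {2} {4} {0, 1}) := by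
  have F := margH_cpl_fst hp0 ξ
  have G := margH_cpl_snd hp0 ξ
  have A := margH_cpl_all hp0 ξ
  have P0 := cpl_nonneg hp0 (margF ξ {0, 1, 2})
  have P1 : ∑ q, cpl p (margF ξ {0, 1, 2}) q = 1 := by
    have := cpl_fst hp0 (margF ξ {0, 1, 2}) (fun _ => 1)
    simpa [hp1] using this
  have N := miH_nonneg_sets P0 P1 (cplV ξ)
  have n0 := N {2} {4} {3} {2, 3} {3, 4} {2, 3, 4} (by decide) (by decide) (by decide)
  have n1 := N {3} {4} {0} {0, 3} {0, 4} {0, 3, 4} (by decide) (by decide) (by decide)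
  have n2 := N {3} {4} {1} {1, 3} {1, 4} {1, 3, 4} (by decide) (by decide) (by decide)
  have n3 := N {0} {1} {3, 4} {0, 3, 4} {1, 3, 4} {0, 1, 3, 4} (by decide) (by decide) (by decide)
  have n4 := N {0} {3} {2, 4} {0, 2, 4} {2, 3, 4} {0, 2, 3, 4} (by decide) (by decide) (by decide)
  have n5 := N {1} {3} {0, 2, 4} {0, 1, 2, 4} {0, 2, 3, 4} {0, 1, 2, 3, 4} (by decide) (by decide) (by decide)
  have n6 := N {1} {4} {0, 2, 3} {0, 1, 2, 3} {0, 2, 3, 4} {0, 1, 2, 3, 4} (by decide) (by decide) (by decide)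
  have n7 := N {2} {3} {0, 1, 4} {0, 1, 2, 4} {0, 1, 3, 4} {0, 1, 2, 3, 4} (by decide) (by decide) (by decide)
  have n8 := N {2} {4} {0, 1, 3} {0, 1, 2, 3} {0, 1, 3, 4} {0, 1, 2, 3, 4} (by decide) (by decide) (by decide)
  have f0 := F ∅ (by decide)
  have f1 := F {0} (by decide)
  have f2 := F {1} (by decide)
  have f3 := F {2} (by decide)
  have f4 := F {3} (by decide)
  have f5 := G {4} (by decide)
  have f6 := F {0, 1} (by decide)
  have f7 := F {0, 2} (by decide)
  have f8 := F {0, 3} (by decide)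
  have f9 := G {0, 4} (by decide)
  have f10 := F {1, 2} (by decide)
  have f11 := F {1, 3} (by decide)
  have f12 := G {1, 4} (by decide)
  have f13 := F {2, 3} (by decide)
  have f14 := G {2, 4} (by decide)
  have f15 := F {0, 1, 2} (by decide)
  have f16 := F {0, 1, 3} (by decide)
  have f17 := G {0, 1, 4} (by decide)
  have f18 := F {0, 2, 3} (by decide)
  have f19 := G {0, 2, 4} (by decide)
  have f20 := F {1, 2, 3} (by decide)
  have f21 := G {1, 2, 4} (by decide)
  have f22 := F {0, 1, 2, 3} (by decide)
  have f23 := G {0, 1, 2, 4} (by decide)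
  have r0 := miH_sets p ξ {0} {3} {2} {0, 2} {2, 3} {0, 2, 3} (by decide) (by decide) (by decide)
  have r1 := miH_sets p ξ {0} {1} {3} {0, 3} {1, 3} {0, 1, 3} (by decide) (by decide) (by decide)
  have r2 := miH_sets p ξ {0} {1} {4} {0, 4} {1, 4} {0, 1, 4} (by decide) (by decide) (by decide)
  have r3 := miH_sets p ξ {2} {4} ∅ {2} {4} {2, 4} (by decide) (by decide) (by decide)
  have r4 := miH_sets p ξ {1} {3} {0, 2} {0, 1, 2} {0, 2, 3} {0, 1, 2, 3} (by decide) (by decide) (by decide)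
  have r5 := miH_sets p ξ {1} {4} {0, 2} {0, 1, 2} {0, 2, 4} {0, 1, 2, 4} (by decide) (by decide) (by decide)
  have r6 := miH_sets p ξ {2} {3} {0, 1} {0, 1, 2} {0, 1, 3} {0, 1, 2, 3} (by decide) (by decide) (by decide)
  have r7 := miH_sets p ξ {2} {4} {0, 1} {0, 1, 2} {0, 1, 4} {0, 1, 2, 4} (by decide) (by decide) (by decide)
  have r8 := miH_sets p ξ {0} {1} ∅ {0} {1} {0, 1} (by decide) (by decide) (by decide)
  rw [r0, r1, r2, r3, r4, r5, r6, r7, r8]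
  cases s1 <;> cases s2 <;> simp only [if_true, if_false, Bool.false_eq_true] <;> linarith
end
end

section
/- Let f be a polymatroid on {a,b,c} with f(a|bc) = f(b|ac) = f(c|ab) = 0 and such that at least one of f(a,b|c), f(a,c|b), f(b,c|a) equals zero. Then f is 1-sticky: any two polymatroids f_x on {a,b,c,x} and f_y on {a,b,c,y} extending f have an amalgam. -/
open Finset

noncomputable section

variable {α : Type*} [DecidableEq α]

set_option linter.unusedVariables false

/-- The real-number core: values of the amalgam on the sets containing both new elements. -/
lemma exZ_aux (r p q X0 Xa Xb XM Y0 Ya Yb YM : ℝ)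
    (hpr : p ≤ r) (hqr : q ≤ r)
    (hX1 : X0 ≤ Xa) (hX2 : X0 ≤ Xb) (hX3 : Xa ≤ XM) (hX4 : Xb ≤ XM)
    (hX5 : XM + X0 ≤ Xa + Xb) (hXr : r ≤ XM) (hX6 : Xa ≤ p + X0) (hX7 : Xb ≤ q + X0)
    (hX8 : XM + p ≤ Xa + r) (hX9 : XM + q ≤ Xb + r) (hX10 : XM ≤ r + X0) (hX11 : 0 ≤ X0)
    (hY1 : Y0 ≤ Ya) (hY2 : Y0 ≤ Yb) (hY3 : Ya ≤ YM) (hY4 : Yb ≤ YM)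
    (hY5 : YM + Y0 ≤ Ya + Yb) (hYr : r ≤ YM) (hY6 : Ya ≤ p + Y0) (hY7 : Yb ≤ q + Y0)
    (hY8 : YM + p ≤ Ya + r) (hY9 : YM + q ≤ Yb + r) (hY10 : YM ≤ r + Y0) (hY11 : 0 ≤ Y0)
    (hp : p ≤ Xa) (hq : q ≤ Xb) (hp' : p ≤ Ya) (hq' : q ≤ Yb)
    (hle : YM ≤ XM) :
    ∃ Z0 Za Zb T : ℝ, XM ≤ T ∧ YM ≤ T ∧ Z0 ≤ Za ∧ Z0 ≤ Zb ∧ Za ≤ T ∧ Zb ≤ T ∧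
      T + Z0 ≤ Za + Zb ∧
      T - Za ≤ XM - Xa ∧ T - Za ≤ YM - Ya ∧ T - Zb ≤ XM - Xb ∧ T - Zb ≤ YM - Yb ∧
      Za - Z0 ≤ Xa - X0 ∧ Za - Z0 ≤ Ya - Y0 ∧ Zb - Z0 ≤ Xb - X0 ∧ Zb - Z0 ≤ Yb - Y0 ∧
      T + r ≤ XM + YM ∧ Za + p ≤ Xa + Ya ∧ Zb + q ≤ Xb + Yb ∧ Z0 ≤ X0 + Y0 := by
  obtain ⟨Za, a1, a2, a3⟩ : ∃ Z : ℝ, Xa ≤ Z ∧ XM - YM + Ya ≤ Z ∧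
      (Z = Xa ∨ Z = XM - YM + Ya) :=
    ⟨max Xa (XM - YM + Ya), le_max_left _ _, le_max_right _ _, max_choice _ _⟩
  obtain ⟨Zb, b1, b2, b3⟩ : ∃ Z : ℝ, Xb ≤ Z ∧ XM - YM + Yb ≤ Z ∧
      (Z = Xb ∨ Z = XM - YM + Yb) :=
    ⟨max Xb (XM - YM + Yb), le_max_left _ _, le_max_right _ _, max_choice _ _⟩
  obtain ⟨Z0, c1, c2, c3, c4, c5⟩ : ∃ Z : ℝ, Za - Xa + X0 ≤ Z ∧ Za - Ya + Y0 ≤ Z ∧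
      Zb - Xb + X0 ≤ Z ∧ Zb - Yb + Y0 ≤ Z ∧
      ((Z = Za - Xa + X0 ∨ Z = Za - Ya + Y0) ∨ (Z = Zb - Xb + X0 ∨ Z = Zb - Yb + Y0)) := by
    refine ⟨max (max (Za - Xa + X0) (Za - Ya + Y0)) (max (Zb - Xb + X0) (Zb - Yb + Y0)),
      by simp, by simp, by simp, by simp, ?_⟩
    rcases max_choice (max (Za - Xa + X0) (Za - Ya + Y0))
      (max (Zb - Xb + X0) (Zb - Yb + Y0)) with h | h <;> rw [h]
    · exact Or.inl (max_choice _ _)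
    · exact Or.inr (max_choice _ _)
  refine ⟨Z0, Za, Zb, XM, ?_⟩
  have aT : Za ≤ XM := by rcases a3 with h | h <;> linarith
  have bT : Zb ≤ XM := by rcases b3 with h | h <;> linarith
  have aU : Za + p ≤ Xa + Ya := by rcases a3 with h | h <;> linarith
  have bU : Zb + q ≤ Xb + Yb := by rcases b3 with h | h <;> linarith
  have d1 : Z0 ≤ Za := by rcases c5 with (h | h) | (h | h) <;> linarith
  have d2 : Z0 ≤ Zb := by rcases c5 with (h | h) | (h | h) <;> linarith
  have d3 : XM + Z0 ≤ Za + Zb := by rcases c5 with (h | h) | (h | h) <;> linarith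
  have d4 : Z0 ≤ X0 + Y0 := by
    rcases c5 with (h | h) | (h | h) <;> rcases a3 with h' | h' <;>
      rcases b3 with h'' | h'' <;> linarith
  refine ⟨le_refl _, hle, d1, d2, aT, bT, d3, ?_, ?_, ?_, ?_, ?_, ?_, ?_, ?_, ?_, aU, bU, d4⟩ <;>
    linarith

lemma exZ (r p q X0 Xa Xb XM Y0 Ya Yb YM : ℝ)
    (hpr : p ≤ r) (hqr : q ≤ r)
    (hX1 : X0 ≤ Xa) (hX2 : X0 ≤ Xb) (hX3 : Xa ≤ XM) (hX4 : Xb ≤ XM)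
    (hX5 : XM + X0 ≤ Xa + Xb) (hXr : r ≤ XM) (hX6 : Xa ≤ p + X0) (hX7 : Xb ≤ q + X0)
    (hX8 : XM + p ≤ Xa + r) (hX9 : XM + q ≤ Xb + r) (hX10 : XM ≤ r + X0) (hX11 : 0 ≤ X0)
    (hY1 : Y0 ≤ Ya) (hY2 : Y0 ≤ Yb) (hY3 : Ya ≤ YM) (hY4 : Yb ≤ YM)
    (hY5 : YM + Y0 ≤ Ya + Yb) (hYr : r ≤ YM) (hY6 : Ya ≤ p + Y0) (hY7 : Yb ≤ q + Y0)
    (hY8 : YM + p ≤ Ya + r) (hY9 : YM + q ≤ Yb + r) (hY10 : YM ≤ r + Y0) (hY11 : 0 ≤ Y0)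
    (hp : p ≤ Xa) (hq : q ≤ Xb) (hp' : p ≤ Ya) (hq' : q ≤ Yb) :
    ∃ Z0 Za Zb T : ℝ, XM ≤ T ∧ YM ≤ T ∧ Z0 ≤ Za ∧ Z0 ≤ Zb ∧ Za ≤ T ∧ Zb ≤ T ∧
      T + Z0 ≤ Za + Zb ∧
      T - Za ≤ XM - Xa ∧ T - Za ≤ YM - Ya ∧ T - Zb ≤ XM - Xb ∧ T - Zb ≤ YM - Yb ∧
      Za - Z0 ≤ Xa - X0 ∧ Za - Z0 ≤ Ya - Y0 ∧ Zb - Z0 ≤ Xb - X0 ∧ Zb - Z0 ≤ Yb - Y0 ∧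
      T + r ≤ XM + YM ∧ Za + p ≤ Xa + Ya ∧ Zb + q ≤ Xb + Yb ∧ Z0 ≤ X0 + Y0 := by
  rcases le_total YM XM with h | h
  · exact exZ_aux r p q X0 Xa Xb XM Y0 Ya Yb YM hpr hqr hX1 hX2 hX3 hX4 hX5 hXr hX6 hX7 hX8 hX9
      hX10 hX11 hY1 hY2 hY3 hY4 hY5 hYr hY6 hY7 hY8 hY9 hY10 hY11 hp hq hp' hq' h
  · obtain ⟨Z0, Za, Zb, T, h1, h2, h3, h4, h5, h6, h7, h8, h9, h10, h11, h12, h13, h14, h15, h16,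
      h17, h18, h19⟩ := exZ_aux r p q Y0 Ya Yb YM X0 Xa Xb XM hpr hqr
        hY1 hY2 hY3 hY4 hY5 hYr hY6 hY7 hY8 hY9 hY10 hY11
        hX1 hX2 hX3 hX4 hX5 hXr hX6 hX7 hX8 hX9 hX10 hX11 hp' hq' hp hq h
    exact ⟨Z0, Za, Zb, T, h2, h1, h3, h4, h5, h6, h7, h9, h8, h11, h10, h13, h12, h15, h14,
      by linarith, by linarith, by linarith, by linarith⟩

/-- Polymatroid axioms for a function on the Boolean cube of dimension three. -/
def Cube3 (P : Bool → Bool → Bool → ℝ) : Prop :=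
  P false false false = 0 ∧
  (∀ u v w u' v' w', u ≤ u' → v ≤ v' → w ≤ w' → P u v w ≤ P u' v' w') ∧
  (∀ u v w u' v' w', P (u || u') (v || v') (w || w') + P (u && u') (v && v') (w && w') ≤
    P u v w + P u' v' w')

lemma core_s15 (P Q : Bool → Bool → Bool → ℝ) (hP : Cube3 P) (hQ : Cube3 Q)
    (hPQ : ∀ u v, P u v false = Q u v false) :
    ∃ H : Bool → Bool → Bool → Bool → ℝ,
      (∀ u v w, H u v w false = P u v w) ∧ (∀ u v w, H u v false w = Q u v w) ∧
      (∀ u v w z u' v' w' z', u ≤ u' → v ≤ v' → w ≤ w' → z ≤ z' →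
        H u v w z ≤ H u' v' w' z') ∧
      (∀ u v w z u' v' w' z',
        H (u || u') (v || v') (w || w') (z || z') + H (u && u') (v && v') (w && w') (z && z') ≤
          H u v w z + H u' v' w' z') := by
  obtain ⟨P0, Pm, Ps⟩ := hP
  obtain ⟨Q0, Qm, Qs⟩ := hQ
  obtain ⟨Z0, Za, Zb, T, h1, h2, h3, h4, h5, h6, h7, h8, h9, h10, h11, h12, h13, h14, h15, h16,
      h17, h18, h19⟩ := exZ (P true true false) (P true false false) (P false true false)
    (P false false true) (P true false true) (P false true true) (P true true true)
    (Q false false true) (Q true false true) (Q false true true) (Q true true true)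
    (Pm _ _ _ _ _ _ (by decide) (by decide) (by decide))
    (Pm _ _ _ _ _ _ (by decide) (by decide) (by decide))
    (Pm _ _ _ _ _ _ (by decide) (by decide) (by decide))
    (Pm _ _ _ _ _ _ (by decide) (by decide) (by decide))
    (Pm _ _ _ _ _ _ (by decide) (by decide) (by decide))
    (Pm _ _ _ _ _ _ (by decide) (by decide) (by decide))
    (Ps true false true false true true)
    (Pm _ _ _ _ _ _ (by decide) (by decide) (by decide))
    (by have := Ps true false false false false true; simp at this; linarith)
    (by have := Ps false true false false false true; simp at this; linarith)
    (Ps true false true true true false)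
    (Ps false true true true true false)
    (by have := Ps true true false false false true; simp at this; linarith)
    (by rw [← P0]; exact Pm _ _ _ _ _ _ (by decide) (by decide) (by decide))
    (Qm _ _ _ _ _ _ (by decide) (by decide) (by decide))
    (Qm _ _ _ _ _ _ (by decide) (by decide) (by decide))
    (Qm _ _ _ _ _ _ (by decide) (by decide) (by decide))
    (Qm _ _ _ _ _ _ (by decide) (by decide) (by decide))
    (Qs true false true false true true)
    (by rw [hPQ]; exact Qm _ _ _ _ _ _ (by decide) (by decide) (by decide))
    (by rw [hPQ]; have := Qs true false false false false true; simp at this; linarith)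
    (by rw [hPQ]; have := Qs false true false false false true; simp at this; linarith)
    (by rw [hPQ, hPQ]; exact Qs true false true true true false)
    (by rw [hPQ, hPQ]; exact Qs false true true true true false)
    (by rw [hPQ]; have := Qs true true false false false true; simp at this; linarith)
    (by rw [← Q0]; exact Qm _ _ _ _ _ _ (by decide) (by decide) (by decide))
    (Pm _ _ _ _ _ _ (by decide) (by decide) (by decide))
    (Pm _ _ _ _ _ _ (by decide) (by decide) (by decide))
    (by rw [hPQ]; exact Qm _ _ _ _ _ _ (by decide) (by decide) (by decide))
    (by rw [hPQ]; exact Qm _ _ _ _ _ _ (by decide) (by decide) (by decide))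
  have hTF : ¬ ((true : Bool) ≤ false) := by decide
  have e1 := hPQ true true
  have e2 := hPQ true false
  have e3 := hPQ false true
  -- the part with both new elements
  let Z : Bool → Bool → ℝ := fun u v =>
    if u then (if v then T else Za) else (if v then Zb else Z0)
  have Zm : ∀ u v u' v', u ≤ u' → v ≤ v' → Z u v ≤ Z u' v' := by
    intro u v u' v' hu hv
    cases u <;> cases v <;> cases u' <;> cases v' <;> simp [Z, hTF] at hu hv ⊢ <;> linarith
  have Zs : ∀ u v u' v', Z (u || u') (v || v') + Z (u && u') (v && v') ≤ Z u v + Z u' v' := by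
    intro u v u' v'
    cases u <;> cases v <;> cases u' <;> cases v' <;> simp [Z] <;> linarith
  -- increments of `Z` are bounded by those of `P` and `Q`
  have ZP : ∀ u v u' v', u ≤ u' → v ≤ v' →
      Z u' v' - Z u v ≤ P u' v' true - P u v true := by
    intro u v u' v' hu hv
    cases u <;> cases v <;> cases u' <;> cases v' <;> simp [Z, hTF] at hu hv ⊢ <;> linarith
  have ZQ : ∀ u v u' v', u ≤ u' → v ≤ v' →
      Z u' v' - Z u v ≤ Q u' v' true - Q u v true := by
    intro u v u' v' hu hv
    cases u <;> cases v <;> cases u' <;> cases v' <;> simp [Z, hTF] at hu hv ⊢ <;> linarith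
  have ZU : ∀ u v, Z u v + P u v false ≤ P u v true + Q u v true := by
    intro u v
    cases u <;> cases v <;> simp [Z] <;> linarith
  have ZLP : ∀ u v, P u v true ≤ Z u v := by
    intro u v
    have := ZP u v true true (Bool.le_true _) (Bool.le_true _)
    simp only [Z, if_true] at this ⊢
    linarith
  have ZLQ : ∀ u v, Q u v true ≤ Z u v := by
    intro u v
    have := ZQ u v true true (Bool.le_true _) (Bool.le_true _)
    simp only [Z, if_true] at this ⊢
    linarith
  have o1 : ∀ u u' : Bool, u ≤ (u || u') := by decide
  have o2 : ∀ u u' : Bool, u' ≤ (u || u') := by decide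
  have n1 : ∀ u u' : Bool, (u && u') ≤ u := by decide
  have n2 : ∀ u u' : Bool, (u && u') ≤ u' := by decide
  refine ⟨fun u v w z => if z then (if w then Z u v else Q u v true) else P u v w,
    ?_, ?_, ?_, ?_⟩
  · intro u v w; simp
  · intro u v w; cases w <;> simp [hPQ]
  · intro u v w z u' v' w' z' hu hv hw hz
    have a1 := Pm u v w u' v' w' hu hv hw
    have a2 := Qm u v z u' v' z' hu hv hz
    have a3 := Zm u v u' v' hu hv
    have a4 := ZLP u' v'
    have a5 := ZLQ u' v'
    have a6 := Pm u v false u' v' true hu hv (by decide)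
    have a7 := Qm u v false u' v' true hu hv (by decide)
    have a8 := Pm u v true u' v' true hu hv (by decide)
    have a9 := Qm u v true u' v' true hu hv (by decide)
    have a10 := hPQ u v
    cases w <;> cases z <;> cases w' <;> cases z' <;> simp [hTF] at hw hz a1 a2 ⊢ <;> linarith
  · intro u v w z u' v' w' z'
    have b1 := Ps u v w u' v' w'
    have b2 := Qs u v z u' v' z'
    have b3 := Zs u v u' v'
    have b4 := ZP u v _ _ (o1 u u') (o1 v v')
    have b5 := ZP u' v' _ _ (o2 u u') (o2 v v')
    have b6 := ZQ u v _ _ (o1 u u') (o1 v v')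
    have b7 := ZQ u' v' _ _ (o2 u u') (o2 v v')
    have b8 := ZU (u || u') (v || v')
    have b9 := Ps u v true u' v' true
    have b10 := Qs u v true u' v' true
    have b11 := Ps u v true u' v' false
    have b12 := Qs u v true u' v' false
    have b13 := Ps u v false u' v' true
    have b14 := Qs u v false u' v' true
    have b15 := hPQ u v
    have b16 := hPQ u' v'
    have b17 := hPQ (u && u') (v && v')
    have b18 := hPQ (u || u') (v || v')
    have b19 := Ps (u || u') (v || v') false u v true
    have b20 := Ps (u || u') (v || v') false u' v' true
    have b21 := Qs (u || u') (v || v') false u v true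
    have b22 := Qs (u || u') (v || v') false u' v' true
    have l1 : ∀ s t : Bool, (s || t || s) = (s || t) := by decide
    have l2 : ∀ s t : Bool, (s || t || t) = (s || t) := by decide
    have l3 : ∀ s t : Bool, ((s || t) && s) = s := by decide
    have l4 : ∀ s t : Bool, ((s || t) && t) = t := by decide
    simp only [l1, l3] at b19 b21
    simp only [l2, l4] at b20 b22
    have b23 := Ps u v false u' v' false
    cases w <;> cases z <;> cases w' <;> cases z' <;>
      simp only [Bool.or_true, Bool.or_false, Bool.and_true, Bool.and_false, Bool.true_or,
        Bool.false_or, Bool.true_and, Bool.false_and, if_true, if_false, Bool.false_eq_true]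
        at b1 b2 b9 b10 b11 b12 b13 b14 b19 b20 b21 b22 b23 ⊢ <;>
      linarith

/-- The subset of `{a, b, x}` coded by three Booleans. -/
def codeSet {α : Type*} [DecidableEq α] (a b x : α) (u v w : Bool) : Finset α :=
  (if u then {a} else ∅) ∪ (if v then {b} else ∅) ∪ (if w then {x} else ∅)

lemma mem_codeSet {α : Type*} [DecidableEq α] (a b x : α) (u v w : Bool) (i : α) :
    i ∈ codeSet a b x u v w ↔ (u = true ∧ i = a) ∨ (v = true ∧ i = b) ∨ (w = true ∧ i = x) := by
  cases u <;> cases v <;> cases w <;> simp [codeSet]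

lemma cube_of_poly {α : Type*} [DecidableEq α] (a b c x : α) (hab : a ≠ b) (hxa : x ≠ a)
    (hxb : x ≠ b) (g : Finset α → ℝ) (hg : IsPolymatroid {a, b, c, x} g) :
    Cube3 (fun u v w => g (codeSet a b x u v w)) := by
  obtain ⟨g0, -, gm, gs⟩ := hg
  have hs : ∀ u v w, codeSet a b x u v w ⊆ {a, b, c, x} := by
    intro u v w i hi
    rw [mem_codeSet] at hi
    simp only [mem_insert, mem_singleton]
    tauto
  refine ⟨by simpa [codeSet] using g0, ?_, ?_⟩
  · intro u v w u' v' w' hu hv hw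
    refine gm _ _ ?_ (hs _ _ _)
    intro i hi
    rw [mem_codeSet] at hi ⊢
    rcases hi with ⟨h, e⟩ | ⟨h, e⟩ | ⟨h, e⟩
    · exact Or.inl ⟨hu h, e⟩
    · exact Or.inr (Or.inl ⟨hv h, e⟩)
    · exact Or.inr (Or.inr ⟨hw h, e⟩)
  · intro u v w u' v' w'
    have e1 : codeSet a b x (u || u') (v || v') (w || w') =
        codeSet a b x u v w ∪ codeSet a b x u' v' w' := by
      ext i
      simp only [mem_union, mem_codeSet, Bool.or_eq_true]
      tauto
    have e2 : codeSet a b x (u && u') (v && v') (w && w') =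
        codeSet a b x u v w ∩ codeSet a b x u' v' w' := by
      ext i
      simp only [mem_inter, mem_codeSet, Bool.and_eq_true]
      grind
    simp only [e1, e2]
    exact gs _ _ (hs _ _ _) (hs _ _ _)

lemma absorb {α : Type*} [DecidableEq α] (M : Finset α) (g : Finset α → ℝ)
    (hg : IsPolymatroid M g) (I L K : Finset α) (hK : K ⊆ M) (hL : L ⊆ M) (hIK : I ⊆ K)
    (h : g (I ∪ L) = g I) : g (K ∪ L) = g K := by
  obtain ⟨-, -, gm, gs⟩ := hg
  have h1 := gs K (I ∪ L) hK (union_subset (hIK.trans hK) hL)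
  have h2 : K ∪ (I ∪ L) = K ∪ L := by
    rw [← union_assoc, union_eq_left.2 hIK]
  have h3 := gm I (K ∩ (I ∪ L)) (subset_inter hIK subset_union_left)
    (inter_subset_left.trans hK)
  have h4 := gm K (K ∪ L) subset_union_left (union_subset hK hL)
  rw [h2] at h1
  linarith

lemma code_eq {α : Type*} [DecidableEq α] (a b c x : α) (hac : a ≠ c) (hbc : b ≠ c)
    (hxa : x ≠ a) (hxb : x ≠ b) (hxc : x ≠ c) (hab : a ≠ b)
    (g : Finset α → ℝ) (hg : IsPolymatroid {a, b, c, x} g)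
    (h1 : g {a, b, c} = g {c}) (h2 : g {a, b, c} = g {a, b})
    (A : Finset α) (hA : A ⊆ {a, b, c, x}) :
    g A = g (codeSet a b x (decide (a ∈ A ∨ c ∈ A)) (decide (b ∈ A ∨ c ∈ A))
      (decide (x ∈ A))) := by
  have hs : ∀ i, i ∈ A → i = a ∨ i = b ∨ i = c ∨ i = x := by
    intro i hi; simpa using hA hi
  by_cases hc : c ∈ A
  · have e1 : g (A ∪ {a, b}) = g A := by
      refine absorb _ g hg {c} {a, b} A hA ?_ (by simpa using hc) ?_
      · intro i; simp; tauto
      · rw [← h1]; congr 1; ext i; grind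
    set B := codeSet a b x (decide (a ∈ A ∨ c ∈ A)) (decide (b ∈ A ∨ c ∈ A))
      (decide (x ∈ A)) with hB
    have hBm : ∀ i, i ∈ B ↔ i = a ∨ i = b ∨ (x ∈ A ∧ i = x) := by
      intro i; rw [hB, mem_codeSet]; simp [hc]
    have e2 : g (B ∪ {c}) = g B := by
      refine absorb _ g hg {a, b} {c} B ?_ ?_ ?_ ?_
      · intro i hi; rw [hBm] at hi; simp; tauto
      · intro i; simp; tauto
      · intro i hi; rw [hBm]; simp at hi; tauto
      · rw [← h2]; congr 1; ext i; grind
    have e3 : A ∪ {a, b} = B ∪ {c} := by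
      ext i
      simp only [mem_union, hBm, mem_insert, mem_singleton]
      have := hs i
      grind
    rw [← e1, ← e2, e3]
  · congr 1
    ext i
    rw [mem_codeSet]
    have := hs i
    simp only [hc, or_false, decide_eq_true_eq]
    grind

set_option maxHeartbeats 1000000 in
lemma key {α : Type*} [DecidableEq α] (a b c : α) (hab : a ≠ b) (hac : a ≠ c) (hbc : b ≠ c)
    (f : Finset α → ℝ)
    (h1 : f {a, b, c} = f {c}) (h2 : f {a, b, c} = f {a, b})
    (x y : α) (hx : x ∉ ({a, b, c} : Finset α)) (hy : y ∉ ({a, b, c} : Finset α)) (hxy : x ≠ y)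
    (fx fy : Finset α → ℝ)
    (hfx : IsPolymatroid {a, b, c, x} fx) (hfy : IsPolymatroid {a, b, c, y} fy)
    (ex : ∀ A ⊆ ({a, b, c} : Finset α), fx A = f A)
    (ey : ∀ A ⊆ ({a, b, c} : Finset α), fy A = f A) :
    HaveAmalgam {a, b, c} {x} {y} fx fy := by
  simp only [mem_insert, mem_singleton, not_or] at hx hy
  obtain ⟨hxa, hxb, hxc⟩ := hx
  obtain ⟨hya, hyb, hyc⟩ := hy
  have s1 : ({c} : Finset α) ⊆ {a, b, c} := by intro i; simp; tauto
  have s2 : ({a, b} : Finset α) ⊆ {a, b, c} := by intro i; simp; tauto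
  have s3 : ∀ u v z, codeSet a b z u v false ⊆ {a, b, c} := by
    intro u v z i hi
    rw [mem_codeSet] at hi
    simp at hi ⊢
    tauto
  obtain ⟨H, HP, HQ, Hm, Hs⟩ := core_s15 _ _ (cube_of_poly a b c x hab hxa hxb fx hfx)
    (cube_of_poly a b c y hab hya hyb fy hfy) (by
      intro u v
      show fx _ = fy _
      rw [ex _ (s3 _ _ _), ey _ (s3 _ _ _)]
      simp [codeSet])
  have cx := code_eq a b c x hac hbc hxa hxb hxc hab fx hfx
    (by rw [ex _ (Subset.refl _), ex _ s1, h1]) (by rw [ex _ (Subset.refl _), ex _ s2, h2])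
  have cy := code_eq a b c y hac hbc hya hyb hyc hab fy hfy
    (by rw [ey _ (Subset.refl _), ey _ s1, h1]) (by rw [ey _ (Subset.refl _), ey _ s2, h2])
  have ux : ({a, b, c} ∪ {x} : Finset α) = {a, b, c, x} := by ext i; grind
  have uy : ({a, b, c} ∪ {y} : Finset α) = {a, b, c, y} := by ext i; grind
  let G : Finset α → ℝ := fun A => H (decide (a ∈ A ∨ c ∈ A)) (decide (b ∈ A ∨ c ∈ A))
    (decide (x ∈ A)) (decide (y ∈ A))
  have G0 : G ∅ = 0 := by
    have := HP false false false
    simp [codeSet, hfx.1] at this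
    simpa [G] using this
  have Gm : ∀ A B : Finset α, A ⊆ B → G A ≤ G B := by
    intro A B hAB
    have := @hAB
    refine Hm _ _ _ _ _ _ _ _ ?_ ?_ ?_ ?_ <;> intro h <;>
      simp only [decide_eq_true_eq] at h ⊢
    · exact h.imp (@hAB a) (@hAB c)
    · exact h.imp (@hAB b) (@hAB c)
    · exact hAB h
    · exact hAB h
  refine ⟨G, ⟨G0, ?_, fun A B h _ => Gm A B h, ?_⟩, ?_, ?_⟩
  · intro A _
    rw [← G0]
    exact Gm _ _ (empty_subset _)
  · intro A B _ _
    have k := Hs (decide (a ∈ A ∨ c ∈ A)) (decide (b ∈ A ∨ c ∈ A)) (decide (x ∈ A))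
      (decide (y ∈ A)) (decide (a ∈ B ∨ c ∈ B)) (decide (b ∈ B ∨ c ∈ B)) (decide (x ∈ B))
      (decide (y ∈ B))
    have k1 : G (A ∪ B) = H (decide (a ∈ A ∨ c ∈ A) || decide (a ∈ B ∨ c ∈ B))
        (decide (b ∈ A ∨ c ∈ A) || decide (b ∈ B ∨ c ∈ B))
        (decide (x ∈ A) || decide (x ∈ B)) (decide (y ∈ A) || decide (y ∈ B)) := by
      simp only [G]
      congr 1 <;> rw [Bool.eq_iff_iff] <;> simp <;> grind
    have k2 : G (A ∩ B) ≤ H (decide (a ∈ A ∨ c ∈ A) && decide (a ∈ B ∨ c ∈ B))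
        (decide (b ∈ A ∨ c ∈ A) && decide (b ∈ B ∨ c ∈ B))
        (decide (x ∈ A) && decide (x ∈ B)) (decide (y ∈ A) && decide (y ∈ B)) := by
      refine Hm _ _ _ _ _ _ _ _ ?_ ?_ ?_ ?_ <;> intro h <;>
        simp only [decide_eq_true_eq, Bool.and_eq_true, mem_inter] at h ⊢ <;> grind
    have k3 : G A = H _ _ _ _ := rfl
    have k4 : G B = H _ _ _ _ := rfl
    linarith
  · intro A hA
    rw [ux] at hA
    have hyA : y ∉ A := by
      intro h
      have := hA h
      simp at this
      tauto
    rw [cx A hA]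
    simp only [G, hyA, decide_false]
    exact HP _ _ _
  · intro A hA
    rw [uy] at hA
    have hxA : x ∉ A := by
      intro h
      have := hA h
      simp at this
      tauto
    rw [cy A hA]
    simp only [G, hxA, decide_false]
    exact HQ _ _ _

/-- a polymatroid `f` on `{a,b,c}` with
`f(a|bc) = f(b|ac) = f(c|ab) = 0` and at least one of `f(a,b|c)`, `f(a,c|b)`,
`f(b,c|a)` equal to zero is 1-sticky: any two one-element extensions of `f`
have an amalgam. -/
theorem statement_15 (a b c : α) (hab : a ≠ b) (hac : a ≠ c) (hbc : b ≠ c)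
    (f : Finset α → ℝ) (hf : IsPolymatroid {a, b, c} f)
    (ha0 : pcd f {a} {b, c} = 0) (hb0 : pcd f {b} {a, c} = 0)
    (hc0 : pcd f {c} {a, b} = 0)
    (hone : pmi f {a} {b} {c} = 0 ∨ pmi f {a} {c} {b} = 0 ∨ pmi f {b} {c} {a} = 0) :
    ∀ x y : α, x ∉ ({a, b, c} : Finset α) → y ∉ ({a, b, c} : Finset α) → x ≠ y →
    ∀ fx fy : Finset α → ℝ,
      IsPolymatroid {a, b, c, x} fx → IsPolymatroid {a, b, c, y} fy →
      (∀ A ⊆ ({a, b, c} : Finset α), fx A = f A) →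
      (∀ A ⊆ ({a, b, c} : Finset α), fy A = f A) →
      HaveAmalgam {a, b, c} {x} {y} fx fy := by
  intro x y hx hy hxy fx fy hfx hfy ex ey
  simp only [pcd, pmi] at ha0 hb0 hc0 hone
  have p1 : ({a, b, c} : Finset α) = {a, c, b} := by ext i; grind
  have p2 : ({a, b, c} : Finset α) = {b, c, a} := by ext i; grind
  have p1' : ∀ z, ({a, b, c, z} : Finset α) = {a, c, b, z} := by intro z; ext i; grind
  have p2' : ∀ z, ({a, b, c, z} : Finset α) = {b, c, a, z} := by intro z; ext i; grind
  have q1 : ({a} ∪ {b, c} : Finset α) = {a, b, c} := by ext i; grind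
  have q2 : ({b} ∪ {a, c} : Finset α) = {a, b, c} := by ext i; grind
  have q3 : ({c} ∪ {a, b} : Finset α) = {a, b, c} := by ext i; grind
  have r1 : ({a} ∪ {c} : Finset α) = {a, c} := by ext i; grind
  have r2 : ({b} ∪ {c} : Finset α) = {b, c} := by ext i; grind
  have r3 : ({a} ∪ {b} ∪ {c} : Finset α) = {a, b, c} := by ext i; grind
  have r4 : ({a} ∪ {b} : Finset α) = {a, b} := by ext i; grind
  have r5 : ({c} ∪ {b} : Finset α) = {b, c} := by ext i; grind
  have r6 : ({a, c} ∪ {b} : Finset α) = {a, b, c} := by ext i; grind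
  have r7 : ({b} ∪ {a} : Finset α) = {a, b} := by ext i; grind
  have r8 : ({c} ∪ {a} : Finset α) = {a, c} := by ext i; grind
  have r9 : ({b, c} ∪ {a} : Finset α) = {a, b, c} := by ext i; grind
  rw [q1] at ha0
  rw [q2] at hb0
  rw [q3] at hc0
  rcases hone with h | h | h
  · rw [r3, r1, r2] at h
    exact key a b c hab hac hbc f (by linarith) (by linarith) x y hx hy hxy fx fy hfx hfy ex ey
  · rw [r1, r6, r4, r5] at h
    have t1 : f {a, b, c} = f {b} := by linarith
    have t2 : f {a, b, c} = f {a, c} := by linarith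
    rw [p1'] at hfx hfy
    rw [p1] at hx hy ex ey t1 t2 ⊢
    exact key a c b hac hab hbc.symm f t1 t2 x y hx hy hxy fx fy hfx hfy ex ey
  · rw [r2, r9, r7, r8] at h
    have t1 : f {a, b, c} = f {a} := by linarith
    have t2 : f {a, b, c} = f {b, c} := by linarith
    rw [p2'] at hfx hfy
    rw [p2] at hx hy ex ey t1 t2 ⊢
    exact key b c a hbc hab.symm hac.symm f t1 t2 x y hx hy hxy fx fy hfx hfy ex ey
end
end
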